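/- Let r > 2, 1 < q < 2, and let Ξ ⊂ ℝ⁺ be a finite set. Given real coefficients a_ω for each dyadic interval ω, let D_k(ξ) = Σ_{|ω|=2^k, ω∩Ξ≠∅} a_ω 1_ω(ξ) for k ∈ ℤ. Then ‖(D_k)_{k∈ℤ}‖_{M^{q,*}} ≤ C_{q,r} (1 + log|Ξ|) |Ξ|^{1/q − 1/r} · sup_{ξ∈Ξ} ‖ (Σ_{|ω|=2^k} a_ω 1_ω(ξ))_{k∈ℤ} ‖_{V^r_k}, where the V^r norm is taken in k of the sequence k ↦ Σ_{|ω|=2^k} a_ω 1_ω(ξ). -/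

import Mathlib

open MeasureTheory Set Filter
open scoped ENNReal NNReal Classical BigOperators RealInnerProductSpace

noncomputable section

/-- The binary digit of `x` in position `n+1` to the left of the point
(terminating expansion for dyadic rationals). -/
def digit (n : ℤ) (x : ℝ) : ℤ := ⌊x / 2 ^ n⌋ % 2

/-- Bitwise addition `⊕` on nonnegative reals. -/
def wXor (x y : ℝ) : ℝ := ∑' n : ℤ, (((digit n x + digit n y) % 2 : ℤ) : ℝ) * 2 ^ n

/-- The `n`-th digit of the bitwise product `x ⊗ y`. -/
def wMulDigit (n : ℤ) (x y : ℝ) : ℤ :=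
  ⌊∑' m : ℤ, ((digit (n - m) x * digit m y : ℤ) : ℝ)⌋ % 2

/-- Bitwise multiplication `⊗` on nonnegative reals. -/
def wMul (x y : ℝ) : ℝ := ∑' n : ℤ, ((wMulDigit n x y : ℤ) : ℝ) * 2 ^ n

/-- The Walsh character `e(x) = exp (i π d₋₁(x))`. -/
def walshe (x : ℝ) : ℝ := (-1 : ℝ) ^ (digit (-1) x)

/-- The Walsh–Fourier transform on `ℝ⁺`; it is involutive, so it also serves
as the inverse Walsh–Fourier transform `ˇ`. -/
def walshFT (f : ℝ → ℝ) (ξ : ℝ) : ℝ := ∫ x in Set.Ici (0 : ℝ), walshe (wMul ξ x) * f x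

/-- Lebesgue measure on `ℝ⁺`. -/
def μplus : Measure ℝ := volume.restrict (Set.Ici 0)

/-- `L^p` norm (real exponent `p`) of an `ℝ≥0∞`-valued function. -/
def lpNormE (p : ℝ) (μ : Measure ℝ) (F : ℝ → ℝ≥0∞) : ℝ≥0∞ := (∫⁻ x, F x ^ p ∂μ) ^ (1 / p)

/-- The `r`-variation norm of `m` on the domain `D`. -/
def vnorm {ι E : Type*} [LinearOrder ι] [NormedAddCommGroup E] (r : ℝ) (D : Set ι)
    (m : ι → E) : ℝ≥0∞ :=
  (⨆ ξ ∈ D, (‖m ξ‖₊ : ℝ≥0∞)) +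
    ⨆ (N : ℕ) (u : Fin (N + 1) → ι) (_ : StrictMono u) (_ : ∀ i, u i ∈ D),
      (∑ i : Fin N, (‖m (u i.succ) - m (u i.castSucc)‖₊ : ℝ≥0∞) ^ r) ^ (1 / r)

/-- The Walsh `L^q`-multiplier norm. -/
def Mq (q : ℝ) (m : ℝ → ℝ) : ℝ≥0∞ :=
  ⨆ (g : ℝ → ℝ) (_ : eLpNorm g (ENNReal.ofReal q) μplus = 1),
    eLpNorm (walshFT fun ξ => m ξ * walshFT g ξ) (ENNReal.ofReal q) μplus

/-- The Walsh `L^q`-maximal-multiplier norm of a sequence of multipliers. -/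
def Mqstar (q : ℝ) (m : ℤ → ℝ → ℝ) : ℝ≥0∞ :=
  ⨆ (g : ℝ → ℝ) (_ : eLpNorm g (ENNReal.ofReal q) μplus = 1),
    lpNormE q μplus fun x => ⨆ k : ℤ, (‖walshFT (fun ξ => m k ξ * walshFT g ξ) x‖₊ : ℝ≥0∞)

/-- The `s`-variation `L^q`-multiplier norm of a sequence of multipliers. -/
def Mqs (q s : ℝ) (m : ℤ → ℝ → ℝ) : ℝ≥0∞ :=
  ⨆ (g : ℝ → ℝ) (_ : eLpNorm g (ENNReal.ofReal q) μplus = 1),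
    lpNormE q μplus fun x =>
      vnorm s (Set.univ : Set ℤ) fun k => walshFT (fun ξ => m k ξ * walshFT g ξ) x

/-- Dyadic intervals `[n 2^k, (n+1) 2^k)`. -/
def IsDyadic (I : Set ℝ) : Prop :=
  ∃ n k : ℤ, I = Set.Ico ((n : ℝ) * 2 ^ k) (((n : ℝ) + 1) * 2 ^ k)

/-- Dyadic intervals of length `2^k`. -/
def IsDyadicLen (k : ℤ) (ω : Set ℝ) : Prop :=
  ∃ n : ℤ, ω = Set.Ico ((n : ℝ) * 2 ^ k) (((n : ℝ) + 1) * 2 ^ k)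

/-- The lower half of an interval. -/
def lowerHalf (ω : Set ℝ) : Set ℝ := ω ∩ Set.Iio ((sInf ω + sSup ω) / 2)

/-- The upper half of an interval. -/
def upperHalf (ω : Set ℝ) : Set ℝ := ω ∩ Set.Ici ((sInf ω + sSup ω) / 2)

/-- A bitile `I × ω ⊆ ℝ⁺ × ℝ⁺` : a rectangle of dyadic intervals of area `2`. -/
structure Bitile where
  I : Set ℝ
  ω : Set ℝ
  hI : IsDyadic I
  hω : IsDyadic ω
  hIsub : I ⊆ Set.Ici 0
  hωsub : ω ⊆ Set.Ici 0
  harea : volume I * volume ω = 2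

/-- The `L²`-normalized Walsh wave packet of the tile `I × ω`. -/
def wavePacket (I ω : Set ℝ) (x : ℝ) : ℝ :=
  Real.sqrt (volume I).toReal * walshFT (Set.indicator ω fun _ => (1 : ℝ)) (wXor x (sInf I))

/-- `⟨f, φ_{P_l}⟩`, the pairing of `f` with the wave packet of the lower tile of `P`. -/
def walshCoef (P : Bitile) (f : ℝ → ℝ) : ℝ :=
  ∫ y in Set.Ici (0 : ℝ), f y * wavePacket P.I (lowerHalf P.ω) y

/-- The partial order on bitiles. -/
def Bitile.le (P Q : Bitile) : Prop := P.I ⊆ Q.I ∧ Q.ω ⊆ P.ω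

/-- Convexity of a set of bitiles. -/
def ConvexBitiles (S : Set Bitile) : Prop :=
  ∀ P₁ P₂ P₃ : Bitile, P₁ ∈ S → P₃ ∈ S → Bitile.le P₁ P₂ → Bitile.le P₂ P₃ → P₂ ∈ S

/-- The truncated partial Walsh-sum operator attached to a collection `Ps` of bitiles. -/
def Sk (Ps : Set Bitile) (f : ℝ → ℝ) (k : ℤ) (ξ x : ℝ) : ℝ :=
  ∑ᶠ (P : Bitile) (_ : P ∈ Ps ∧ volume P.I < 2 ^ k),
    walshCoef P f * wavePacket P.I (lowerHalf P.ω) x *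
      Set.indicator (upperHalf P.ω) (fun _ => (1 : ℝ)) ξ

/-- The partial Walsh-sum operator `S[f](ξ,x) = (f̂ 1_{[0,ξ)})ˇ(x)`. -/
def Spartial (f : ℝ → ℝ) (ξ x : ℝ) : ℝ :=
  walshFT (fun η => Set.indicator (Set.Ico 0 ξ) (fun _ => (1 : ℝ)) η * walshFT f η) x

/-- A tree of bitiles with top data `(ξtop, Itop)`. -/
structure WTree where
  carrier : Set Bitile
  ξtop : ℝ
  Itop : Set ℝ

/-- The defining conditions of a tree. -/
def IsTree (T : WTree) : Prop :=
  IsDyadic T.Itop ∧ 0 ≤ T.ξtop ∧ ∀ P ∈ T.carrier, P.I ⊆ T.Itop ∧ T.ξtop ∈ P.ω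

/-- `u`-overlapping trees. -/
def UOverlapping (T : WTree) : Prop := ∀ P ∈ T.carrier, T.ξtop ∈ upperHalf P.ω

/-- `l`-overlapping trees. -/
def LOverlapping (T : WTree) : Prop := ∀ P ∈ T.carrier, T.ξtop ∈ lowerHalf P.ω

/-- `T` is td-maximal among the trees in `Cc` : maximal with respect to inclusion among
trees in `Cc` with the same top data. -/
def TdMaximalAmong (T : WTree) (Cc : Set WTree) : Prop :=
  T ∈ Cc ∧ ∀ T' ∈ Cc, T'.ξtop = T.ξtop → T'.Itop = T.Itop →
    T.carrier ⊆ T'.carrier → T'.carrier ⊆ T.carrier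

/-- Order on the lower tiles of two bitiles. -/
def lowerLE (P Q : Bitile) : Prop := P.I ⊆ Q.I ∧ lowerHalf Q.ω ⊆ lowerHalf P.ω

/-- Strict order on the lower tiles of two bitiles. -/
def lowerLT (P Q : Bitile) : Prop := lowerLE P Q ∧ ¬ lowerLE Q P

/-- `l`-convexity of a set of bitiles. -/
def LConvex (S : Set Bitile) : Prop :=
  ∀ P P' P'' : Bitile, P ∈ S → P'' ∈ S → lowerLT P P' → lowerLT P' P'' → P' ∈ S

/-- A properly-sorted collection of `l`-overlapping trees. -/
def ProperlySorted (Ts : Set WTree) : Prop :=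
  (∀ T ∈ Ts, IsTree T ∧ LOverlapping T ∧ LConvex T.carrier) ∧
  (∀ T ∈ Ts, ∀ T' ∈ Ts, T ≠ T' → T.carrier ∩ T'.carrier = ∅) ∧
  (∀ T ∈ Ts, ∀ P ∈ T.carrier, ∀ T' ∈ Ts, (T'.Itop ∩ P.I).Nonempty → T'.ξtop ∉ upperHalf P.ω)

/-- The multiplier `𝒟_k = Σ_{|ω| = 2^k, ω ∩ Ξ ≠ ∅} a_ω 1_ω`. -/
def Dk (a : Set ℝ → ℝ) (Ξ : Set ℝ) (k : ℤ) (ξ : ℝ) : ℝ :=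
  ∑ᶠ (ω : Set ℝ) (_ : IsDyadicLen k ω ∧ (ω ∩ Ξ).Nonempty),
    a ω * Set.indicator ω (fun _ => (1 : ℝ)) ξ

/-- The sequence `k ↦ Σ_{|ω| = 2^k} a_ω 1_ω(ξ)`. -/
def dyadicSum (a : Set ℝ → ℝ) (ξ : ℝ) (k : ℤ) : ℝ :=
  ∑ᶠ (ω : Set ℝ) (_ : IsDyadicLen k ω), a ω * Set.indicator ω (fun _ => (1 : ℝ)) ξ

/-- A tile `I × ω ⊆ ℝ⁺ × ℝ⁺` : a rectangle of dyadic intervals of area `1`. -/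
structure WTile where
  I : Set ℝ
  ω : Set ℝ
  hI : IsDyadic I
  hω : IsDyadic ω
  hIsub : I ⊆ Set.Ici 0
  hωsub : ω ⊆ Set.Ici 0
  harea : volume I * volume ω = 1

/-- The subset of the phase plane occupied by a tile. -/
def WTile.carrier (p : WTile) : Set (ℝ × ℝ) := p.I ×ˢ p.ω

/-- The phase-plane projection `Π_S` associated to a region `S` which can be written as a
finite disjoint union of tiles (it is independent of the chosen tiling). -/
def phaseProj (S : Set (ℝ × ℝ)) (f : ℝ → ℝ) : ℝ → ℝ :=
  if h : ∃ ps : Set WTile, ps.Finite ∧ ps.PairwiseDisjoint WTile.carrier ∧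
      (⋃ p ∈ ps, p.carrier) = S then
    fun x => ∑ᶠ p ∈ h.choose,
      (∫ y in Set.Ici (0 : ℝ), f y * wavePacket p.I p.ω y) * wavePacket p.I p.ω x
  else 0

/-- The region of the phase plane occupied by a tree. -/
def treeRegion (T : WTree) : Set (ℝ × ℝ) := ⋃ P ∈ T.carrier, P.I ×ˢ P.ω

/-- `size(Ps, f) = sup_{T ⊆ Ps convex tree} |I_T|^{-1/2} ‖Π_T f‖_{L²}`. -/
def size (Ps : Set Bitile) (f : ℝ → ℝ) : ℝ≥0∞ :=
  ⨆ (T : WTree) (_ : IsTree T ∧ ConvexBitiles T.carrier ∧ T.carrier ⊆ Ps),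
    (volume T.Itop ^ (1 / 2 : ℝ))⁻¹ * eLpNorm (phaseProj (treeRegion T) f) 2 μplus

/-!
Frequencies in `Ξ` which share a dyadic interval of length `2 ^ t` cannot be told apart by a
multiplier that is constant on such intervals, and on a dyadic interval of length `2 ^ (-t)` in
space their Walsh characters agree up to sign. Discretizing both space and frequency leaves a
finite model in which time `t` carries a partition of space into cells and a partition of `Ξ` into
classes, the former getting finer and the latter coarser.

On `L²`, fix a stage at which the classes of `Ξ` are frozen. On each cell the multiplier is then
the inner product of a vector of signs with a path in `ℓ²` of the classes, whose components are
coefficients `a` times martingales; Lépingle's inequality bounds its `r`-variation, and a chaining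
argument along greedy nets of the path bounds the maximal function with constant
`|Ξ| ^ (1/2 - 1/r)`. As the classes merge at most `|Ξ|` times, a Rademacher–Menshov argument over
the merging times costs only a factor `1 + log |Ξ|`.

For the weak type `(1, 1)`, stop at the first time the averages of `|f|` exceed a threshold and
replace `f` on each stopping cell by its projection onto the span of the characters in `Ξ`. This
does not change the multiplier outside the stopping cells, and since the span has dimension at
most `|Ξ|`, the projection is controlled in `L²` with a loss of `|Ξ|`. Marcinkiewicz interpolation
then gives `|Ξ| ^ (1/q - 1/r)`, and Fatou's lemma removes the discretization.
-/

/-! ### Variation of sequences -/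

/-- The `r`-variation of `a 0, …, a n` is at most `V`. Times are sampled along monotone rather than
strictly monotone sequences, which changes nothing since repeated times contribute `0`. -/
def VariationLE {E : Type*} [PseudoMetricSpace E] (r : ℝ) (n : ℕ) (V : ℝ) (a : ℕ → E) : Prop :=
  ∀ u : ℕ → ℕ, Monotone u → (∀ i, u i ≤ n) → ∀ m,
    ∑ i ∈ Finset.range m, dist (a (u (i + 1))) (a (u i)) ^ r ≤ V ^ r

/-- The running maximum `max_{s ≤ t} |a s|`. -/
def runMax (a : ℕ → ℝ) (t : ℕ) : ℝ := partialSups (fun s => |a s|) t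

lemma abs_le_runMax (a : ℕ → ℝ) (t : ℕ) : |a t| ≤ runMax a t :=
  le_partialSups (fun s => |a s|) t

lemma monotone_runMax (a : ℕ → ℝ) : Monotone (runMax a) :=
  (partialSups fun s => |a s|).monotone

lemma runMax_nonneg (a : ℕ → ℝ) (t : ℕ) : 0 ≤ runMax a t :=
  (abs_nonneg _).trans (abs_le_runMax a t)

lemma runMax_zero (a : ℕ → ℝ) : runMax a 0 = |a 0| := partialSups_zero _

lemma runMax_succ (a : ℕ → ℝ) (t : ℕ) : runMax a (t + 1) = max (runMax a t) |a (t + 1)| :=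
  partialSups_succ _ t

lemma runMax_le_runMax {a b : ℕ → ℝ} (h : ∀ s, |a s| ≤ |b s|) (t : ℕ) :
    runMax a t ≤ runMax b t :=
  partialSups_mono (fun s => h s) t

lemma runMax_congr {a b : ℕ → ℝ} {t : ℕ} (h : ∀ s ≤ t, a s = b s) : runMax a t = runMax b t := by
  induction t with
  | zero => rw [runMax_zero, runMax_zero, h 0 le_rfl]
  | succ t ih => rw [runMax_succ, runMax_succ, ih fun s hs => h s (hs.trans t.le_succ), h _ le_rfl]

/-- The state of the greedy selection of large jumps of a sequence: the value at the last selected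
time, the running maximum at that time, and the sum of the squares of the selected jumps. -/
structure AnchorState where
  value : ℝ
  scale : ℝ
  energy : ℝ

/-- The selection of large jumps of `a`: a new anchor is set as soon as the sequence leaves the
neighbourhood of the current anchor of relative size `δ`. -/
def anchor (δ : ℝ) (a : ℕ → ℝ) : ℕ → AnchorState
  | 0 => ⟨a 0, runMax a 0, 0⟩
  | t + 1 =>
      if δ * runMax a (t + 1) < |a (t + 1) - (anchor δ a t).value| then
        ⟨a (t + 1), runMax a (t + 1),
          (anchor δ a t).energy + (a (t + 1) - (anchor δ a t).value) ^ 2⟩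
      else anchor δ a t

section Anchor

variable {δ : ℝ} (a : ℕ → ℝ)

lemma anchor_succ_of_lt {t : ℕ} (h : δ * runMax a (t + 1) < |a (t + 1) - (anchor δ a t).value|) :
    anchor δ a (t + 1) = ⟨a (t + 1), runMax a (t + 1),
      (anchor δ a t).energy + (a (t + 1) - (anchor δ a t).value) ^ 2⟩ :=
  if_pos h

lemma anchor_succ_of_le {t : ℕ} (h : |a (t + 1) - (anchor δ a t).value| ≤ δ * runMax a (t + 1)) :
    anchor δ a (t + 1) = anchor δ a t :=
  if_neg h.not_gt

variable {a} in
lemma anchor_congr {b : ℕ → ℝ} {t : ℕ} (h : ∀ s ≤ t, a s = b s) : anchor δ a t = anchor δ b t := by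
  induction t with
  | zero => simp only [anchor, h 0 le_rfl, runMax_zero]
  | succ t ih =>
    simp only [anchor, h _ le_rfl, runMax_congr h, ih fun s hs => h s (hs.trans t.le_succ)]

lemma abs_sub_anchor_value_le (hδ : 0 ≤ δ) (t : ℕ) :
    |a t - (anchor δ a t).value| ≤ δ * runMax a t := by
  have hnn (s) : |a s - a s| ≤ δ * runMax a s := by
    rw [sub_self, abs_zero]
    exact mul_nonneg hδ (runMax_nonneg a s)
  cases t with
  | zero => exact hnn 0
  | succ t =>
    rcases lt_or_ge (δ * runMax a (t + 1)) |a (t + 1) - (anchor δ a t).value| with h | h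
    · rw [anchor_succ_of_lt a h]
      exact hnn _
    · rwa [anchor_succ_of_le a h]

lemma abs_anchor_value_le_scale (t : ℕ) : |(anchor δ a t).value| ≤ (anchor δ a t).scale := by
  induction t with
  | zero => exact abs_le_runMax a 0
  | succ t ih =>
    rcases lt_or_ge (δ * runMax a (t + 1)) |a (t + 1) - (anchor δ a t).value| with h | h
    · rw [anchor_succ_of_lt a h]
      exact abs_le_runMax a _
    · rwa [anchor_succ_of_le a h]

lemma anchor_scale_le_runMax (t : ℕ) : (anchor δ a t).scale ≤ runMax a t := by
  induction t with
  | zero => exact le_rfl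
  | succ t ih =>
    rcases lt_or_ge (δ * runMax a (t + 1)) |a (t + 1) - (anchor δ a t).value| with h | h
    · rw [anchor_succ_of_lt a h]
    · rw [anchor_succ_of_le a h]
      exact ih.trans (monotone_runMax a t.le_succ)

lemma runMax_le_two_mul_anchor_scale (hδ : δ ≤ 1 / 2) (t : ℕ) :
    runMax a t ≤ 2 * (anchor δ a t).scale := by
  induction t with
  | zero =>
    have := runMax_nonneg a 0
    simp only [anchor]
    linarith
  | succ t ih =>
    have hR := runMax_nonneg a (t + 1)
    rcases lt_or_ge (δ * runMax a (t + 1)) |a (t + 1) - (anchor δ a t).value| with h | h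
    · rw [anchor_succ_of_lt a h]
      dsimp only
      linarith
    · rw [anchor_succ_of_le a h]
      have hvalue := abs_anchor_value_le_scale (δ := δ) a t
      have htri := abs_sub_abs_le_abs_sub (a (t + 1)) (anchor δ a t).value
      have hhalf : δ * runMax a (t + 1) ≤ 1 / 2 * runMax a (t + 1) := by gcongr
      rcases max_choice (runMax a t) |a (t + 1)| with hmax | hmax <;>
        rw [← runMax_succ] at hmax <;> linarith

lemma monotone_anchor_energy : Monotone fun t => (anchor δ a t).energy := by
  refine monotone_nat_of_le_succ fun t => ?_
  rcases lt_or_ge (δ * runMax a (t + 1)) |a (t + 1) - (anchor δ a t).value| with h | h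
  · rw [anchor_succ_of_lt a h]
    exact le_add_of_nonneg_right (sq_nonneg _)
  · rw [anchor_succ_of_le a h]

lemma anchor_energy_nonneg (t : ℕ) : 0 ≤ (anchor δ a t).energy :=
  monotone_anchor_energy a (Nat.zero_le t)

lemma anchor_energy_le (t : ℕ) : (anchor δ a t).energy ≤ t * (2 * runMax a t) ^ 2 := by
  induction t with
  | zero => simp [anchor]
  | succ t ih =>
    have hmono : (t : ℝ) * (2 * runMax a t) ^ 2 ≤ t * (2 * runMax a (t + 1)) ^ 2 := by
      have := runMax_nonneg a t
      have := monotone_runMax a t.le_succ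
      gcongr
    have hcast : ((t + 1 : ℕ) : ℝ) * (2 * runMax a (t + 1)) ^ 2
        = t * (2 * runMax a (t + 1)) ^ 2 + (2 * runMax a (t + 1)) ^ 2 := by
      push_cast
      ring
    rcases lt_or_ge (δ * runMax a (t + 1)) |a (t + 1) - (anchor δ a t).value| with h | h
    · have hjump : |a (t + 1) - (anchor δ a t).value| ≤ 2 * runMax a (t + 1) := by
        have hvalue := (abs_anchor_value_le_scale (δ := δ) a t).trans (anchor_scale_le_runMax a t)
        have := abs_le_runMax a (t + 1)
        have := monotone_runMax a t.le_succ
        have := abs_sub (a (t + 1)) (anchor δ a t).value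
        linarith
      have := (sq_abs (a (t + 1) - (anchor δ a t).value)).symm.le.trans
        (pow_le_pow_left₀ (abs_nonneg _) hjump 2)
      rw [anchor_succ_of_lt a h, hcast]
      dsimp only
      linarith
    · rw [anchor_succ_of_le a h, hcast]
      linarith [sq_nonneg (2 * runMax a (t + 1))]

lemma anchor_eq_or_scale_sq_le (hδ : 0 ≤ δ) {s t : ℕ} (hst : s ≤ t) :
    anchor δ a t = anchor δ a s ∨
      (δ * (anchor δ a t).scale) ^ 2 ≤ (anchor δ a t).energy - (anchor δ a s).energy := by
  induction t, hst using Nat.le_induction with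
  | base => exact Or.inl rfl
  | succ t hst ih =>
    rcases lt_or_ge (δ * runMax a (t + 1)) |a (t + 1) - (anchor δ a t).value| with h | h
    · right
      have hmono : (anchor δ a s).energy ≤ (anchor δ a t).energy := monotone_anchor_energy a hst
      have hsq := pow_le_pow_left₀ (mul_nonneg hδ (runMax_nonneg a (t + 1))) h.le 2
      rw [sq_abs] at hsq
      rw [anchor_succ_of_lt a h]
      dsimp only
      linarith
    · rwa [anchor_succ_of_le a h]

lemma sq_le_anchor_energy_sub (hδ : 0 ≤ δ) (hδ' : δ ≤ 1 / 2) {s t : ℕ} (hst : s ≤ t)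
    (h : 2 * δ * runMax a t < |a t - a s|) :
    (δ * runMax a t) ^ 2 ≤ 4 * ((anchor δ a t).energy - (anchor δ a s).energy) := by
  rcases anchor_eq_or_scale_sq_le a hδ hst with heq | hle
  · have ht := abs_sub_anchor_value_le a hδ t
    have hs := abs_sub_anchor_value_le a hδ s
    have hmono := mul_le_mul_of_nonneg_left (monotone_runMax a hst) hδ
    have htri := abs_sub_le (a t) (anchor δ a s).value (a s)
    rw [heq] at ht
    rw [abs_sub_comm (anchor δ a s).value] at htri
    linarith
  · have hscale := mul_le_mul_of_nonneg_left (runMax_le_two_mul_anchor_scale a hδ' t) hδ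
    have hsq := pow_le_pow_left₀ (mul_nonneg hδ (runMax_nonneg a t)) hscale 2
    linarith

end Anchor

lemma exists_pow_half_mul_lt_le {D R : ℝ} (hD : 0 < D) (hDR : D ≤ 2 * R) :
    ∃ k : ℕ, 2 * (1 / 2 : ℝ) ^ (k + 1) * R < D ∧ D ≤ 4 * (1 / 2 : ℝ) ^ (k + 1) * R := by
  have hR : 0 < R := by linarith
  obtain ⟨k, hk, hk'⟩ := exists_nat_pow_near_of_lt_one (x := D / (2 * R)) (y := 1 / 2)
    (by positivity) ((div_le_one (by positivity)).mpr hDR) (by norm_num) (by norm_num)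
  rw [lt_div_iff₀ (by positivity)] at hk
  rw [div_le_iff₀ (by positivity)] at hk'
  refine ⟨k, by linarith, ?_⟩
  rw [pow_succ]
  linarith

/-- The energies of the jumps of all relative sizes `2^{-k-1}`, weighted so as to control the
`r`-variation. -/
def variationEnergy (r : ℝ) (a : ℕ → ℝ) (t : ℕ) : ℝ :=
  ∑' k : ℕ, ((1 / 2 : ℝ) ^ (r - 2)) ^ (k + 1) * (anchor ((1 / 2) ^ (k + 1)) a t).energy

lemma half_rpow_lt_one {s : ℝ} (hs : 0 < s) : (1 / 2 : ℝ) ^ s < 1 :=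
  Real.rpow_lt_one (by norm_num) (by norm_num) hs

lemma summable_half_rpow_pow_succ {s : ℝ} (hs : 0 < s) :
    Summable fun k : ℕ => ((1 / 2 : ℝ) ^ s) ^ (k + 1) :=
  (summable_nat_add_iff 1).mpr (summable_geometric_of_lt_one (by positivity) (half_rpow_lt_one hs))

section Lepingle

variable {r : ℝ}

lemma summable_variationEnergy (hr : 2 < r) (a : ℕ → ℝ) (t : ℕ) :
    Summable fun k : ℕ =>
      ((1 / 2 : ℝ) ^ (r - 2)) ^ (k + 1) * (anchor ((1 / 2) ^ (k + 1)) a t).energy :=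
  .of_nonneg_of_le (fun k => mul_nonneg (by positivity) (anchor_energy_nonneg a t))
    (fun k => mul_le_mul_of_nonneg_left (anchor_energy_le a t) (by positivity))
    ((summable_half_rpow_pow_succ (sub_pos.mpr hr)).mul_right (t * (2 * runMax a t) ^ 2))

lemma monotone_variationEnergy (hr : 2 < r) (a : ℕ → ℝ) : Monotone (variationEnergy r a) :=
  fun s t hst => (summable_variationEnergy hr a s).tsum_le_tsum
    (fun _ => mul_le_mul_of_nonneg_left (monotone_anchor_energy a hst) (by positivity))
    (summable_variationEnergy hr a t)

lemma variationEnergy_nonneg (a : ℕ → ℝ) (t : ℕ) : 0 ≤ variationEnergy r a t :=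
  tsum_nonneg fun _ => mul_nonneg (by positivity) (anchor_energy_nonneg a t)

lemma mul_anchor_energy_sub_le_variationEnergy_sub (hr : 2 < r) (a : ℕ → ℝ) {s t : ℕ}
    (hst : s ≤ t) (k : ℕ) :
    ((1 / 2 : ℝ) ^ (r - 2)) ^ (k + 1) *
        ((anchor ((1 / 2) ^ (k + 1)) a t).energy - (anchor ((1 / 2) ^ (k + 1)) a s).energy) ≤
      variationEnergy r a t - variationEnergy r a s := by
  have hs := summable_variationEnergy hr a s
  have ht := summable_variationEnergy hr a t
  rw [variationEnergy, variationEnergy, ← ht.tsum_sub hs, mul_sub]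
  refine (ht.sub hs).le_tsum k fun j _ => ?_
  rw [← mul_sub]
  exact mul_nonneg (by positivity) (sub_nonneg.mpr (monotone_anchor_energy a hst))

lemma abs_sub_rpow_le (hr : 2 < r) (a : ℕ → ℝ) {s t : ℕ} (hst : s ≤ t) :
    |a t - a s| ^ r ≤
      4 ^ (r + 1) * runMax a t ^ (r - 2) * (variationEnergy r a t - variationEnergy r a s) := by
  have hR := runMax_nonneg a t
  have hmono := sub_nonneg.mpr (monotone_variationEnergy hr a hst)
  rcases (abs_nonneg (a t - a s)).eq_or_lt with h0 | hpos
  · rw [← h0, Real.zero_rpow (by linarith)]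
    positivity
  have hle : |a t - a s| ≤ 2 * runMax a t := by
    linarith [abs_sub (a t) (a s), abs_le_runMax a t, abs_le_runMax a s, monotone_runMax a hst]
  have hRpos : 0 < runMax a t := by linarith
  obtain ⟨k, hlt, hle⟩ := exists_pow_half_mul_lt_le hpos hle
  set δ : ℝ := (1 / 2) ^ (k + 1) with hδ
  have hδpos : 0 < δ := by positivity
  have hδle : δ ≤ 1 / 2 := by
    rw [hδ, pow_succ]
    exact mul_le_of_le_one_left (by norm_num) (pow_le_one₀ (by norm_num) (by norm_num))
  have hsplit {x : ℝ} (hx : 0 < x) : x ^ r = x ^ (r - 2) * x ^ 2 := by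
    rw [← Real.rpow_two, ← Real.rpow_add hx, sub_add_cancel]
  calc |a t - a s| ^ r
      ≤ (4 * δ * runMax a t) ^ r := Real.rpow_le_rpow (abs_nonneg _) hle (by linarith)
    _ = 4 ^ r * runMax a t ^ (r - 2) * (δ ^ (r - 2) * (δ * runMax a t) ^ 2) := by
        rw [mul_assoc, Real.mul_rpow (by norm_num) (by positivity),
          hsplit (x := δ * runMax a t) (by positivity), Real.mul_rpow hδpos.le hR]
        ring
    _ ≤ 4 ^ r * runMax a t ^ (r - 2) *
          (δ ^ (r - 2) * (4 * ((anchor δ a t).energy - (anchor δ a s).energy))) := by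
        gcongr
        exact sq_le_anchor_energy_sub a hδpos.le hδle hst hlt
    _ = 4 ^ (r + 1) * runMax a t ^ (r - 2) * (((1 / 2 : ℝ) ^ (r - 2)) ^ (k + 1) *
          ((anchor δ a t).energy - (anchor δ a s).energy)) := by
        rw [Real.rpow_add_one (by norm_num), Real.rpow_pow_comm (by norm_num), ← hδ]
        ring
    _ ≤ _ := by
        gcongr
        exact mul_anchor_energy_sub_le_variationEnergy_sub hr a hst k

/-- A pathwise bound for the size and the `r`-variation of `a 0, …, a n`. -/
def variationControl (r : ℝ) (a : ℕ → ℝ) (n : ℕ) : ℝ :=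
  16 * √(runMax a n ^ 2 + variationEnergy r a n)

lemma variationControl_nonneg (a : ℕ → ℝ) (n : ℕ) : 0 ≤ variationControl r a n := by
  unfold variationControl
  positivity

lemma abs_le_variationControl (a : ℕ → ℝ) {t n : ℕ} (htn : t ≤ n) :
    |a t| ≤ variationControl r a n := by
  have hE := variationEnergy_nonneg (r := r) a n
  have hmax : runMax a n ≤ √(runMax a n ^ 2 + variationEnergy r a n) :=
    Real.le_sqrt_of_sq_le (by linarith)
  have := (abs_le_runMax a t).trans (monotone_runMax a htn)
  have := runMax_nonneg a n
  unfold variationControl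
  linarith

theorem variationLE_variationControl (hr : 2 < r) (a : ℕ → ℝ) (n : ℕ) :
    VariationLE r n (variationControl r a n) a := by
  intro u hu hun m
  have hR := runMax_nonneg a n
  have hE := variationEnergy_nonneg (r := r) a
  set W : ℝ := √(runMax a n ^ 2 + variationEnergy r a n) with hW
  have hRW : runMax a n ≤ W := Real.le_sqrt_of_sq_le (by linarith [hE n])
  have hEW : variationEnergy r a n ≤ W ^ 2 := by
    rw [hW, Real.sq_sqrt (by linarith [hE n, sq_nonneg (runMax a n)])]
    linarith [sq_nonneg (runMax a n)]
  calc ∑ i ∈ Finset.range m, dist (a (u (i + 1))) (a (u i)) ^ r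
      ≤ ∑ i ∈ Finset.range m, 4 ^ (r + 1) * runMax a n ^ (r - 2) *
          (variationEnergy r a (u (i + 1)) - variationEnergy r a (u i)) := by
        refine Finset.sum_le_sum fun i _ => (abs_sub_rpow_le hr a (hu i.le_succ)).trans ?_
        have := sub_nonneg.mpr (monotone_variationEnergy hr a (hu i.le_succ))
        have := Real.rpow_le_rpow (runMax_nonneg a _) (monotone_runMax a (hun (i + 1)))
          (sub_nonneg.mpr hr.le)
        gcongr
    _ = 4 ^ (r + 1) * runMax a n ^ (r - 2) *
          (variationEnergy r a (u m) - variationEnergy r a (u 0)) := by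
        rw [← Finset.mul_sum, Finset.sum_range_sub fun i => variationEnergy r a (u i)]
    _ ≤ 4 ^ (r + r) * W ^ (r - 2) * W ^ 2 := by
        have := monotone_variationEnergy hr a (hun m)
        have := Real.rpow_le_rpow hR hRW (sub_nonneg.mpr hr.le)
        have := Real.rpow_le_rpow_of_exponent_le (x := 4) (by norm_num)
          (show r + 1 ≤ r + r by linarith)
        gcongr
        · exact sub_nonneg.mpr (monotone_variationEnergy hr a (hu (Nat.zero_le m)))
        · linarith [hE (u 0)]
    _ = (16 * W) ^ r := by
        rw [mul_assoc, ← Real.rpow_two, ← Real.rpow_add' (Real.sqrt_nonneg _) (by linarith),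
          sub_add_cancel, ← two_mul, Real.rpow_mul (by norm_num),
          Real.mul_rpow (by norm_num) (Real.sqrt_nonneg _)]
        norm_num

end Lepingle

/-! ### Finite filtrations and Lépingle's inequality -/

/-- A filtration of a finite set by finer and finer partitions, each given by the equivalence
relation of lying in the same cell. -/
structure FiniteFiltration (X : Type*) where
  rel : ℕ → Setoid X
  antitone_rel : Antitone rel

namespace FiniteFiltration

variable {X : Type*} (F : FiniteFiltration X)

/-- Measurability with respect to the partition at time `t`: being constant on its cells. -/
def MeasurableAt {β : Type*} (t : ℕ) (h : X → β) : Prop := ∀ ⦃x y⦄, F.rel t x y → h x = h y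

variable {F} in
lemma MeasurableAt.mono {β : Type*} {s t : ℕ} (hst : s ≤ t) {h : X → β} (hh : F.MeasurableAt s h) :
    F.MeasurableAt t h :=
  fun _ _ hxy => hh (F.antitone_rel hst hxy)

variable [Fintype X]

/-- The cell of the partition at time `t` containing `x`. -/
def atom (t : ℕ) (x : X) : Finset X := {y | F.rel t y x}

variable {F} in
lemma mem_atom {t : ℕ} {x y : X} : y ∈ F.atom t x ↔ F.rel t y x := by simp [atom]

lemma self_mem_atom (t : ℕ) (x : X) : x ∈ F.atom t x := mem_atom.mpr ((F.rel t).refl x)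

variable {F} in
lemma atom_congr {t : ℕ} {x y : X} (h : F.rel t x y) : F.atom t x = F.atom t y := by
  ext z
  rw [mem_atom, mem_atom]
  exact ⟨fun hz => (F.rel t).trans hz h, fun hz => (F.rel t).trans hz ((F.rel t).symm h)⟩

lemma atom_nonempty (t : ℕ) (x : X) : (F.atom t x).Nonempty := ⟨x, F.self_mem_atom t x⟩

open scoped BigOperators in
/-- The conditional expectation given the partition at time `t`. -/
def avg (t : ℕ) : (X → ℝ) →ₗ[ℝ] X → ℝ where
  toFun f x := 𝔼 y ∈ F.atom t x, f y
  map_add' f g := by ext x; exact Finset.expect_add_distrib _ f g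
  map_smul' c f := by ext x; exact (Finset.smul_expect c _ f).symm

lemma avg_apply (t : ℕ) (f : X → ℝ) (x : X) : F.avg t f x = 𝔼 y ∈ F.atom t x, f y := rfl

lemma card_atom_mul_avg (t : ℕ) (f : X → ℝ) (x : X) :
    (F.atom t x).card * F.avg t f x = ∑ y ∈ F.atom t x, f y :=
  Finset.card_mul_expect _ f

lemma measurableAt_avg (t : ℕ) (f : X → ℝ) : F.MeasurableAt t (F.avg t f) := fun _ _ hxy => by
  rw [avg_apply, avg_apply, atom_congr hxy]

variable {F} in
lemma avg_mul {t : ℕ} {h : X → ℝ} (hh : F.MeasurableAt t h) (f : X → ℝ) :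
    F.avg t (h * f) = h * F.avg t f := by
  ext x
  rw [Pi.mul_apply, avg_apply, avg_apply, Finset.mul_expect]
  exact Finset.expect_congr rfl fun y hy => by rw [Pi.mul_apply, hh (mem_atom.mp hy)]

variable {F} in
lemma avg_of_measurableAt {t : ℕ} {h : X → ℝ} (hh : F.MeasurableAt t h) : F.avg t h = h := by
  ext x
  rw [avg_apply, Finset.expect_congr rfl fun y hy => hh (mem_atom.mp hy),
    Finset.expect_const (F.atom_nonempty t x)]

lemma avg_nonneg (t : ℕ) {f : X → ℝ} (hf : 0 ≤ f) : 0 ≤ F.avg t f := fun _ =>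
  Finset.expect_nonneg fun y _ => hf y

lemma abs_avg_le (t : ℕ) (f : X → ℝ) : |F.avg t f| ≤ F.avg t |f| := fun _ =>
  Finset.abs_expect_le _ f

lemma sum_avg (t : ℕ) (f : X → ℝ) : ∑ x, F.avg t f x = ∑ x, f x := by
  calc ∑ x, F.avg t f x
      = ∑ x, ∑ y ∈ F.atom t x, f y / (F.atom t y).card := by
        refine Finset.sum_congr rfl fun x _ => ?_
        rw [avg_apply, Finset.expect_eq_sum_div_card, Finset.sum_div]
        exact Finset.sum_congr rfl fun y hy => by rw [atom_congr (mem_atom.mp hy)]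
    _ = ∑ y, ∑ _x ∈ F.atom t y, f y / (F.atom t y).card :=
        Finset.sum_comm' fun x y => by
          simp only [Finset.mem_univ, true_and, and_true, mem_atom]
          exact ⟨(F.rel t).symm, (F.rel t).symm⟩
    _ = ∑ y, f y := by
        refine Finset.sum_congr rfl fun y _ => ?_
        have := (Finset.card_pos.mpr (F.atom_nonempty t y)).ne'
        rw [Finset.sum_const, nsmul_eq_mul]
        field_simp

variable {F} in
lemma sum_mul_avg {t : ℕ} {h : X → ℝ} (hh : F.MeasurableAt t h) (f : X → ℝ) :
    ∑ x, h x * F.avg t f x = ∑ x, h x * f x := by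
  rw [← F.sum_avg t fun x => h x * f x]
  exact Finset.sum_congr rfl fun x _ => (congrFun (avg_mul hh f) x).symm

lemma avg_avg {s t : ℕ} (hst : s ≤ t) (f : X → ℝ) : F.avg s (F.avg t f) = F.avg s f := by
  ext x
  have hatom : F.MeasurableAt t fun y => if y ∈ F.atom s x then (1 : ℝ) else 0 := fun y z hyz =>
    if_congr (by
      have hyz := F.antitone_rel hst hyz
      rw [mem_atom, mem_atom]
      exact ⟨(F.rel s).trans ((F.rel s).symm hyz), (F.rel s).trans hyz⟩) rfl rfl
  have hsum := sum_mul_avg hatom f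
  simp only [ite_mul, one_mul, zero_mul, Finset.sum_ite_mem, Finset.univ_inter] at hsum
  rw [avg_apply, avg_apply, Finset.expect_eq_sum_div_card, Finset.expect_eq_sum_div_card, hsum]

lemma avg_sq_le (t : ℕ) (f : X → ℝ) : F.avg t f ^ 2 ≤ F.avg t (f ^ 2) := fun x => by
  have := Finset.expect_mul_sq_le_sq_mul_sq (F.atom t x) f 1
  simp only [Pi.one_apply, mul_one, one_pow, Finset.expect_const (F.atom_nonempty t x)] at this
  exact this

lemma sum_avg_sq_le (t : ℕ) (f : X → ℝ) : ∑ x, F.avg t f x ^ 2 ≤ ∑ x, f x ^ 2 :=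
  (Finset.sum_le_sum fun x _ => F.avg_sq_le t f x).trans_eq (F.sum_avg t (f ^ 2))

/-- The martingale of averages of `f`, seen along the point `x`. -/
abbrev avgSeq (f : X → ℝ) (x : X) (t : ℕ) : ℝ := F.avg t f x

variable {F} in
lemma avgSeq_congr {f : X → ℝ} {t : ℕ} {x y : X} (hxy : F.rel t x y) :
    ∀ s ≤ t, F.avgSeq f x s = F.avgSeq f y s :=
  fun s hs => F.measurableAt_avg s f (F.antitone_rel hs hxy)

lemma measurableAt_runMax (f : X → ℝ) (t : ℕ) :
    F.MeasurableAt t fun x => runMax (F.avgSeq f x) t :=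
  fun _ _ hxy => runMax_congr (avgSeq_congr hxy)

lemma measurableAt_anchor (δ : ℝ) (f : X → ℝ) (t : ℕ) :
    F.MeasurableAt t fun x => anchor δ (F.avgSeq f x) t :=
  fun _ _ hxy => anchor_congr (avgSeq_congr hxy)

variable {F} in
lemma sum_mul_avgSeq_succ {t : ℕ} {h : X → ℝ} (hh : F.MeasurableAt t h) (f : X → ℝ) :
    ∑ x, h x * F.avgSeq f x (t + 1) = ∑ x, h x * F.avgSeq f x t := by
  rw [sum_mul_avg (hh.mono t.le_succ), sum_mul_avg hh]

lemma sum_runMax_mul_le {f : X → ℝ} (hf : 0 ≤ f) (t : ℕ) :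
    ∑ x, runMax (F.avgSeq f x) t ^ 2 ≤ 2 * ∑ x, runMax (F.avgSeq f x) t * F.avgSeq f x t := by
  have habs (t x) : |F.avgSeq f x t| = F.avgSeq f x t := abs_of_nonneg (F.avg_nonneg t hf x)
  induction t with
  | zero =>
    rw [Finset.mul_sum]
    refine Finset.sum_le_sum fun x _ => ?_
    rw [runMax_zero, habs]
    nlinarith [sq_nonneg (F.avgSeq f x 0)]
  | succ t ih =>
    rw [← sum_mul_avgSeq_succ (F.measurableAt_runMax f t)] at ih
    rw [← sub_nonpos, Finset.mul_sum, ← Finset.sum_sub_distrib] at ih ⊢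
    refine (Finset.sum_le_sum fun x _ => ?_).trans ih
    rw [runMax_succ, habs]
    rcases max_choice (runMax (F.avgSeq f x) t) (F.avgSeq f x (t + 1)) with h | h <;> rw [h]
    nlinarith [sq_nonneg (runMax (F.avgSeq f x) t - F.avgSeq f x (t + 1))]

theorem sum_runMax_sq_le (f : X → ℝ) (t : ℕ) :
    ∑ x, runMax (F.avgSeq f x) t ^ 2 ≤ 4 * ∑ x, f x ^ 2 := by
  have habs : ∑ x, runMax (F.avgSeq f x) t ^ 2 ≤ ∑ x, runMax (F.avgSeq |f| x) t ^ 2 :=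
    Finset.sum_le_sum fun x _ => pow_le_pow_left₀ (runMax_nonneg _ t)
      (runMax_le_runMax (fun s => (F.abs_avg_le s f x).trans (le_abs_self _)) t) 2
  have hdoob := F.sum_runMax_mul_le (abs_nonneg f) t
  have hyoung : 2 * ∑ x, runMax (F.avgSeq |f| x) t * F.avgSeq |f| x t ≤
      ∑ x, (runMax (F.avgSeq |f| x) t ^ 2 / 2 + 2 * F.avgSeq |f| x t ^ 2) := by
    rw [Finset.mul_sum]
    exact Finset.sum_le_sum fun x _ => by
      nlinarith [sq_nonneg (runMax (F.avgSeq |f| x) t - 2 * F.avgSeq |f| x t)]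
  have hL2 := F.sum_avg_sq_le t |f|
  simp only [Pi.abs_apply, sq_abs] at hL2
  rw [Finset.sum_add_distrib, ← Finset.sum_div, ← Finset.mul_sum] at hyoung
  linarith

lemma sum_anchor_energy_add_sq_le (δ : ℝ) (f : X → ℝ) (t : ℕ) :
    ∑ x, ((anchor δ (F.avgSeq f x) t).energy +
        (F.avgSeq f x t - (anchor δ (F.avgSeq f x) t).value) ^ 2) ≤
      ∑ x, F.avgSeq f x t ^ 2 := by
  induction t with
  | zero =>
    refine Finset.sum_le_sum fun x _ => ?_
    simp only [anchor, sub_self]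
    linarith [sq_nonneg (F.avgSeq f x 0)]
  | succ t ih =>
    have hvalue : F.MeasurableAt t fun x => (anchor δ (F.avgSeq f x) t).value :=
      fun _ _ hxy => congrArg _ (F.measurableAt_anchor δ f t hxy)
    have hstep (x) : (anchor δ (F.avgSeq f x) (t + 1)).energy +
          (F.avgSeq f x (t + 1) - (anchor δ (F.avgSeq f x) (t + 1)).value) ^ 2 =
        (anchor δ (F.avgSeq f x) t).energy +
          (F.avgSeq f x (t + 1) - (anchor δ (F.avgSeq f x) t).value) ^ 2 := by
      simp only [anchor]
      split_ifs <;> simp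
    have hexpand (s) : ∑ x, ((anchor δ (F.avgSeq f x) t).energy +
          (F.avgSeq f x s - (anchor δ (F.avgSeq f x) t).value) ^ 2) =
        ∑ x, (anchor δ (F.avgSeq f x) t).energy + ∑ x, F.avgSeq f x s ^ 2
          - 2 * ∑ x, (anchor δ (F.avgSeq f x) t).value * F.avgSeq f x s
          + ∑ x, (anchor δ (F.avgSeq f x) t).value ^ 2 := by
      rw [Finset.mul_sum, ← Finset.sum_add_distrib, ← Finset.sum_sub_distrib,
        ← Finset.sum_add_distrib]
      exact Finset.sum_congr rfl fun x _ => by ring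
    rw [hexpand] at ih
    rw [Finset.sum_congr rfl fun x _ => hstep x, hexpand, sum_mul_avgSeq_succ hvalue]
    linarith

lemma sum_anchor_energy_le (δ : ℝ) (f : X → ℝ) (t : ℕ) :
    ∑ x, (anchor δ (F.avgSeq f x) t).energy ≤ ∑ x, f x ^ 2 :=
  calc ∑ x, (anchor δ (F.avgSeq f x) t).energy
      ≤ ∑ x, ((anchor δ (F.avgSeq f x) t).energy +
          (F.avgSeq f x t - (anchor δ (F.avgSeq f x) t).value) ^ 2) :=
        Finset.sum_le_sum fun _ _ => le_add_of_nonneg_right (sq_nonneg _)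
    _ ≤ _ := (F.sum_anchor_energy_add_sq_le δ f t).trans (F.sum_avg_sq_le t f)

end FiniteFiltration

/-- The constant in Lépingle's inequality. -/
def lepingleConst (r : ℝ) : ℝ := 256 * (4 + ∑' k : ℕ, ((1 / 2 : ℝ) ^ (r - 2)) ^ (k + 1))

lemma lepingleConst_pos (r : ℝ) : 0 < lepingleConst r := by
  have : 0 ≤ ∑' k : ℕ, ((1 / 2 : ℝ) ^ (r - 2)) ^ (k + 1) := tsum_nonneg fun _ => by positivity
  unfold lepingleConst
  positivity

namespace FiniteFiltration

variable {X : Type*} [Fintype X] (F : FiniteFiltration X) {r : ℝ}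

lemma sum_variationEnergy_le (hr : 2 < r) (f : X → ℝ) (n : ℕ) :
    ∑ x, variationEnergy r (F.avgSeq f x) n ≤
      (∑' k : ℕ, ((1 / 2 : ℝ) ^ (r - 2)) ^ (k + 1)) * ∑ x, f x ^ 2 := by
  have hsummable (x) := summable_variationEnergy hr (F.avgSeq f x) n
  simp only [variationEnergy]
  rw [← Summable.tsum_finsetSum fun x _ => hsummable x, ← tsum_mul_right]
  refine (summable_sum fun x _ => hsummable x).tsum_le_tsum (fun k => ?_)
    ((summable_half_rpow_pow_succ (sub_pos.mpr hr)).mul_right _)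
  rw [← Finset.mul_sum]
  exact mul_le_mul_of_nonneg_left (F.sum_anchor_energy_le _ f n) (by positivity)

theorem sum_variationControl_sq_le (hr : 2 < r) (f : X → ℝ) (n : ℕ) :
    ∑ x, variationControl r (F.avgSeq f x) n ^ 2 ≤ lepingleConst r * ∑ x, f x ^ 2 := by
  have hsq (x) : variationControl r (F.avgSeq f x) n ^ 2 =
      256 * (runMax (F.avgSeq f x) n ^ 2 + variationEnergy r (F.avgSeq f x) n) := by
    rw [variationControl, mul_pow, Real.sq_sqrt
      (add_nonneg (sq_nonneg _) (variationEnergy_nonneg _ n))]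
    norm_num
  calc ∑ x, variationControl r (F.avgSeq f x) n ^ 2
      = 256 * (∑ x, runMax (F.avgSeq f x) n ^ 2 + ∑ x, variationEnergy r (F.avgSeq f x) n) := by
        rw [← Finset.sum_add_distrib, Finset.mul_sum]
        exact Finset.sum_congr rfl fun x _ => hsq x
    _ ≤ 256 * (4 * ∑ x, f x ^ 2 +
          (∑' k : ℕ, ((1 / 2 : ℝ) ^ (r - 2)) ^ (k + 1)) * ∑ x, f x ^ 2) := by
        gcongr
        · exact F.sum_runMax_sq_le f n
        · exact F.sum_variationEnergy_le hr f n
    _ = lepingleConst r * ∑ x, f x ^ 2 := by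
        rw [lepingleConst]
        ring

end FiniteFiltration

/-! ### Variation of products and of vectors -/

section Variation

variable {r V : ℝ} {n : ℕ}

lemma VariationLE.comp_monotone {E : Type*} [PseudoMetricSpace E] {n' : ℕ} {a : ℕ → E}
    (ha : VariationLE r n V a) {g : ℕ → ℕ} (hg : Monotone g) (hgn : ∀ t ≤ n', g t ≤ n) :
    VariationLE r n' V fun t => a (g t) :=
  fun u hu hun => ha (g ∘ u) (hg.comp hu) fun i => hgn _ (hun i)

lemma sum_rpow_le_add_rpow {κ : Type*} {S : Finset κ} {W : ℝ} (hr : 1 ≤ r) (hV : 0 ≤ V)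
    (hW : 0 ≤ W) {f g : κ → ℝ} (hf0 : ∀ i ∈ S, 0 ≤ f i) (hg0 : ∀ i ∈ S, 0 ≤ g i)
    (hf : ∑ i ∈ S, f i ^ r ≤ V ^ r) (hg : ∑ i ∈ S, g i ^ r ≤ W ^ r) :
    ∑ i ∈ S, (f i + g i) ^ r ≤ (V + W) ^ r := by
  have hr0 : 0 < r := by linarith
  have hf1 := Finset.sum_nonneg fun i hi => Real.rpow_nonneg (hf0 i hi) r
  have hg1 := Finset.sum_nonneg fun i hi => Real.rpow_nonneg (hg0 i hi) r
  have hfg := Finset.sum_nonneg fun i hi => Real.rpow_nonneg (add_nonneg (hf0 i hi) (hg0 i hi)) r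
  rw [← Real.rpow_inv_le_iff_of_pos hfg (add_nonneg hV hW) hr0, ← one_div]
  refine (Real.Lp_add_le_of_nonneg S hr hf0 hg0).trans ?_
  rw [one_div]
  exact add_le_add ((Real.rpow_inv_le_iff_of_pos hf1 hV hr0).mpr hf)
    ((Real.rpow_inv_le_iff_of_pos hg1 hW hr0).mpr hg)

lemma VariationLE.mul {W : ℝ} {a b : ℕ → ℝ} (hr : 1 ≤ r) (hV : 0 ≤ V) (hW : 0 ≤ W)
    (ha : VariationLE r n V a) (hb : VariationLE r n W b)
    (haV : ∀ t ≤ n, |a t| ≤ V) (hbW : ∀ t ≤ n, |b t| ≤ W) :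
    VariationLE r n (2 * (V * W)) fun t => a t * b t := fun u hu hun m => by
  have hr0 : 0 ≤ r := by linarith
  rw [two_mul]
  calc ∑ i ∈ Finset.range m, dist (a (u (i + 1)) * b (u (i + 1))) (a (u i) * b (u i)) ^ r
      ≤ ∑ i ∈ Finset.range m, (V * dist (b (u (i + 1))) (b (u i))
          + dist (a (u (i + 1))) (a (u i)) * W) ^ r := by
        refine Finset.sum_le_sum fun i _ => Real.rpow_le_rpow dist_nonneg ?_ hr0
        rw [Real.dist_eq, Real.dist_eq, Real.dist_eq]
        calc |a (u (i + 1)) * b (u (i + 1)) - a (u i) * b (u i)|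
            = |a (u (i + 1)) * (b (u (i + 1)) - b (u i))
                + (a (u (i + 1)) - a (u i)) * b (u i)| := by ring_nf
          _ ≤ |a (u (i + 1))| * |b (u (i + 1)) - b (u i)|
                + |a (u (i + 1)) - a (u i)| * |b (u i)| := by
              rw [← abs_mul, ← abs_mul]
              exact abs_add_le _ _
          _ ≤ _ := by
              gcongr
              exacts [haV _ (hun _), hbW _ (hun _)]
    _ ≤ (V * W + V * W) ^ r := by
        refine sum_rpow_le_add_rpow hr (mul_nonneg hV hW) (mul_nonneg hV hW)
          (fun i _ => by positivity) (fun i _ => by positivity) ?_ ?_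
        · simp_rw [Real.mul_rpow hV dist_nonneg, ← Finset.mul_sum]
          rw [Real.mul_rpow hV hW]
          exact mul_le_mul_of_nonneg_left (hb u hu hun m) (Real.rpow_nonneg hV r)
        · simp_rw [Real.mul_rpow dist_nonneg hW, ← Finset.sum_mul]
          rw [Real.mul_rpow hV hW]
          exact mul_le_mul_of_nonneg_right (ha u hu hun m) (Real.rpow_nonneg hW r)

lemma sq_rpow_half {x : ℝ} (hx : 0 ≤ x) (r : ℝ) : (x ^ 2) ^ (r / 2) = x ^ r := by
  rw [← Real.rpow_natCast, ← Real.rpow_mul hx, Nat.cast_ofNat, mul_div_cancel₀ r two_ne_zero]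

/-- Minkowski's inequality for the exponent `r / 2 ≥ 1` and the squares of the coordinates. -/
lemma VariationLE.euclidean {ι : Type*} [Fintype ι] (hr : 2 ≤ r) {b : ℕ → EuclideanSpace ℝ ι}
    {B : EuclideanSpace ℝ ι} (hB : ∀ j, 0 ≤ B j) (hb : ∀ j, VariationLE r n (B j) fun t => b t j) :
    VariationLE r n ‖B‖ b := fun u hu hun m => by
  have key : ∀ S : Finset ι, ∑ i ∈ Finset.range m,
      (∑ j ∈ S, dist (b (u (i + 1)) j) (b (u i) j) ^ 2) ^ (r / 2)
        ≤ (∑ j ∈ S, B j ^ 2) ^ (r / 2) := fun S => by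
    induction S using Finset.induction_on with
    | empty => simp [Real.zero_rpow (show r / 2 ≠ 0 by linarith)]
    | insert j S hj ih =>
      simp only [Finset.sum_insert hj]
      refine sum_rpow_le_add_rpow (by linarith) (by positivity) (by positivity)
        (fun i _ => by positivity) (fun i _ => by positivity) ?_ ih
      simpa only [sq_rpow_half dist_nonneg, sq_rpow_half (hB j)] using hb j u hu hun m
  simpa only [← sq_rpow_half dist_nonneg r, EuclideanSpace.dist_sq_eq,
    ← sq_rpow_half (norm_nonneg B), EuclideanSpace.norm_sq_eq, Real.norm_eq_abs, sq_abs]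
    using key Finset.univ

end Variation

/-! ### Greedy nets along a path of bounded variation -/

section GreedyNet

variable {E : Type*} [PseudoMetricSpace E]

/-- The last time up to `t` at which a new point was put into the greedy `δ`-net of the path `v`. -/
def greedyNet (v : ℕ → E) (δ : ℝ) : ℕ → ℕ
  | 0 => 0
  | t + 1 => if δ < dist (v (t + 1)) (v (greedyNet v δ t)) then t + 1 else greedyNet v δ t

variable {v : ℕ → E} {δ : ℝ}

lemma greedyNet_le (t : ℕ) : greedyNet v δ t ≤ t := by
  induction t with
  | zero => exact le_rfl
  | succ t ih =>
    rw [greedyNet]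
    split_ifs
    exacts [le_rfl, ih.trans t.le_succ]

lemma monotone_greedyNet : Monotone (greedyNet v δ) := monotone_nat_of_le_succ fun t => by
  rw [greedyNet]
  split_ifs
  exacts [(greedyNet_le t).trans t.le_succ, le_rfl]

lemma dist_greedyNet_le (hδ : 0 ≤ δ) (t : ℕ) : dist (v t) (v (greedyNet v δ t)) ≤ δ := by
  cases t with
  | zero => simpa only [greedyNet, dist_self] using hδ
  | succ t =>
    rw [greedyNet]
    split_ifs with h
    · simpa only [dist_self] using hδ
    · exact not_lt.mp h

lemma card_greedyNet_mul_le {r : ℝ} (hr : 0 < r) (hδ : 0 ≤ δ) (n : ℕ) :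
    (((Finset.range (n + 1)).image (greedyNet v δ)).card : ℝ) * δ ^ r ≤ δ ^ r
      + ∑ i ∈ Finset.range n, dist (v (greedyNet v δ (i + 1))) (v (greedyNet v δ i)) ^ r := by
  induction n with
  | zero => simp
  | succ n ih =>
    rw [Finset.range_add_one, Finset.image_insert, Finset.sum_range_succ, ← add_assoc]
    by_cases hjump : δ < dist (v (n + 1)) (v (greedyNet v δ n))
    · have hnew : greedyNet v δ (n + 1) = n + 1 := by rw [greedyNet, if_pos hjump]
      have hcard := Finset.card_insert_le (greedyNet v δ (n + 1))
        ((Finset.range (n + 1)).image (greedyNet v δ))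
      have hcard : (_ : ℝ) ≤ _ := Nat.cast_le.mpr hcard
      rw [Nat.cast_add_one] at hcard
      calc _ ≤ (((Finset.range (n + 1)).image (greedyNet v δ)).card + 1 : ℝ) * δ ^ r := by gcongr
        _ ≤ _ := by
          rw [add_mul, one_mul]
          refine add_le_add ih (Real.rpow_le_rpow hδ ?_ hr.le)
          rw [hnew]
          exact hjump.le
    · have hold : greedyNet v δ (n + 1) = greedyNet v δ n := by rw [greedyNet, if_neg hjump]
      rwa [hold, Finset.insert_eq_of_mem (Finset.mem_image_of_mem _ (by simp)), dist_self,
        Real.zero_rpow hr.ne', add_zero]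

lemma card_greedyNet_le {r V : ℝ} {n : ℕ} (hr : 0 < r) (hV : 0 ≤ V) (hδ : 0 < δ)
    (hv : VariationLE r n V v) :
    (((Finset.range (n + 1)).image (greedyNet v δ)).card : ℝ) ≤ 1 + (V / δ) ^ r := by
  have hvar := hv (fun i => min (greedyNet v δ i) n) (monotone_greedyNet.min monotone_const)
    (fun i => min_le_right _ _) n
  have hmin : ∀ i ≤ n, min (greedyNet v δ i) n = greedyNet v δ i :=
    fun i hi => min_eq_left ((greedyNet_le i).trans hi)
  rw [Finset.sum_congr rfl fun i hi => by
    rw [hmin i (Finset.mem_range.mp hi).le, hmin (i + 1) (Finset.mem_range.mp hi)]] at hvar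
  rw [Real.div_rpow hV hδ.le, ← sub_le_iff_le_add', le_div_iff₀ (by positivity), sub_mul, one_mul,
    sub_le_iff_le_add']
  exact (card_greedyNet_mul_le hr hδ.le n).trans (add_le_add_right hvar _)

end GreedyNet

/-! ### Maximal inequality by chaining -/

/-- The restriction of functions to `I`, with values in the space `ℓ²(I)`. -/
def toL2 {X : Type*} (I : Finset X) : (X → ℝ) →ₗ[ℝ] EuclideanSpace ℝ I where
  toFun f := WithLp.toLp 2 fun x => f x
  map_add' _ _ := rfl
  map_smul' _ _ := rfl

section ToL2

variable {X : Type*} {I : Finset X}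

lemma norm_toL2_sq (f : X → ℝ) : ‖toL2 I f‖ ^ 2 = ∑ x ∈ I, f x ^ 2 := by
  simp_rw [EuclideanSpace.norm_sq_eq, ← Finset.sum_coe_sort I, Real.norm_eq_abs, sq_abs]
  rfl

lemma norm_toL2_le {f : X → ℝ} {b : ℝ} (hb : 0 ≤ b) (h : ∑ x ∈ I, f x ^ 2 ≤ b ^ 2) :
    ‖toL2 I f‖ ≤ b :=
  (pow_le_pow_iff_left₀ (norm_nonneg _) hb two_ne_zero).mp (by rwa [norm_toL2_sq])

end ToL2

/-- The ratio of the geometric series that bounds the chaining sum. -/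
def chainRatio (r : ℝ) : ℝ := 2 ^ (r / 2 - 1)

lemma one_lt_chainRatio {r : ℝ} (hr : 2 < r) : 1 < chainRatio r :=
  Real.one_lt_rpow one_lt_two (by linarith)

lemma two_rpow_eq_chainRatio (r : ℝ) : (2 : ℝ) ^ r = 4 * chainRatio r ^ 2 := by
  rw [chainRatio, ← Real.rpow_mul_natCast zero_le_two, show (4 : ℝ) = 2 ^ (2 : ℝ) by norm_num,
    ← Real.rpow_add two_pos]
  congr 1
  push_cast
  ring

lemma card_greedyNet_dyadic_le {E : Type*} [NormedAddCommGroup E] {r B : ℝ} {n : ℕ} {v : ℕ → E}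
    (hr : 2 < r) (hB : 0 < B) (hv : VariationLE r n B v) (m : ℕ) :
    (((Finset.range (n + 1)).image (greedyNet v (B / 2 ^ m))).card : ℝ)
      ≤ 2 * (4 * chainRatio r ^ 2) ^ m := by
  refine (card_greedyNet_le (by linarith) hB.le (by positivity) hv).trans ?_
  rw [div_div_cancel₀ hB.ne', ← Real.rpow_natCast_mul zero_le_two, mul_comm (m : ℝ),
    Real.rpow_mul_natCast zero_le_two, two_rpow_eq_chainRatio]
  have : 1 ≤ (4 * chainRatio r ^ 2) ^ m := one_le_pow₀ (by nlinarith [one_lt_chainRatio hr])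
  linarith

section Chaining

variable {E X : Type*} [NormedAddCommGroup E] [InnerProductSpace ℝ E] {r B : ℝ} {n : ℕ}
  {v : ℕ → E} {I : Finset X} {w : X → E} {τ : X → ℕ}

lemma sum_inner_sq_le_of_mem (hw : ∀ d, ∑ x ∈ I, ⟪w x, d⟫ ^ 2 ≤ I.card * ‖d‖ ^ 2) {T : Finset ℕ}
    (hτ : ∀ x ∈ I, τ x ∈ T) {d : ℕ → E} {b : ℝ} (hd : ∀ t ∈ T, ‖d t‖ ≤ b) :
    ∑ x ∈ I, ⟪w x, d (τ x)⟫ ^ 2 ≤ I.card * (T.card * b ^ 2) := by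
  calc ∑ x ∈ I, ⟪w x, d (τ x)⟫ ^ 2
      ≤ ∑ x ∈ I, ∑ t ∈ T, ⟪w x, d t⟫ ^ 2 := Finset.sum_le_sum fun x hx =>
        Finset.single_le_sum (f := fun t => ⟪w x, d t⟫ ^ 2) (fun t _ => sq_nonneg _) (hτ x hx)
    _ = ∑ t ∈ T, ∑ x ∈ I, ⟪w x, d t⟫ ^ 2 := Finset.sum_comm
    _ ≤ ∑ _t ∈ T, (I.card : ℝ) * b ^ 2 := Finset.sum_le_sum fun t ht =>
        (hw (d t)).trans (by have := hd t ht; gcongr)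
    _ = I.card * (T.card * b ^ 2) := by rw [Finset.sum_const, nsmul_eq_mul]; ring

lemma norm_toL2_inner_greedyNet_le (hr : 2 < r) (hB : 0 < B) (hv : VariationLE r n B v)
    (hw : ∀ d, ∑ x ∈ I, ⟪w x, d⟫ ^ 2 ≤ I.card * ‖d‖ ^ 2) {m : ℕ} {d : ℕ → E}
    (hd : ∀ t ≤ n, ‖d t‖ ≤ 2 * (B / 2 ^ m)) (hτ : ∀ x, τ x ≤ n) :
    ‖toL2 I fun x => ⟪w x, d (greedyNet v (B / 2 ^ m) (τ x))⟫‖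
      ≤ √I.card * B * (4 * chainRatio r ^ m) := by
  have hρ : 0 < chainRatio r := one_pos.trans (one_lt_chainRatio hr)
  have hnet : ∀ t ∈ (Finset.range (n + 1)).image (greedyNet v (B / 2 ^ m)), t ≤ n := fun t ht => by
    obtain ⟨s, hs, rfl⟩ := Finset.mem_image.mp ht
    exact (greedyNet_le s).trans (Finset.mem_range_succ_iff.mp hs)
  refine norm_toL2_le (by positivity) ((sum_inner_sq_le_of_mem hw
    (T := (Finset.range (n + 1)).image (greedyNet v (B / 2 ^ m)))
    (fun x _ => Finset.mem_image_of_mem _ (Finset.mem_range_succ_iff.mpr (hτ x)))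
    fun t ht => hd t (hnet t ht)).trans ?_)
  calc (I.card : ℝ) * (_ * (2 * (B / 2 ^ m)) ^ 2)
      ≤ I.card * (2 * (4 * chainRatio r ^ 2) ^ m * (2 * (B / 2 ^ m)) ^ 2) := by
        gcongr
        exact card_greedyNet_dyadic_le hr hB hv m
    _ = I.card * (8 * (B ^ 2 * (chainRatio r ^ m) ^ 2)) := by
        rw [mul_pow, show (4 : ℝ) ^ m = (2 ^ m) ^ 2 by rw [← pow_mul, mul_comm, pow_mul]; norm_num]
        field_simp
        ring
    _ ≤ I.card * (16 * (B ^ 2 * (chainRatio r ^ m) ^ 2)) := by gcongr; norm_num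
    _ = (√I.card * B * (4 * chainRatio r ^ m)) ^ 2 := by
        rw [mul_pow, mul_pow, Real.sq_sqrt (Nat.cast_nonneg _)]
        ring

lemma norm_toL2_inner_net_le_geom_sum (hr : 2 < r) (hB : 0 < B) (hv : VariationLE r n B v)
    (hvB : ∀ t ≤ n, ‖v t‖ ≤ B) (hw : ∀ d, ∑ x ∈ I, ⟪w x, d⟫ ^ 2 ≤ I.card * ‖d‖ ^ 2)
    (hτ : ∀ x, τ x ≤ n) (L : ℕ) :
    ‖toL2 I fun x => ⟪w x, v (greedyNet v (B / 2 ^ L) (τ x))⟫‖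
      ≤ √I.card * B * (4 * ∑ m ∈ Finset.range (L + 1), chainRatio r ^ m) := by
  induction L generalizing τ with
  | zero =>
    simpa using norm_toL2_inner_greedyNet_le hr hB hv hw (m := 0)
      (fun t ht => (hvB t ht).trans (by rw [pow_zero, div_one]; linarith)) hτ
  | succ L ih =>
    set σ : X → ℕ := fun x => greedyNet v (B / 2 ^ (L + 1)) (τ x)
    set d : ℕ → E := fun t => v t - v (greedyNet v (B / 2 ^ L) t)
    have hd : ∀ t ≤ n, ‖d t‖ ≤ 2 * (B / 2 ^ (L + 1)) := fun t _ => by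
      rw [← dist_eq_norm, pow_succ, mul_div_assoc', mul_comm (2 : ℝ),
        mul_div_mul_right _ _ two_ne_zero]
      exact dist_greedyNet_le (by positivity) t
    have hsplit : (fun x => ⟪w x, v (σ x)⟫) =
        (fun x => ⟪w x, v (greedyNet v (B / 2 ^ L) (σ x))⟫) + fun x => ⟪w x, d (σ x)⟫ := by
      ext x
      rw [Pi.add_apply, ← inner_add_right, add_sub_cancel]
    rw [hsplit, map_add, Finset.sum_range_succ _ (L + 1), mul_add, mul_add]
    exact (norm_add_le _ _).trans (add_le_add (ih fun x => (greedyNet_le _).trans (hτ x))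
      (norm_toL2_inner_greedyNet_le hr hB hv hw hd hτ))

lemma norm_toL2_inner_sub_greedyNet_le {N δ : ℝ} (hδ : 0 ≤ δ)
    (hwN : ∀ x, ‖w x‖ ^ 2 ≤ N) :
    ‖toL2 I fun x => ⟪w x, v (τ x) - v (greedyNet v δ (τ x))⟫‖ ≤ √I.card * (√N * δ) := by
  refine norm_toL2_le (by positivity) ?_
  rw [mul_pow, Real.sq_sqrt (Nat.cast_nonneg _), ← nsmul_eq_mul]
  refine Finset.sum_le_card_nsmul _ _ _ fun x _ => ?_
  rw [← sq_abs]
  gcongr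
  refine (abs_real_inner_le_norm _ _).trans ?_
  gcongr
  · exact Real.le_sqrt_of_sq_le (hwN x)
  · rw [← dist_eq_norm]
    exact dist_greedyNet_le hδ _

lemma exists_chaining_depth {N : ℝ} (hr : 2 < r) (hN : 1 ≤ N) :
    ∃ L : ℕ, chainRatio r ^ L ≤ N ^ (1 / 2 - 1 / r) ∧ √N / 2 ^ L ≤ 2 * N ^ (1 / 2 - 1 / r) := by
  have : 0 < r := by linarith
  set y := Real.logb 2 N
  have hNy : N = 2 ^ y := (Real.rpow_logb two_pos (by norm_num) (by linarith)).symm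
  have hy : 0 ≤ y := Real.logb_nonneg one_lt_two hN
  have hyr : y / r ≤ y / 2 := div_le_div_of_nonneg_left hy two_pos hr.le
  have hfloor : (⌊y / r⌋₊ : ℝ) ≤ y / r := Nat.floor_le (by positivity)
  have hlt : y / r < ⌊y / r⌋₊ + 1 := Nat.lt_floor_add_one _
  have hexp : N ^ (1 / 2 - 1 / r) = 2 ^ (y / 2 - y / r) := by
    rw [hNy, ← Real.rpow_mul zero_le_two]
    ring_nf
  refine ⟨⌊y / r⌋₊, ?_, ?_⟩
  · rw [hexp, chainRatio, ← Real.rpow_mul_natCast zero_le_two]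
    refine Real.rpow_le_rpow_of_exponent_le one_le_two ?_
    calc (r / 2 - 1) * ⌊y / r⌋₊ ≤ (r / 2 - 1) * (y / r) :=
          mul_le_mul_of_nonneg_left hfloor (by linarith)
      _ = y / 2 - y / r := by field_simp
  · rw [hexp, hNy, Real.sqrt_eq_rpow, ← Real.rpow_mul zero_le_two, ← Real.rpow_natCast,
      ← Real.rpow_sub two_pos, ← Real.rpow_one_add' zero_le_two (by linarith)]
    exact Real.rpow_le_rpow_of_exponent_le one_le_two (by linarith)

/-- The constant of the maximal inequality `norm_toL2_inner_le_entropy`. -/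
def entropyConst (r : ℝ) : ℝ := 4 * (chainRatio r / (chainRatio r - 1)) + 2

lemma entropyConst_pos (hr : 2 < r) : 0 < entropyConst r := by
  have hρ := one_lt_chainRatio hr
  have : 0 < chainRatio r - 1 := by linarith
  unfold entropyConst
  positivity

lemma geom_sum_chainRatio_le (hr : 2 < r) (L : ℕ) : ∑ m ∈ Finset.range (L + 1), chainRatio r ^ m
    ≤ chainRatio r / (chainRatio r - 1) * chainRatio r ^ L := by
  have hρ := one_lt_chainRatio hr
  rw [geom_sum_eq hρ.ne', div_mul_eq_mul_div, ← pow_succ']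
  exact div_le_div_of_nonneg_right (by linarith) (by linarith)

/-- The net at scale `B / 2 ^ L` is reached by chaining; what is left over is estimated by the
Cauchy–Schwarz inequality. The two contributions balance at `2 ^ L ≈ N ^ (1 / r)`. -/
theorem norm_toL2_inner_le_entropy {N : ℝ} (hr : 2 < r) (hB : 0 ≤ B) (hv : VariationLE r n B v)
    (hvB : ∀ t ≤ n, ‖v t‖ ≤ B) (hw : ∀ d, ∑ x ∈ I, ⟪w x, d⟫ ^ 2 ≤ I.card * ‖d‖ ^ 2)
    (hN : 1 ≤ N) (hwN : ∀ x, ‖w x‖ ^ 2 ≤ N) (hτ : ∀ x, τ x ≤ n) :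
    ‖toL2 I fun x => ⟪w x, v (τ x)⟫‖ ≤ entropyConst r * N ^ (1 / 2 - 1 / r) * B * √I.card := by
  rcases hB.eq_or_lt with rfl | hB
  · have hzero : ∀ x, v (τ x) = 0 := fun x => norm_le_zero_iff.mp (hvB _ (hτ x))
    simp only [hzero, inner_zero_right, mul_zero, zero_mul]
    exact (norm_eq_zero.mpr (map_zero (toL2 I))).le
  obtain ⟨L, hchain, htail⟩ := exists_chaining_depth hr hN
  have hρ := one_lt_chainRatio hr
  set P := N ^ (1 / 2 - 1 / r)
  set δ := B / 2 ^ L with hδ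
  have hsplit : (fun x => ⟪w x, v (τ x)⟫) = (fun x => ⟪w x, v (greedyNet v δ (τ x))⟫) +
      fun x => ⟪w x, v (τ x) - v (greedyNet v δ (τ x))⟫ := by
    ext x
    rw [Pi.add_apply, ← inner_add_right, add_sub_cancel]
  rw [hsplit, map_add]
  calc _ ≤ √I.card * B * (4 * ∑ m ∈ Finset.range (L + 1), chainRatio r ^ m)
          + √I.card * (√N * δ) :=
        (norm_add_le _ _).trans (add_le_add
          (norm_toL2_inner_net_le_geom_sum hr hB hv hvB hw hτ L)
          (norm_toL2_inner_sub_greedyNet_le (by positivity) hwN))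
    _ = √I.card * B * (4 * ∑ m ∈ Finset.range (L + 1), chainRatio r ^ m + √N / 2 ^ L) := by
        rw [hδ]; ring
    _ ≤ √I.card * B * (4 * (chainRatio r / (chainRatio r - 1) * P) + 2 * P) := by
        have hρ1 : 0 < chainRatio r - 1 := by linarith
        have := (geom_sum_chainRatio_le hr L).trans
          (mul_le_mul_of_nonneg_left hchain (by positivity))
        gcongr
    _ = entropyConst r * P * B * √I.card := by rw [entropyConst]; ring

end Chaining

/-! ### The finite Walsh model -/

/-- A finite model of the Walsh phase plane. At time `t` the space `X` is resolved up to the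
cells of `rel t`, and the frequencies are resolved up to the classes of `freqRel t`: frequencies
merge as the space is resolved, and modulo functions that are constant on the cells, the characters
depend only on the class of the frequency and are orthogonal for different classes. -/
structure WalshModel (X ι : Type*) [Fintype X] extends FiniteFiltration X where
  char : ι → X → ℝ
  freqRel : ℕ → Setoid ι
  monotone_freqRel : Monotone freqRel
  char_mul_self : ∀ i, char i * char i = 1
  measurableAt_char_mul : ∀ ⦃t i j⦄, freqRel t i j →
    toFiniteFiltration.MeasurableAt t (char i * char j)
  avg_char_mul : ∀ ⦃t i j⦄, ¬ freqRel t i j → toFiniteFiltration.avg t (char i * char j) = 0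

namespace WalshModel

variable {X ι : Type*} [Fintype X] (M : WalshModel X ι)

lemma char_sq (j : ι) (x : X) : M.char j x ^ 2 = 1 := by
  rw [sq]
  exact congrFun (M.char_mul_self j) x

/-- The coefficient at frequency `j` of the local Walsh expansions on the cells at time `t`. -/
def coeff (t : ℕ) (j : ι) : (X → ℝ) →ₗ[ℝ] X → ℝ := M.avg t ∘ₗ LinearMap.mulLeft ℝ (M.char j)

lemma coeff_apply (t : ℕ) (j : ι) (f : X → ℝ) : M.coeff t j f = M.avg t (M.char j * f) := rfl

lemma measurableAt_coeff (t : ℕ) (j : ι) (f : X → ℝ) : M.MeasurableAt t (M.coeff t j f) :=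
  M.measurableAt_avg t _

section Coeff

variable {M} {t : ℕ} {i j : ι} {h : X → ℝ}

lemma coeff_char_mul_of_rel (hij : M.freqRel t i j) (hh : M.MeasurableAt t h) :
    M.coeff t i (M.char j * h) = M.char i * M.char j * h := by
  rw [coeff_apply, ← mul_assoc]
  exact FiniteFiltration.avg_of_measurableAt fun x y hxy =>
    congrArg₂ (· * ·) (M.measurableAt_char_mul hij hxy) (hh hxy)

lemma coeff_char_mul_of_not_rel (hij : ¬ M.freqRel t i j) (hh : M.MeasurableAt t h) :
    M.coeff t i (M.char j * h) = 0 := by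
  rw [coeff_apply, ← mul_assoc, mul_comm, FiniteFiltration.avg_mul hh, M.avg_char_mul hij, mul_zero]

lemma coeff_eq_of_rel (hij : M.freqRel t i j) (f : X → ℝ) :
    M.coeff t i f = M.char i * M.char j * M.coeff t j f := by
  rw [coeff_apply, coeff_apply, ← FiniteFiltration.avg_mul (M.measurableAt_char_mul hij), mul_assoc,
    ← mul_assoc (M.char j), M.char_mul_self, one_mul]

end Coeff

variable [Fintype ι] [LinearOrder ι]

/-- The representatives of the frequency classes at time `t`, chosen as the least elements. With
this choice later representatives are also earlier ones. -/
def rep (t : ℕ) : Finset ι := {j | ∀ i, M.freqRel t i j → j ≤ i}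

lemma mem_rep {t : ℕ} {j : ι} : j ∈ M.rep t ↔ ∀ i, M.freqRel t i j → j ≤ i := by simp [rep]

lemma antitone_rep : Antitone M.rep := fun _ _ hst _ hj =>
  M.mem_rep.mpr fun i hi => M.mem_rep.mp hj i (M.monotone_freqRel hst hi)

variable {M} in
lemma eq_of_mem_rep {t : ℕ} {i j : ι} (hi : i ∈ M.rep t) (hj : j ∈ M.rep t)
    (h : M.freqRel t i j) : i = j :=
  le_antisymm (M.mem_rep.mp hi j ((M.freqRel t).symm h)) (M.mem_rep.mp hj i h)

lemma exists_mem_rep (t : ℕ) (i : ι) : ∃ j ∈ M.rep t, M.freqRel t j i := by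
  obtain ⟨j, hj, hmin⟩ := Finset.exists_min_image {j | M.freqRel t j i} id
    ⟨i, by simp⟩
  rw [Finset.mem_filter_univ] at hj
  exact ⟨j, M.mem_rep.mpr fun k hk => hmin k (by simpa using (M.freqRel t).trans hk hj), hj⟩

lemma sum_rep_eq_single {β : Type*} [AddCommMonoid β] {t : ℕ} {i : ι} {φ : ι → β}
    (hφ : ∀ j ∈ M.rep t, ¬ M.freqRel t j i → φ j = 0) :
    ∃ j ∈ M.rep t, M.freqRel t j i ∧ ∑ k ∈ M.rep t, φ k = φ j := by
  obtain ⟨j, hj, hji⟩ := M.exists_mem_rep t i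
  refine ⟨j, hj, hji, Finset.sum_eq_single_of_mem j hj fun k hk hkj => hφ k hk fun hki => hkj ?_⟩
  exact eq_of_mem_rep hk hj ((M.freqRel t).trans hki ((M.freqRel t).symm hji))

/-- The Walsh multiplier at time `t` with value `a j` on the frequency class of `j`. -/
def multiplier (t : ℕ) (a : ι → ℝ) : (X → ℝ) →ₗ[ℝ] X → ℝ :=
  ∑ j ∈ M.rep t, a j • (LinearMap.mulLeft ℝ (M.char j) ∘ₗ M.coeff t j)

/-- The projection onto the modulations by the given frequencies of the functions that are constant
on the cells at time `t`. -/
def proj (t : ℕ) : (X → ℝ) →ₗ[ℝ] X → ℝ := M.multiplier t 1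

lemma multiplier_apply (t : ℕ) (a : ι → ℝ) (f : X → ℝ) :
    M.multiplier t a f = ∑ j ∈ M.rep t, a j • (M.char j * M.coeff t j f) := by
  simp only [multiplier, LinearMap.sum_apply, LinearMap.smul_apply, LinearMap.comp_apply,
    LinearMap.mulLeft_apply]

lemma proj_apply (t : ℕ) (f : X → ℝ) :
    M.proj t f = ∑ j ∈ M.rep t, M.char j * M.coeff t j f := by
  simp only [proj, multiplier_apply, Pi.one_apply, one_smul]

section Algebra

variable {M} {s t : ℕ} {i j : ι} {a : ι → ℝ} {h : X → ℝ}

lemma multiplier_char_mul (ha : ∀ ⦃i j⦄, M.freqRel t i j → a i = a j)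
    (hh : M.MeasurableAt t h) : M.multiplier t a (M.char j * h) = a j • (M.char j * h) := by
  obtain ⟨i, -, hij, hsum⟩ := M.sum_rep_eq_single (t := t) (i := j)
    (φ := fun k => a k • (M.char k * M.coeff t k (M.char j * h))) fun k _ hkj => by
      rw [coeff_char_mul_of_not_rel hkj hh, mul_zero, smul_zero]
  rw [multiplier_apply, hsum, coeff_char_mul_of_rel hij hh, ← mul_assoc, ← mul_assoc,
    M.char_mul_self, one_mul, ha hij]

lemma coeff_proj (hst : s ≤ t) (i : ι) (f : X → ℝ) : M.coeff s i (M.proj t f) = M.coeff s i f := by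
  have hself : M.coeff t i (M.proj t f) = M.coeff t i f := by
    rw [proj_apply, map_sum]
    obtain ⟨j, -, hji, hsum⟩ := M.sum_rep_eq_single (t := t) (i := i)
      (φ := fun k => M.coeff t i (M.char k * M.coeff t k f)) fun k _ hki =>
        coeff_char_mul_of_not_rel (fun hik => hki ((M.freqRel t).symm hik))
          (M.measurableAt_coeff t k f)
    rw [hsum, coeff_char_mul_of_rel ((M.freqRel t).symm hji) (M.measurableAt_coeff t j f),
      ← coeff_eq_of_rel ((M.freqRel t).symm hji)]
  have havg : ∀ g, M.coeff s i g = M.avg s (M.coeff t i g) := fun g => (M.avg_avg hst _).symm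
  rw [havg, havg, hself]

lemma multiplier_proj (hst : s ≤ t) (f : X → ℝ) :
    M.multiplier s a (M.proj t f) = M.multiplier s a f := by
  simp only [multiplier_apply, coeff_proj hst]

lemma multiplier_proj_of_ge (hst : s ≤ t) (ha : ∀ ⦃i j⦄, M.freqRel t i j → a i = a j)
    (f : X → ℝ) :
    M.multiplier t a (M.proj s f) = ∑ j ∈ M.rep s, a j • (M.char j * M.coeff s j f) := by
  rw [proj_apply, map_sum]
  exact Finset.sum_congr rfl fun j _ =>
    multiplier_char_mul ha (FiniteFiltration.MeasurableAt.mono hst (M.measurableAt_coeff s j f))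

lemma proj_proj_of_ge (hst : s ≤ t) (f : X → ℝ) : M.proj t (M.proj s f) = M.proj s f := by
  rw [proj, multiplier_proj_of_ge hst (fun _ _ _ => rfl), proj_apply]
  simp only [Pi.one_apply, one_smul]

lemma dotProduct_proj (f g : X → ℝ) :
    g ⬝ᵥ M.proj t f = ∑ j ∈ M.rep t, M.coeff t j g ⬝ᵥ M.coeff t j f := by
  rw [proj_apply, dotProduct_sum]
  refine Finset.sum_congr rfl fun j _ => ?_
  rw [dotProduct_comm _ (M.coeff t j f)]
  calc g ⬝ᵥ (M.char j * M.coeff t j f)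
      = ∑ x, M.coeff t j f x * (M.char j * g) x :=
        Finset.sum_congr rfl fun x _ => by simp only [Pi.mul_apply]; ring
    _ = M.coeff t j f ⬝ᵥ M.coeff t j g :=
        (FiniteFiltration.sum_mul_avg (M.measurableAt_coeff t j f) _).symm

lemma proj_dotProduct (f g : X → ℝ) : M.proj t f ⬝ᵥ g = f ⬝ᵥ M.proj t g := by
  rw [dotProduct_comm, dotProduct_proj, dotProduct_proj]
  exact Finset.sum_congr rfl fun j _ => dotProduct_comm _ _

lemma proj_dotProduct_proj (hst : s ≤ t) (f : X → ℝ) :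
    M.proj t f ⬝ᵥ M.proj s f = M.proj s f ⬝ᵥ M.proj s f := by
  rw [proj_dotProduct, proj_dotProduct, proj_proj_of_ge hst, proj_proj_of_ge le_rfl]

lemma sum_proj_sub_proj_sq (hst : s ≤ t) (f : X → ℝ) :
    ∑ x, (M.proj t f - M.proj s f) x ^ 2 = ∑ x, M.proj t f x ^ 2 - ∑ x, M.proj s f x ^ 2 := by
  simp only [sq]
  change (M.proj t f - M.proj s f) ⬝ᵥ (M.proj t f - M.proj s f) =
    M.proj t f ⬝ᵥ M.proj t f - M.proj s f ⬝ᵥ M.proj s f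
  rw [sub_dotProduct, dotProduct_sub, dotProduct_sub, dotProduct_comm (M.proj s f) (M.proj t f),
    proj_dotProduct_proj hst]
  ring

lemma sum_proj_sq_le_sum_proj_sq (hst : s ≤ t) (f : X → ℝ) :
    ∑ x, M.proj s f x ^ 2 ≤ ∑ x, M.proj t f x ^ 2 :=
  sub_nonneg.mp ((sum_proj_sub_proj_sq hst f).symm.trans_ge
    (Finset.sum_nonneg fun _ _ => sq_nonneg _))

lemma sum_proj_sq_le (t : ℕ) (f : X → ℝ) : ∑ x, M.proj t f x ^ 2 ≤ ∑ x, f x ^ 2 := by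
  have hnonneg : 0 ≤ (f - M.proj t f) ⬝ᵥ (f - M.proj t f) :=
    Finset.sum_nonneg fun x _ => mul_self_nonneg _
  have hself : M.proj t f ⬝ᵥ f = M.proj t f ⬝ᵥ M.proj t f := by
    rw [proj_dotProduct, proj_dotProduct, proj_proj_of_ge le_rfl]
  rw [sub_dotProduct, dotProduct_sub, dotProduct_sub, dotProduct_comm f (M.proj t f),
    hself] at hnonneg
  simp only [sq]
  change M.proj t f ⬝ᵥ M.proj t f ≤ f ⬝ᵥ f
  linarith

lemma sum_sum_coeff_sq_le (t : ℕ) (f : X → ℝ) :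
    ∑ j ∈ M.rep t, ∑ x, M.coeff t j f x ^ 2 ≤ ∑ x, f x ^ 2 := by
  refine le_of_eq_of_le ?_ (sum_proj_sq_le (M := M) t f)
  simp only [sq]
  change ∑ j ∈ M.rep t, M.coeff t j f ⬝ᵥ M.coeff t j f = M.proj t f ⬝ᵥ M.proj t f
  rw [← dotProduct_proj, proj_dotProduct, proj_proj_of_ge le_rfl]

lemma avg_char_mul_of_mem_rep (hi : i ∈ M.rep t) (hj : j ∈ M.rep t) :
    M.avg t (M.char i * M.char j) = if i = j then 1 else 0 := by
  split_ifs with hij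
  · rw [hij, M.char_mul_self]
    exact FiniteFiltration.avg_of_measurableAt fun _ _ _ => rfl
  · exact M.avg_char_mul fun hrel => hij (eq_of_mem_rep hi hj hrel)

end Algebra

end WalshModel

/-! ### The maximal inequality on `L²` -/

lemma FiniteFiltration.sum_le_sum_of_sum_atom_le {X : Type*} [Fintype X] (F : FiniteFiltration X)
    {t : ℕ} {f g : X → ℝ} (h : ∀ x, ∑ y ∈ F.atom t x, f y ≤ (F.atom t x).card * g x) :
    ∑ x, f x ≤ ∑ x, g x := by
  rw [← F.sum_avg t f]
  refine Finset.sum_le_sum fun x _ => ?_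
  have hcard : (0 : ℝ) < (F.atom t x).card := by exact_mod_cast (F.atom_nonempty t x).card_pos
  exact le_of_mul_le_mul_left ((F.card_atom_mul_avg t f x).trans_le (h x)) hcard

namespace WalshModel

variable {X ι : Type*} [Fintype X] [Fintype ι] [LinearOrder ι] (M : WalshModel X ι)

/-- Coefficients that define a multiplier at each time up to `n`, and are bounded by `V` in size
and `r`-variation. -/
structure AdmissibleCoeff (r : ℝ) (n : ℕ) (V : ℝ) (a : ℕ → ι → ℝ) : Prop where
  congr : ∀ t ⦃i j⦄, M.freqRel t i j → a t i = a t j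
  abs_le : ∀ t j, |a t j| ≤ V
  variationLE : ∀ j, VariationLE r n V fun t => a t j

/-- The values at `x` of the characters that represent the frequencies at time `s`. -/
def charVec (s : ℕ) (x : X) : EuclideanSpace ℝ (M.rep s) := WithLp.toLp 2 fun j => M.char j x

/-- The coefficients at `x` of the multiplier at time `t` applied to `M.proj s f`, with respect to
the vector `M.charVec s x`. -/
def stoppedCoeff (a : ℕ → ι → ℝ) (s : ℕ) (f : X → ℝ) (x : X) (t : ℕ) :
    EuclideanSpace ℝ (M.rep s) :=
  WithLp.toLp 2 fun j => a t j * M.avgSeq (M.coeff s j f) x (min t s)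

section Stage

variable {M} {r V : ℝ} {n s t : ℕ} {a : ℕ → ι → ℝ} {τ : X → ℕ}

lemma norm_charVec_sq (s : ℕ) (x : X) : ‖M.charVec s x‖ ^ 2 = (M.rep s).card := by
  simp [EuclideanSpace.real_norm_sq_eq, charVec, M.char_sq]

lemma sum_inner_charVec_sq (s : ℕ) (x : X) (d : EuclideanSpace ℝ (M.rep s)) :
    ∑ y ∈ M.atom s x, ⟪M.charVec s y, d⟫ ^ 2 = (M.atom s x).card * ‖d‖ ^ 2 := by
  have hinner (y) : ⟪M.charVec s y, d⟫ ^ 2 = ((∑ i, d i • M.char i) * ∑ j, d j • M.char j) y := by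
    simp [charVec, PiLp.inner_apply, sq]
  have havg (i j : M.rep s) : M.avg s (M.char i * M.char j) = if i = j then 1 else 0 := by
    rw [avg_char_mul_of_mem_rep i.2 j.2]
    simp only [Subtype.coe_inj]
  rw [Finset.sum_congr rfl fun y _ => hinner y, ← M.card_atom_mul_avg,
    EuclideanSpace.real_norm_sq_eq]
  simp only [Finset.sum_mul_sum, smul_mul_smul_comm, map_sum, map_smul, havg, smul_ite, smul_zero,
    Finset.sum_ite_eq, Finset.mem_univ, if_true, Finset.sum_apply, Pi.smul_apply, Pi.one_apply,
    smul_eq_mul, mul_one, sq]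

lemma measurableAt_stoppedCoeff (a : ℕ → ι → ℝ) (s : ℕ) (f : X → ℝ) :
    M.MeasurableAt s (M.stoppedCoeff a s f) := fun x y hxy => by
  ext t j
  exact congrArg (a t j * ·)
    (FiniteFiltration.avgSeq_congr (f := M.coeff s j f) hxy _ (min_le_right t s))

lemma inner_charVec_stoppedCoeff (ha : ∀ ⦃i j⦄, M.freqRel t i j → a t i = a t j)
    (hts : (M.rep t).card ≤ (M.rep s).card) (f : X → ℝ) (x : X) :
    ⟪M.charVec s x, M.stoppedCoeff a s f x t⟫ = M.multiplier t (a t) (M.proj s f) x := by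
  have hinner : ⟪M.charVec s x, M.stoppedCoeff a s f x t⟫ =
      (∑ j ∈ M.rep s, a t j • (M.char j * M.avg (min t s) (M.coeff s j f))) x := by
    rw [← Finset.sum_coe_sort (M.rep s)]
    simp [charVec, stoppedCoeff, PiLp.inner_apply, mul_comm, mul_left_comm]
  rw [hinner]
  refine congrFun ?_ x
  rcases le_total s t with hst | hts'
  · rw [min_eq_right hst, multiplier_proj_of_ge hst ha]
    refine Finset.sum_congr rfl fun j _ => ?_
    rw [FiniteFiltration.avg_of_measurableAt (M.measurableAt_coeff s j f)]
  · rw [min_eq_left hts', multiplier_proj hts', multiplier_apply,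
      ← Finset.eq_of_subset_of_card_le (M.antitone_rep hts') hts]
    refine Finset.sum_congr rfl fun j _ => ?_
    rw [coeff_apply, M.avg_avg hts', ← coeff_apply]

/-- A bound for the size and the variation of `M.stoppedCoeff a s f x`. -/
def stoppedCoeffBound (M : WalshModel X ι) (r V : ℝ) (s : ℕ) (f : X → ℝ) (x : X) :
    EuclideanSpace ℝ (M.rep s) :=
  WithLp.toLp 2 fun j => 2 * (V * variationControl r (M.avgSeq (M.coeff s j f) x) s)

lemma variationLE_stoppedCoeff (hr : 2 < r) (hV : 0 ≤ V) (ha : M.AdmissibleCoeff r n V a) (s : ℕ)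
    (f : X → ℝ) (x : X) :
    VariationLE r n ‖M.stoppedCoeffBound r V s f x‖ (M.stoppedCoeff a s f x) := by
  have hnonneg (j) := variationControl_nonneg (r := r) (M.avgSeq (M.coeff s j f) x) s
  refine VariationLE.euclidean hr.le (fun j => mul_nonneg zero_le_two (mul_nonneg hV (hnonneg j)))
    fun j => ?_
  exact .mul (by linarith) hV (hnonneg j) (ha.variationLE j)
    ((variationLE_variationControl hr _ s).comp_monotone (g := fun t => min t s)
      (fun t t' h => min_le_min_right s h) fun t _ => min_le_right t s)
    (fun t _ => ha.abs_le t j) fun t _ => abs_le_variationControl _ (min_le_right t s)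

lemma norm_stoppedCoeff_le (hV : 0 ≤ V) (ha : M.AdmissibleCoeff r n V a) (s : ℕ) (f : X → ℝ)
    (x : X) (t : ℕ) : ‖M.stoppedCoeff a s f x t‖ ≤ ‖M.stoppedCoeffBound r V s f x‖ := by
  rw [EuclideanSpace.norm_eq, EuclideanSpace.norm_eq]
  gcongr with j
  have hctrl := abs_le_variationControl (r := r) (M.avgSeq (M.coeff s j f) x) (min_le_right t s)
  have hnonneg := variationControl_nonneg (r := r) (M.avgSeq (M.coeff s j f) x) s
  rw [stoppedCoeff, stoppedCoeffBound, Real.norm_eq_abs, abs_mul]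
  calc |a t j| * |M.avgSeq (M.coeff s j f) x (min t s)|
      ≤ V * variationControl r (M.avgSeq (M.coeff s j f) x) s := by
        gcongr
        exact ha.abs_le t j
    _ ≤ 2 * (V * variationControl r (M.avgSeq (M.coeff s j f) x) s) := by
        linarith [mul_nonneg hV hnonneg]
    _ ≤ _ := le_abs_self _

lemma sum_norm_stoppedCoeffBound_sq_le (hr : 2 < r) (V : ℝ) (s : ℕ) (f : X → ℝ) :
    ∑ x, ‖M.stoppedCoeffBound r V s f x‖ ^ 2 ≤
      (2 * V) ^ 2 * lepingleConst r * ∑ x, f x ^ 2 := by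
  have hnorm (x) : ‖M.stoppedCoeffBound r V s f x‖ ^ 2 = (2 * V) ^ 2 *
      ∑ j ∈ M.rep s, variationControl r (M.avgSeq (M.coeff s j f) x) s ^ 2 := by
    rw [EuclideanSpace.real_norm_sq_eq, ← Finset.sum_coe_sort (M.rep s), Finset.mul_sum]
    refine Finset.sum_congr rfl fun j _ => ?_
    simp only [stoppedCoeffBound]
    ring
  rw [Finset.sum_congr rfl fun x _ => hnorm x, ← Finset.mul_sum, Finset.sum_comm, mul_assoc]
  gcongr
  calc ∑ j ∈ M.rep s, ∑ x, variationControl r (M.avgSeq (M.coeff s j f) x) s ^ 2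
      ≤ ∑ j ∈ M.rep s, lepingleConst r * ∑ x, M.coeff s j f x ^ 2 :=
        Finset.sum_le_sum fun j _ => M.sum_variationControl_sq_le hr _ s
    _ ≤ lepingleConst r * ∑ x, f x ^ 2 := by
        rw [← Finset.mul_sum]
        exact mul_le_mul_of_nonneg_left (sum_sum_coeff_sq_le s f) (lepingleConst_pos r).le

lemma sum_atom_inner_stoppedCoeff_sq_le [Nonempty ι] (hr : 2 < r) (hV : 0 ≤ V)
    (ha : M.AdmissibleCoeff r n V a) (hτ : ∀ x, τ x ≤ n) (s : ℕ) (f : X → ℝ) (x : X) :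
    ∑ y ∈ M.atom s x, ⟪M.charVec s y, M.stoppedCoeff a s f y (τ y)⟫ ^ 2 ≤
      (M.atom s x).card * ((entropyConst r * (Fintype.card ι : ℝ) ^ (1 / 2 - 1 / r)) ^ 2 *
        ‖M.stoppedCoeffBound r V s f x‖ ^ 2) := by
  have hcard (y) : ‖M.charVec s y‖ ^ 2 ≤ (Fintype.card ι : ℝ) := by
    rw [norm_charVec_sq]
    exact_mod_cast Finset.card_le_univ _
  have hentropy := norm_toL2_inner_le_entropy hr (norm_nonneg _)
    (variationLE_stoppedCoeff hr hV ha s f x) (fun t _ => norm_stoppedCoeff_le hV ha s f x t)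
    (fun d => (sum_inner_charVec_sq s x d).le) (by exact_mod_cast Fintype.card_pos) hcard hτ
  calc ∑ y ∈ M.atom s x, ⟪M.charVec s y, M.stoppedCoeff a s f y (τ y)⟫ ^ 2
      = ‖toL2 (M.atom s x) fun y => ⟪M.charVec s y, M.stoppedCoeff a s f x (τ y)⟫‖ ^ 2 := by
        rw [norm_toL2_sq]
        refine Finset.sum_congr rfl fun y hy => ?_
        rw [measurableAt_stoppedCoeff a s f (FiniteFiltration.mem_atom.mp hy)]
    _ ≤ _ := pow_le_pow_left₀ (norm_nonneg _) hentropy 2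
    _ = _ := by
        rw [mul_pow, Real.sq_sqrt (Nat.cast_nonneg _)]
        ring

/-- The bound in the maximal inequality `sum_multiplier_proj_sq_le`. -/
def stageBound (ι : Type*) [Fintype ι] (r V : ℝ) : ℝ :=
  2 * entropyConst r * √(lepingleConst r) * (Fintype.card ι : ℝ) ^ (1 / 2 - 1 / r) * V

theorem sum_multiplier_proj_sq_le [Nonempty ι] (hr : 2 < r) (hV : 0 ≤ V)
    (ha : M.AdmissibleCoeff r n V a) (hτ : ∀ x, τ x ≤ n) (s : ℕ) (f : X → ℝ) :
    ∑ x with (M.rep (τ x)).card ≤ (M.rep s).card,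
        M.multiplier (τ x) (a (τ x)) (M.proj s f) x ^ 2 ≤
      stageBound ι r V ^ 2 * ∑ x, f x ^ 2 := by
  set P : ℝ := entropyConst r * (Fintype.card ι : ℝ) ^ (1 / 2 - 1 / r) with hP
  calc ∑ x with (M.rep (τ x)).card ≤ (M.rep s).card,
        M.multiplier (τ x) (a (τ x)) (M.proj s f) x ^ 2
      = ∑ x with (M.rep (τ x)).card ≤ (M.rep s).card,
          ⟪M.charVec s x, M.stoppedCoeff a s f x (τ x)⟫ ^ 2 :=
        Finset.sum_congr rfl fun x hx => by
          rw [inner_charVec_stoppedCoeff (ha.congr _) (Finset.mem_filter_univ x |>.mp hx)]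
    _ ≤ ∑ x, ⟪M.charVec s x, M.stoppedCoeff a s f x (τ x)⟫ ^ 2 :=
        Finset.sum_le_univ_sum_of_nonneg fun _ => sq_nonneg _
    _ ≤ ∑ x, P ^ 2 * ‖M.stoppedCoeffBound r V s f x‖ ^ 2 :=
        M.sum_le_sum_of_sum_atom_le (sum_atom_inner_stoppedCoeff_sq_le hr hV ha hτ s f)
    _ ≤ P ^ 2 * ((2 * V) ^ 2 * lepingleConst r * ∑ x, f x ^ 2) := by
        rw [← Finset.mul_sum]
        gcongr
        exact sum_norm_stoppedCoeffBound_sq_le hr V s f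
    _ = _ := by
        conv_lhs => rw [← Real.sq_sqrt (lepingleConst_pos r).le]
        rw [hP, stageBound]
        ring

end Stage

end WalshModel

section RademacherMenshov

variable {X : Type*} [Fintype X] {Φ : X → ℕ → ℝ} {E : ℕ → ℝ} {A : ℝ} {L : ℕ} {m : X → ℕ}

lemma sum_dyadic_increment_sq_le (hE : Monotone E) (hE0 : 0 ≤ E 0) (hEA : ∀ b, E b ≤ A)
    (hΦ : ∀ ⦃b b'⦄, b ≤ b' → ∑ x with b' ≤ m x, (Φ x b' - Φ x b) ^ 2 ≤ E b' - E b) (l : ℕ) :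
    ∑ x, (Φ x (m x / 2 ^ l * 2 ^ l) - Φ x (m x / 2 ^ (l + 1) * 2 ^ (l + 1))) ^ 2 ≤ A := by
  obtain ⟨K, hK⟩ : ∃ K, ∀ x, m x / 2 ^ (l + 1) < K :=
    ⟨∑ x, m x / 2 ^ (l + 1) + 1, fun x => Nat.lt_succ_of_le
      (Finset.single_le_sum (f := fun x => m x / 2 ^ (l + 1)) (fun _ _ => Nat.zero_le _)
        (Finset.mem_univ x))⟩
  rw [← Finset.sum_fiberwise_of_maps_to (t := Finset.range K)
    (g := fun x => m x / 2 ^ (l + 1)) fun x _ => Finset.mem_range.mpr (hK x)]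
  have hfiber (c : ℕ) : ∑ x with m x / 2 ^ (l + 1) = c,
      (Φ x (m x / 2 ^ l * 2 ^ l) - Φ x (m x / 2 ^ (l + 1) * 2 ^ (l + 1))) ^ 2 ≤
        E ((c + 1) * 2 ^ (l + 1)) - E (c * 2 ^ (l + 1)) := by
    refine le_trans ?_ ((hΦ (b := c * 2 ^ (l + 1)) (b' := (2 * c + 1) * 2 ^ l) ?_).trans
      (sub_le_sub_right (hE ?_) _))
    · rw [Finset.sum_filter, Finset.sum_filter]
      refine Finset.sum_le_sum fun x _ => ?_
      by_cases hx : m x / 2 ^ (l + 1) = c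
      · have hdiv : m x / 2 ^ l / 2 = c := by rw [Nat.div_div_eq_div_mul, ← pow_succ, hx]
        rw [if_pos hx, hx]
        obtain heven | hodd : m x / 2 ^ l = c * 2 ∨ m x / 2 ^ l = 2 * c + 1 := by omega
        · rw [heven, mul_assoc, ← pow_succ', sub_self, zero_pow two_ne_zero]
          split_ifs <;> positivity
        · rw [hodd, if_pos (hodd ▸ Nat.div_mul_le_self (m x) (2 ^ l))]
      · rw [if_neg hx]
        split_ifs <;> positivity
    · rw [pow_succ]; nlinarith [Nat.one_le_two_pow (n := l)]
    · rw [pow_succ]; nlinarith [Nat.one_le_two_pow (n := l)]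
  calc _ ≤ ∑ c ∈ Finset.range K, (E ((c + 1) * 2 ^ (l + 1)) - E (c * 2 ^ (l + 1))) :=
        Finset.sum_le_sum fun c _ => hfiber c
    _ = E (K * 2 ^ (l + 1)) - E 0 := by
        rw [Finset.sum_range_sub fun c => E (c * 2 ^ (l + 1)), zero_mul]
    _ ≤ A := by linarith [hEA (K * 2 ^ (l + 1))]

/-- Rademacher–Menshov: the binary truncations of `m x` lead from `0` to `m x` in `L` steps. -/
theorem norm_toL2_sub_le_of_increments (hA : 0 ≤ A) (hE : Monotone E) (hE0 : 0 ≤ E 0)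
    (hEA : ∀ b, E b ≤ A)
    (hΦ : ∀ ⦃b b'⦄, b ≤ b' → ∑ x with b' ≤ m x, (Φ x b' - Φ x b) ^ 2 ≤ E b' - E b)
    (hm : ∀ x, m x < 2 ^ L) :
    ‖toL2 Finset.univ fun x => Φ x (m x) - Φ x 0‖ ≤ L * √A := by
  have htele : (fun x => Φ x (m x) - Φ x 0) = ∑ l ∈ Finset.range L, fun x =>
      Φ x (m x / 2 ^ l * 2 ^ l) - Φ x (m x / 2 ^ (l + 1) * 2 ^ (l + 1)) := by
    ext x
    rw [Finset.sum_apply, Finset.sum_range_sub' fun l => Φ x (m x / 2 ^ l * 2 ^ l),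
      pow_zero, Nat.div_one, mul_one, Nat.div_eq_of_lt (hm x), zero_mul]
  rw [htele, map_sum]
  refine (norm_sum_le_of_le _ fun l _ => ?_).trans_eq (by
    rw [Finset.sum_const, Finset.card_range, nsmul_eq_mul])
  refine norm_toL2_le (Real.sqrt_nonneg A) ?_
  rw [Real.sq_sqrt hA]
  exact sum_dyadic_increment_sq_le hE hE0 hEA hΦ l

end RademacherMenshov

lemma natLog_two_add_two_le (N : ℕ) : (Nat.log 2 N : ℝ) + 2 ≤ 3 * (1 + Real.log N) := by
  have hlogb := Real.natLog_le_logb N 2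
  have hlog2 := Real.log_two_gt_d9
  have hlog := Real.log_natCast_nonneg N
  rw [Real.logb, Nat.cast_ofNat, le_div_iff₀ (by linarith)] at hlogb
  nlinarith

namespace WalshModel

variable {X ι : Type*} [Fintype X] [Fintype ι] [LinearOrder ι] (M : WalshModel X ι)

/-- The number of frequency classes that have disappeared before time `t`. -/
def merged (t : ℕ) : ℕ := (M.rep 0).card - (M.rep t).card

lemma merged_le_merged_iff {s t : ℕ} :
    M.merged s ≤ M.merged t ↔ (M.rep t).card ≤ (M.rep s).card := by
  have hs := Finset.card_le_card (M.antitone_rep (Nat.zero_le s))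
  have ht := Finset.card_le_card (M.antitone_rep (Nat.zero_le t))
  unfold merged
  omega

lemma merged_le_card (t : ℕ) : M.merged t ≤ Fintype.card ι :=
  (Nat.sub_le _ _).trans (Finset.card_le_univ _)

/-- The last time up to `n` at which at most `b` frequency classes have disappeared. -/
def lastTime (n b : ℕ) : ℕ := Nat.findGreatest (fun t => M.merged t ≤ b) n

lemma merged_lastTime_le (n b : ℕ) : M.merged (M.lastTime n b) ≤ b :=
  Nat.findGreatest_spec (P := fun t => M.merged t ≤ b) (Nat.zero_le n)
    ((Nat.sub_self _).trans_le (Nat.zero_le b))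

lemma monotone_lastTime (n : ℕ) : Monotone (M.lastTime n) := fun _ _ hb =>
  Nat.findGreatest_mono_left (fun _ ht => le_trans ht hb) n

lemma le_lastTime_merged {n t : ℕ} (ht : t ≤ n) : t ≤ M.lastTime n (M.merged t) :=
  Nat.le_findGreatest ht le_rfl

section Maximal

variable {M} {r V : ℝ} {n : ℕ} {a : ℕ → ι → ℝ} {τ : X → ℕ}

lemma sum_multiplier_lastTime_increment_sq_le [Nonempty ι] (hr : 2 < r) (hV : 0 ≤ V)
    (ha : M.AdmissibleCoeff r n V a) (hτ : ∀ x, τ x ≤ n) (f : X → ℝ) {b b' : ℕ} (hb : b ≤ b') :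
    ∑ x with b' ≤ M.merged (τ x),
        (M.multiplier (τ x) (a (τ x)) (M.proj (M.lastTime n b') f) x -
          M.multiplier (τ x) (a (τ x)) (M.proj (M.lastTime n b) f) x) ^ 2 ≤
      stageBound ι r V ^ 2 *
        (∑ x, M.proj (M.lastTime n b') f x ^ 2 - ∑ x, M.proj (M.lastTime n b) f x ^ 2) := by
  have hlast := M.monotone_lastTime n hb
  set s := M.lastTime n b
  set s' := M.lastTime n b'
  have hproj : M.proj s' f - M.proj s f = M.proj s' (M.proj s' f - M.proj s f) := by
    rw [map_sub, proj_proj_of_ge le_rfl, proj_proj_of_ge hlast]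
  rw [← sum_proj_sub_proj_sq hlast]
  refine le_trans ?_ (sum_multiplier_proj_sq_le hr hV ha hτ s' _)
  simp only [← hproj, map_sub, Pi.sub_apply]
  refine Finset.sum_le_sum_of_subset_of_nonneg (fun x hx => ?_) fun _ _ _ => sq_nonneg _
  rw [Finset.mem_filter_univ] at hx ⊢
  exact M.merged_le_merged_iff.mp ((M.merged_lastTime_le n b').trans hx)

lemma norm_multiplier_sub_lastTime_zero_le [Nonempty ι] (hr : 2 < r) (hV : 0 ≤ V)
    (ha : M.AdmissibleCoeff r n V a) (hτ : ∀ x, τ x ≤ n) (f : X → ℝ) :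
    ‖toL2 Finset.univ fun x => M.multiplier (τ x) (a (τ x)) f x -
        M.multiplier (τ x) (a (τ x)) (M.proj (M.lastTime n 0) f) x‖ ≤
      (Nat.log 2 (Fintype.card ι) + 1 : ℕ) * √(stageBound ι r V ^ 2 * ∑ x, f x ^ 2) := by
  have hchain := norm_toL2_sub_le_of_increments
    (Φ := fun x b => M.multiplier (τ x) (a (τ x)) (M.proj (M.lastTime n b) f) x)
    (E := fun b => stageBound ι r V ^ 2 * ∑ x, M.proj (M.lastTime n b) f x ^ 2)
    (A := stageBound ι r V ^ 2 * ∑ x, f x ^ 2) (m := fun x => M.merged (τ x))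
    (L := Nat.log 2 (Fintype.card ι) + 1) (by positivity)
    (fun b b' hb => mul_le_mul_of_nonneg_left
      (sum_proj_sq_le_sum_proj_sq (M.monotone_lastTime n hb) f) (sq_nonneg _))
    (by positivity) (fun b => mul_le_mul_of_nonneg_left (sum_proj_sq_le _ f) (sq_nonneg _))
    (fun b b' hb => (sum_multiplier_lastTime_increment_sq_le hr hV ha hτ f hb).trans_eq
      (mul_sub _ _ _))
    fun x => (M.merged_le_card _).trans_lt (Nat.lt_pow_succ_log_self Nat.one_lt_two _)
  simpa only [multiplier_proj (M.le_lastTime_merged (hτ _))] using hchain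

lemma norm_multiplier_lastTime_zero_le [Nonempty ι] (hr : 2 < r) (hV : 0 ≤ V)
    (ha : M.AdmissibleCoeff r n V a) (hτ : ∀ x, τ x ≤ n) (f : X → ℝ) :
    ‖toL2 Finset.univ fun x => M.multiplier (τ x) (a (τ x)) (M.proj (M.lastTime n 0) f) x‖ ≤
      √(stageBound ι r V ^ 2 * ∑ x, f x ^ 2) := by
  refine norm_toL2_le (Real.sqrt_nonneg _) ?_
  rw [Real.sq_sqrt (by positivity)]
  have hall (x) : (M.rep (τ x)).card ≤ (M.rep (M.lastTime n 0)).card :=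
    M.merged_le_merged_iff.mp ((M.merged_lastTime_le n 0).trans (Nat.zero_le _))
  simpa only [hall, Finset.filter_true] using
    sum_multiplier_proj_sq_le hr hV ha hτ (M.lastTime n 0) f

/-- The bound of the maximal inequality on `L²`. -/
def maximalBound (ι : Type*) [Fintype ι] (r V : ℝ) : ℝ :=
  3 * (1 + Real.log (Fintype.card ι)) * stageBound ι r V

theorem sum_multiplier_sq_le [Nonempty ι] (hr : 2 < r) (hV : 0 ≤ V)
    (ha : M.AdmissibleCoeff r n V a) (hτ : ∀ x, τ x ≤ n) (f : X → ℝ) :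
    ∑ x, M.multiplier (τ x) (a (τ x)) f x ^ 2 ≤ maximalBound ι r V ^ 2 * ∑ x, f x ^ 2 := by
  have hnorm : ‖toL2 Finset.univ fun x => M.multiplier (τ x) (a (τ x)) f x‖ ≤
      3 * (1 + Real.log (Fintype.card ι)) * √(stageBound ι r V ^ 2 * ∑ x, f x ^ 2) := by
    have hadd := norm_add_le_of_le (norm_multiplier_sub_lastTime_zero_le hr hV ha hτ f)
      (norm_multiplier_lastTime_zero_le hr hV ha hτ f)
    rw [← map_add] at hadd
    simp only [Pi.add_def, sub_add_cancel] at hadd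
    refine hadd.trans ?_
    rw [← add_one_mul]
    push_cast
    rw [add_assoc, one_add_one_eq_two]
    gcongr
    exact natLog_two_add_two_le _
  rw [← norm_toL2_sq]
  calc _ ≤ _ := pow_le_pow_left₀ (norm_nonneg _) hnorm 2
    _ = _ := by
      rw [mul_pow, Real.sq_sqrt (by positivity), maximalBound]
      ring

end Maximal

end WalshModel

/-! ### The weak type inequality on `L¹` -/

namespace FiniteFiltration

variable {X : Type*} (F : FiniteFiltration X)

/-- Stopping times: whether `σ x = t` only depends on the cell of `x` at time `t`. -/
def IsStopping (σ : X → ℕ) : Prop := ∀ ⦃x y⦄, F.rel (σ x) x y → σ y = σ x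

variable {F} in
lemma IsStopping.measurableAt_ite {σ : X → ℕ} (hσ : F.IsStopping σ) (t : ℕ) :
    F.MeasurableAt t fun x => if σ x = t then (1 : ℝ) else 0 := fun _ _ hxy =>
  if_congr ⟨fun h => (hσ (h ▸ hxy)).trans h,
    fun h => (hσ (h ▸ (F.rel t).symm hxy)).trans h⟩ rfl rfl

variable [Fintype X]

lemma eq_sum_ite_mul (σ : X → ℕ) (φ : ℕ → X → ℝ) :
    (fun x => φ (σ x) x) =
      ∑ t ∈ Finset.univ.image σ, (fun x => if σ x = t then (1 : ℝ) else 0) * φ t := by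
  ext x
  simp

variable {F} in
lemma IsStopping.sum_avg {σ : X → ℕ} (hσ : F.IsStopping σ) (φ : ℕ → X → ℝ) :
    ∑ x, F.avg (σ x) (φ (σ x)) x = ∑ x, φ (σ x) x := by
  have hsum (ψ : ℕ → X → ℝ) : ∑ x, ψ (σ x) x =
      ∑ t ∈ Finset.univ.image σ, ∑ x, (if σ x = t then (1 : ℝ) else 0) * ψ t x := by
    rw [Finset.sum_comm]
    exact Finset.sum_congr rfl fun x _ => by simp
  rw [hsum fun t => F.avg t (φ t), hsum φ]
  exact Finset.sum_congr rfl fun t _ => sum_mul_avg (hσ.measurableAt_ite t) (φ t)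

/-- Filtrations that refine the trivial partition to the discrete one by time `n`, such that each
cell takes up at least half of the preceding cell. -/
structure IsRegular (n : ℕ) : Prop where
  rel_zero : ∀ x y, F.rel 0 x y
  eq_of_rel : ∀ ⦃x y⦄, F.rel n x y → x = y
  card_atom_le : ∀ t < n, ∀ x, (F.atom t x).card ≤ 2 * (F.atom (t + 1) x).card

/-- The first time at which the average of `f` exceeds `lam`, or `n` if this does not happen
earlier. -/
def stopTime (n : ℕ) (lam : ℝ) (f : X → ℝ) (x : X) : ℕ := sInf {t | t = n ∨ lam < F.avg t f x}

variable (n : ℕ) (lam : ℝ) (f : X → ℝ)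

lemma stopTime_le (x : X) : F.stopTime n lam f x ≤ n := Nat.sInf_le (.inl rfl)

lemma stopTime_spec (x : X) :
    F.stopTime n lam f x = n ∨ lam < F.avg (F.stopTime n lam f x) f x :=
  Nat.sInf_mem (s := {t | t = n ∨ lam < F.avg t f x}) ⟨n, .inl rfl⟩

lemma isStopping_stopTime : F.IsStopping (F.stopTime n lam f) := by
  have hle {x y} (h : F.rel (F.stopTime n lam f x) x y) :
      F.stopTime n lam f y ≤ F.stopTime n lam f x := by
    refine Nat.sInf_le ((F.stopTime_spec n lam f x).imp_right fun hx => ?_)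
    rwa [← F.measurableAt_avg _ f h]
  intro x y h
  exact (hle h).antisymm (hle ((F.rel _).symm (F.antitone_rel (hle h) h)))

variable {F n lam f}

lemma mul_card_stopTime_lt_le (hf : 0 ≤ f) :
    lam * (Finset.univ.filter fun x => F.stopTime n lam f x < n).card ≤ ∑ x, f x := by
  rw [← (F.isStopping_stopTime n lam f).sum_avg fun _ => f, mul_comm, ← nsmul_eq_mul,
    ← Finset.sum_const]
  refine (Finset.sum_le_sum fun x hx => ?_).trans
    (Finset.sum_le_sum_of_subset_of_nonneg (Finset.subset_univ _)
      fun x _ _ => F.avg_nonneg _ hf x)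
  rw [Finset.mem_filter_univ] at hx
  exact ((F.stopTime_spec n lam f x).resolve_left hx.ne).le

lemma IsRegular.avg_succ_le (hF : F.IsRegular n) (hf : 0 ≤ f) {t : ℕ} (ht : t < n) (x : X) :
    F.avg (t + 1) f x ≤ 2 * F.avg t f x := by
  have hpos : (0 : ℝ) < (F.atom (t + 1) x).card := by exact_mod_cast (F.atom_nonempty _ x).card_pos
  have hcard : ((F.atom t x).card : ℝ) ≤ 2 * (F.atom (t + 1) x).card := by
    exact_mod_cast hF.card_atom_le t ht x
  refine le_of_mul_le_mul_left ?_ hpos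
  calc ((F.atom (t + 1) x).card : ℝ) * F.avg (t + 1) f x
      = ∑ y ∈ F.atom (t + 1) x, f y := F.card_atom_mul_avg _ f x
    _ ≤ ∑ y ∈ F.atom t x, f y :=
        Finset.sum_le_sum_of_subset_of_nonneg
          (fun y hy => mem_atom.mpr (F.antitone_rel t.le_succ (mem_atom.mp hy)))
          fun y _ _ => hf y
    _ = (F.atom t x).card * F.avg t f x := (F.card_atom_mul_avg t f x).symm
    _ ≤ 2 * (F.atom (t + 1) x).card * F.avg t f x := by gcongr; exact F.avg_nonneg t hf x
    _ = _ := by ring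

lemma IsRegular.avg_stopTime_le (hF : F.IsRegular n) (hf : 0 ≤ f) {x : X}
    (hx : F.avg 0 f x ≤ lam) : F.avg (F.stopTime n lam f x) f x ≤ 2 * lam := by
  have hlam : 0 ≤ lam := (F.avg_nonneg 0 hf x).trans hx
  cases ht : F.stopTime n lam f x with
  | zero => linarith
  | succ t =>
    have hlt : t < F.stopTime n lam f x := ht.symm ▸ t.lt_succ_self
    have hle : F.avg t f x ≤ lam :=
      le_of_not_gt fun h => Nat.notMem_of_lt_sInf hlt (.inr h)
    have := hF.avg_succ_le hf (hlt.trans_le (F.stopTime_le n lam f x)) x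
    linarith

lemma IsRegular.mul_card_lt_sum (hF : F.IsRegular n) {x : X} (hx : lam < F.avg 0 f x) :
    lam * Fintype.card X < ∑ y, f y := by
  have hatom : F.atom 0 x = Finset.univ :=
    Finset.eq_univ_of_forall fun y => mem_atom.mpr (hF.rel_zero y x)
  have hcard := F.card_atom_mul_avg 0 f x
  rw [hatom, Finset.card_univ] at hcard
  have hpos : (0 : ℝ) < Fintype.card X := by exact_mod_cast Fintype.card_pos_iff.mpr ⟨x⟩
  rw [← hcard, mul_comm]
  gcongr

end FiniteFiltration

lemma sq_mul_card_lt_abs_le {X : Type*} [Fintype X] (g : X → ℝ) {α : ℝ}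
    (hα : 0 ≤ α) :
    α ^ 2 * (Finset.univ.filter fun x => α < |g x|).card ≤ ∑ x, g x ^ 2 := by
  rw [mul_comm, ← nsmul_eq_mul, ← Finset.sum_const]
  refine (Finset.sum_le_sum fun x hx => ?_).trans
    (Finset.sum_le_sum_of_subset_of_nonneg (Finset.subset_univ _) fun x _ _ => sq_nonneg (g x))
  rw [Finset.mem_filter_univ] at hx
  rw [← sq_abs (g x)]
  gcongr

namespace WalshModel

variable {X ι : Type*} [Fintype X] {M : WalshModel X ι} {σ : X → ℕ} {n t : ℕ}

lemma abs_coeff_le (t : ℕ) (j : ι) (f : X → ℝ) : |M.coeff t j f| ≤ M.avg t |f| := by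
  have habs : |M.char j * f| = |f| := by
    ext x
    have hchar : |M.char j x| = 1 := by rw [← Real.sqrt_sq_eq_abs, M.char_sq, Real.sqrt_one]
    rw [Pi.abs_apply, Pi.mul_apply, abs_mul, hchar, one_mul, Pi.abs_apply]
  exact (M.abs_avg_le t (M.char j * f)).trans_eq (congrArg _ habs)

variable [Fintype ι] [LinearOrder ι]

lemma coeff_mul_sub_proj_eq_zero {s : ℕ} {h : X → ℝ} (hh : M.MeasurableAt s h) {x : X}
    (hx : h x = 0) (t : ℕ) (j : ι) (f : X → ℝ) : M.coeff t j (h * (f - M.proj s f)) x = 0 := by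
  rw [coeff_apply, mul_left_comm]
  rcases le_total s t with hst | hts
  · rw [FiniteFiltration.avg_mul (hh.mono hst), Pi.mul_apply, hx, zero_mul]
  · rw [← M.avg_avg hts, FiniteFiltration.avg_mul hh, ← coeff_apply, map_sub, coeff_proj le_rfl,
      sub_self, mul_zero, map_zero, Pi.zero_apply]

lemma coeff_sub_stopped_eq_zero (hσ : M.IsStopping σ) {f : X → ℝ} {x : X}
    (hx : M.proj (σ x) f = f) (t : ℕ) (j : ι) :
    M.coeff t j (f - fun y => M.proj (σ y) f y) x = 0 := by
  have hdecomp : (f - fun y => M.proj (σ y) f y) = ∑ s ∈ Finset.univ.image σ,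
      (fun y => if σ y = s then (1 : ℝ) else 0) * (f - M.proj s f) :=
    FiniteFiltration.eq_sum_ite_mul σ fun s => f - M.proj s f
  rw [hdecomp, map_sum, Finset.sum_apply]
  refine Finset.sum_eq_zero fun s _ => ?_
  by_cases hs : σ x = s
  · rw [← hs, hx, sub_self, mul_zero, map_zero, Pi.zero_apply]
  · exact coeff_mul_sub_proj_eq_zero (hσ.measurableAt_ite s) (if_neg hs) t j f

lemma proj_eq_self [Nonempty ι] (hM : M.IsRegular n) (f : X → ℝ) : M.proj n f = f := by
  obtain ⟨j⟩ := ‹Nonempty ι›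
  have hf : f = M.char j * (M.char j * f) := by rw [← mul_assoc, M.char_mul_self, one_mul]
  rw [hf, proj, multiplier_char_mul (fun _ _ _ => rfl)
    fun x y hxy => congrArg _ (hM.eq_of_rel hxy), Pi.one_apply, one_smul]

lemma avg_proj_sq (t : ℕ) (f : X → ℝ) :
    M.avg t (M.proj t f ^ 2) = ∑ j ∈ M.rep t, M.coeff t j f ^ 2 := by
  have hexpand : M.proj t f ^ 2 =
      ∑ j ∈ M.rep t, M.coeff t j f * (M.char j * M.proj t f) := by
    rw [sq]
    nth_rw 1 [proj_apply]
    rw [Finset.sum_mul]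
    exact Finset.sum_congr rfl fun j _ => by ring
  rw [hexpand, map_sum]
  refine Finset.sum_congr rfl fun j _ => ?_
  rw [FiniteFiltration.avg_mul (M.measurableAt_coeff t j f), ← coeff_apply, coeff_proj le_rfl, sq]

lemma avg_proj_sq_le (t : ℕ) (f : X → ℝ) (x : X) :
    M.avg t (M.proj t f ^ 2) x ≤ Fintype.card ι * M.avg t |f| x ^ 2 := by
  rw [avg_proj_sq, Finset.sum_apply]
  calc ∑ j ∈ M.rep t, M.coeff t j f x ^ 2
      ≤ ∑ _j ∈ M.rep t, M.avg t |f| x ^ 2 :=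
        Finset.sum_le_sum fun j _ => sq_le_sq.mpr ((abs_coeff_le t j f x).trans (le_abs_self _))
    _ ≤ Fintype.card ι * M.avg t |f| x ^ 2 := by
        rw [Finset.sum_const, nsmul_eq_mul]
        gcongr
        exact Finset.card_le_univ _

lemma sum_proj_stopped_sq_le (hσ : M.IsStopping σ) {f : X → ℝ} {B : ℝ}
    (hB : ∀ x, M.avg (σ x) |f| x ≤ B) :
    ∑ x, M.proj (σ x) f x ^ 2 ≤ Fintype.card ι * B * ∑ x, |f x| := by
  calc ∑ x, M.proj (σ x) f x ^ 2
      = ∑ x, M.avg (σ x) (M.proj (σ x) f ^ 2) x := (hσ.sum_avg fun t => M.proj t f ^ 2).symm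
    _ ≤ ∑ x, Fintype.card ι * B * M.avg (σ x) |f| x := by
        refine Finset.sum_le_sum fun x _ => (avg_proj_sq_le (σ x) f x).trans ?_
        rw [sq, mul_assoc]
        gcongr
        · exact M.avg_nonneg _ (abs_nonneg f) x
        · exact hB x
    _ = Fintype.card ι * B * ∑ x, |f x| := by
        rw [← Finset.mul_sum, hσ.sum_avg fun _ => |f|]
        rfl

variable (M) in
/-- The linearization of the maximal operator: the multiplier at time `τ x`, evaluated at `x`. -/
def linearized (τ : X → ℕ) (a : ℕ → ι → ℝ) : (X → ℝ) →ₗ[ℝ] X → ℝ :=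
  LinearMap.pi fun x => LinearMap.proj x ∘ₗ M.multiplier (τ x) (a (τ x))

variable {τ : X → ℕ} {a : ℕ → ι → ℝ} {A : ℝ}

lemma linearized_apply (f : X → ℝ) (x : X) :
    M.linearized τ a f x = M.multiplier (τ x) (a (τ x)) f x := rfl

lemma linearized_eq_stopped (hσ : M.IsStopping σ) {f : X → ℝ} {x : X}
    (hx : M.proj (σ x) f = f) :
    M.linearized τ a f x = M.linearized τ a (fun y => M.proj (σ y) f y) x := by
  rw [← sub_eq_zero, ← Pi.sub_apply, ← map_sub, linearized_apply, multiplier_apply,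
    Finset.sum_apply]
  refine Finset.sum_eq_zero fun j _ => ?_
  rw [Pi.smul_apply, Pi.mul_apply, coeff_sub_stopped_eq_zero hσ hx, mul_zero, smul_zero]

lemma mul_card_lt_linearized_le_of_avg_le [Nonempty ι] (hM : M.IsRegular n)
    (hL2 : ∀ g, ∑ x, M.linearized τ a g x ^ 2 ≤ A ^ 2 * ∑ x, g x ^ 2) {f : X → ℝ} {lam α : ℝ}
    (hlam : ∀ x, M.avg 0 |f| x ≤ lam) (hlam0 : 0 < lam) (hα : 0 < α) :
    ((Finset.univ.filter fun x => α < |M.linearized τ a f x|).card : ℝ) ≤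
      (1 / lam + 2 * A ^ 2 * Fintype.card ι * lam / α ^ 2) * ∑ x, |f x| := by
  set σ := M.stopTime n lam |f|
  set g : X → ℝ := fun y => M.proj (σ y) f y
  have hσ : M.IsStopping σ := M.isStopping_stopTime n lam |f|
  have hsub : (Finset.univ.filter fun x => α < |M.linearized τ a f x|) ⊆
      (Finset.univ.filter fun x => σ x < n) ∪
        Finset.univ.filter fun x => α < |M.linearized τ a g x| := fun x hx => by
    rw [Finset.mem_union, Finset.mem_filter_univ, Finset.mem_filter_univ]
    refine or_iff_not_imp_left.mpr fun hxn => ?_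
    have hxn : σ x = n := (M.stopTime_le n lam |f| x).antisymm (not_lt.mp hxn)
    rw [← linearized_eq_stopped hσ (by rw [hxn, proj_eq_self hM])]
    exact (Finset.mem_filter_univ x).mp hx
  have hbad : ((Finset.univ.filter fun x => σ x < n).card : ℝ) ≤ 1 / lam * ∑ x, |f x| := by
    rw [one_div_mul_eq_div, le_div_iff₀' hlam0]
    exact FiniteFiltration.mul_card_stopTime_lt_le (abs_nonneg f)
  have hgood : ((Finset.univ.filter fun x => α < |M.linearized τ a g x|).card : ℝ) ≤
      2 * A ^ 2 * Fintype.card ι * lam / α ^ 2 * ∑ x, |f x| := by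
    rw [div_mul_eq_mul_div, le_div_iff₀' (by positivity)]
    calc _ ≤ _ := sq_mul_card_lt_abs_le _ hα.le
      _ ≤ A ^ 2 * (Fintype.card ι * (2 * lam) * ∑ x, |f x|) := (hL2 g).trans <| by
        gcongr
        exact sum_proj_stopped_sq_le hσ fun x => hM.avg_stopTime_le (abs_nonneg f) (hlam x)
      _ = _ := by ring
  refine (Nat.cast_le.mpr ((Finset.card_le_card hsub).trans (Finset.card_union_le _ _))).trans ?_
  rw [Nat.cast_add, add_mul]
  exact add_le_add hbad hgood

theorem mul_card_lt_linearized_le [Nonempty ι] (hM : M.IsRegular n) (hA : 0 < A)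
    (hL2 : ∀ g, ∑ x, M.linearized τ a g x ^ 2 ≤ A ^ 2 * ∑ x, g x ^ 2) (f : X → ℝ) {α : ℝ}
    (hα : 0 < α) :
    α * (Finset.univ.filter fun x => α < |M.linearized τ a f x|).card ≤
      3 * A * √(Fintype.card ι) * ∑ x, |f x| := by
  have hN : (0 : ℝ) < Fintype.card ι := by exact_mod_cast Fintype.card_pos
  set N : ℝ := (Fintype.card ι : ℝ)
  obtain ⟨lam, hlam0, hlam⟩ : ∃ lam : ℝ, 0 < lam ∧ α = A * √N * lam :=
    ⟨α / (A * √N), by positivity, by field_simp⟩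
  by_cases hsmall : ∀ x, M.avg 0 |f| x ≤ lam
  · calc _ ≤ α * ((1 / lam + 2 * A ^ 2 * N * lam / α ^ 2) * ∑ x, |f x|) := by
          gcongr
          exact mul_card_lt_linearized_le_of_avg_le hM hL2 hsmall hlam0 hα
      _ = _ := by
          rw [hlam, mul_pow, mul_pow, Real.sq_sqrt hN.le]
          field_simp
          ring
  · push Not at hsmall
    obtain ⟨x, hx⟩ := hsmall
    calc _ ≤ A * √N * lam * Fintype.card X := by rw [hlam]; gcongr; exact Finset.card_le_univ _
      _ = A * √N * (lam * Fintype.card X) := mul_assoc _ _ _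
      _ ≤ A * √N * ∑ x, |f x| := by gcongr; exact (hM.mul_card_lt_sum hx).le
      _ ≤ _ := by
          have : 0 ≤ ∑ x, |f x| := Finset.sum_nonneg fun x _ => abs_nonneg _
          gcongr
          linarith

end WalshModel

/-! ### Marcinkiewicz interpolation -/

lemma lintegral_Ioo_zero_rpow {p y : ℝ} (hp : 0 < p) (hy : 0 ≤ y) :
    ∫⁻ α in Ioo 0 y, ENNReal.ofReal (α ^ (p - 1)) = ENNReal.ofReal (y ^ p / p) := by
  rcases hy.eq_or_lt with rfl | hy
  · simp [Real.zero_rpow hp.ne']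
  rw [← ofReal_integral_eq_lintegral_ofReal
    ((intervalIntegral.integrableOn_Ioo_rpow_iff hy).mpr (by linarith))
    (ae_restrict_of_forall_mem measurableSet_Ioo fun α hα => Real.rpow_nonneg hα.1.le _),
    ← integral_Ioc_eq_integral_Ioo, ← intervalIntegral.integral_of_le hy.le,
    integral_rpow (.inl (by linarith)), sub_add_cancel, Real.zero_rpow hp.ne', sub_zero]

lemma lintegral_Ici_rpow {p y : ℝ} (hp : p < 0) (hy : 0 < y) :
    ∫⁻ α in Ici y, ENNReal.ofReal (α ^ (p - 1)) = ENNReal.ofReal (y ^ p / -p) := by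
  rw [setLIntegral_congr Ioi_ae_eq_Ici.symm, ← ofReal_integral_eq_lintegral_ofReal
    (integrableOn_Ioi_rpow_of_lt (by linarith) hy)
    (ae_restrict_of_forall_mem measurableSet_Ioi fun α hα => Real.rpow_nonneg (hy.trans hα).le _),
    integral_Ioi_rpow_of_lt (by linarith) hy, sub_add_cancel, div_neg, neg_div]

section Marcinkiewicz

variable {X Y : Type*} [Fintype X] [Fintype Y] {W B θ q : ℝ}

/-- The contribution of a value of modulus `y` to the bound for the level set at height `α`: values
above `α / θ` are estimated by the weak type inequality, values below it in `L²`. -/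
def levelBound (W B θ y α : ℝ) : ℝ := if α < θ * y then 2 * W * y / α else 4 * B * y ^ 2 / α ^ 2

lemma card_lt_abs_le_sum_levelBound {T : (X → ℝ) → Y → ℝ}
    (hT : ∀ f g y, |T (f + g) y| ≤ |T f y| + |T g y|)
    (hweak : ∀ f α, 0 < α →
      α * (Finset.univ.filter fun y => α < |T f y|).card ≤ W * ∑ x, |f x|)
    (hL2 : ∀ f, ∑ y, T f y ^ 2 ≤ B * ∑ x, f x ^ 2) (f : X → ℝ) {α : ℝ} (hα : 0 < α) :
    ((Finset.univ.filter fun y => α < |T f y|).card : ℝ) ≤ ∑ x, levelBound W B θ |f x| α := by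
  set large : X → ℝ := fun x => if α < θ * |f x| then f x else 0
  set small : X → ℝ := fun x => if α < θ * |f x| then 0 else f x
  have hsplit : large + small = f := by
    ext x
    simp only [large, small, Pi.add_apply]
    split_ifs <;> simp
  have hsub : (Finset.univ.filter fun y => α < |T f y|) ⊆
      (Finset.univ.filter fun y => α / 2 < |T large y|) ∪
        Finset.univ.filter fun y => α / 2 < |T small y| := fun y hy => by
    rw [Finset.mem_union, Finset.mem_filter_univ, Finset.mem_filter_univ]
    rw [Finset.mem_filter_univ, ← hsplit] at hy
    by_contra! h
    linarith [hT large small y]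
  have hlarge := hweak large (α / 2) (half_pos hα)
  have hsmall := (sq_mul_card_lt_abs_le (T small) (half_pos hα).le).trans (hL2 small)
  rw [← le_div_iff₀' (by positivity)] at hlarge hsmall
  have hcard := Nat.cast_le (α := ℝ).mpr
    ((Finset.card_le_card hsub).trans (Finset.card_union_le _ _))
  rw [Nat.cast_add] at hcard
  refine (hcard.trans (add_le_add hlarge hsmall)).trans_eq ?_
  rw [Finset.mul_sum, Finset.mul_sum, Finset.sum_div, Finset.sum_div, ← Finset.sum_add_distrib]
  refine Finset.sum_congr rfl fun x _ => ?_
  simp only [large, small, levelBound]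
  split_ifs
  · ring
  · rw [abs_zero, sq_abs]
    ring

lemma levelBound_nonneg (hW : 0 ≤ W) (hB : 0 ≤ B) {y α : ℝ} (hy : 0 ≤ y) (hα : 0 ≤ α) :
    0 ≤ levelBound W B θ y α := by
  unfold levelBound
  split_ifs <;> positivity

lemma measurable_levelBound (W B θ y : ℝ) : Measurable (levelBound W B θ y) :=
  Measurable.ite measurableSet_Iio (by fun_prop) (by fun_prop)

/-- The constant of the Marcinkiewicz interpolation theorem between the weak type `(1, 1)` with
constant `W` and `L²` with constant `B` for the squared norms. -/
def marcinkiewiczConst (q W B θ : ℝ) : ℝ :=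
  2 * W * θ ^ (q - 1) / (q - 1) + 4 * B * θ ^ (q - 2) / (2 - q)

lemma lintegral_Ioo_levelBound_mul_rpow (hq : 1 < q) (hW : 0 ≤ W) (hθ : 0 < θ) {y : ℝ}
    (hy : 0 < y) : ∫⁻ α in Ioo 0 (θ * y),
      ENNReal.ofReal (levelBound W B θ y α) * ENNReal.ofReal (α ^ (q - 1)) =
        ENNReal.ofReal (2 * W * θ ^ (q - 1) / (q - 1) * y ^ q) := by
  calc _ = ∫⁻ α in Ioo 0 (θ * y),
        ENNReal.ofReal (2 * W * y) * ENNReal.ofReal (α ^ (q - 1 - 1)) := by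
        refine setLIntegral_congr_fun measurableSet_Ioo fun α hα => ?_
        simp only [levelBound, if_pos hα.2]
        rw [← ENNReal.ofReal_mul' (Real.rpow_nonneg hα.1.le _),
          ← ENNReal.ofReal_mul (by positivity), Real.rpow_sub_one hα.1.ne' (q - 1),
          div_mul_eq_mul_div, mul_div_assoc]
    _ = _ := by
      rw [lintegral_const_mul _ (by fun_prop),
        lintegral_Ioo_zero_rpow (sub_pos.mpr hq) (by positivity),
        ← ENNReal.ofReal_mul (by positivity), Real.mul_rpow hθ.le hy.le,
        Real.rpow_sub_one hy.ne' q]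
      congr 1
      field_simp

lemma lintegral_Ici_levelBound_mul_rpow (hq : q < 2) (hB : 0 ≤ B) (hθ : 0 < θ) {y : ℝ}
    (hy : 0 < y) : ∫⁻ α in Ici (θ * y),
      ENNReal.ofReal (levelBound W B θ y α) * ENNReal.ofReal (α ^ (q - 1)) =
        ENNReal.ofReal (4 * B * θ ^ (q - 2) / (2 - q) * y ^ q) := by
  have hθy : 0 < θ * y := by positivity
  calc _ = ∫⁻ α in Ici (θ * y),
        ENNReal.ofReal (4 * B * y ^ 2) * ENNReal.ofReal (α ^ (q - 2 - 1)) := by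
        refine setLIntegral_congr_fun measurableSet_Ici fun α hα => ?_
        have hα0 : 0 < α := hθy.trans_le hα
        simp only [levelBound, if_neg (not_lt.mpr (mem_Ici.mp hα))]
        rw [← ENNReal.ofReal_mul' (Real.rpow_nonneg hα0.le _),
          ← ENNReal.ofReal_mul (by positivity), sub_right_comm, Real.rpow_sub hα0 (q - 1) 2,
          Real.rpow_two, div_mul_eq_mul_div, mul_div_assoc]
    _ = _ := by
      rw [lintegral_const_mul _ (by fun_prop), lintegral_Ici_rpow (sub_neg.mpr hq) hθy,
        ← ENNReal.ofReal_mul (by positivity), Real.mul_rpow hθ.le hy.le,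
        Real.rpow_sub hy q 2, Real.rpow_two, neg_sub]
      congr 1
      field_simp

lemma lintegral_levelBound_mul_rpow (hq1 : 1 < q) (hq2 : q < 2) (hW : 0 ≤ W) (hB : 0 ≤ B)
    (hθ : 0 < θ) {y : ℝ} (hy : 0 ≤ y) :
    ∫⁻ α in Ioi 0, ENNReal.ofReal (levelBound W B θ y α) * ENNReal.ofReal (α ^ (q - 1)) =
      ENNReal.ofReal (marcinkiewiczConst q W B θ * y ^ q) := by
  rcases hy.eq_or_lt with rfl | hy
  · rw [Real.zero_rpow (by linarith), mul_zero, ENNReal.ofReal_zero]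
    simp [levelBound]
  have hθy : 0 < θ * y := by positivity
  have : 0 ≤ 2 * W * θ ^ (q - 1) / (q - 1) := div_nonneg (by positivity) (by linarith)
  have : 0 ≤ 4 * B * θ ^ (q - 2) / (2 - q) := div_nonneg (by positivity) (by linarith)
  rw [← Ioo_union_Ici_eq_Ioi hθy, lintegral_union measurableSet_Ici
    (Set.disjoint_left.mpr fun α h h' => (not_lt.mpr h') h.2),
    lintegral_Ioo_levelBound_mul_rpow hq1 hW hθ hy, lintegral_Ici_levelBound_mul_rpow hq2 hB hθ hy,
    ← ENNReal.ofReal_add (by positivity) (by positivity), ← add_mul, marcinkiewiczConst]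

theorem sum_abs_rpow_le_of_weak_of_sq {T : (X → ℝ) → Y → ℝ} (hq1 : 1 < q) (hq2 : q < 2)
    (hW : 0 ≤ W) (hB : 0 ≤ B) (hθ : 0 < θ)
    (hT : ∀ f g y, |T (f + g) y| ≤ |T f y| + |T g y|)
    (hweak : ∀ f α, 0 < α →
      α * (Finset.univ.filter fun y => α < |T f y|).card ≤ W * ∑ x, |f x|)
    (hL2 : ∀ f, ∑ y, T f y ^ 2 ≤ B * ∑ x, f x ^ 2) (f : X → ℝ) :
    ∑ y, ENNReal.ofReal (|T f y| ^ q) ≤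
      ENNReal.ofReal (q * marcinkiewiczConst q W B θ) * ∑ x, ENNReal.ofReal (|f x| ^ q) := by
  let _ : MeasurableSpace Y := ⊤
  have hlayer := lintegral_rpow_eq_lintegral_meas_lt_mul (μ := Measure.count)
    (f := fun y => |T f y|) (ae_of_all _ fun y => abs_nonneg _)
    measurable_from_top.aemeasurable (p := q) (by linarith)
  rw [lintegral_count, tsum_fintype] at hlayer
  have hC : 0 ≤ marcinkiewiczConst q W B θ :=
    add_nonneg (div_nonneg (by positivity) (by linarith)) (div_nonneg (by positivity) (by linarith))
  rw [hlayer, ENNReal.ofReal_mul (by linarith), mul_assoc]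
  gcongr
  calc _ ≤ ∫⁻ α in Ioi 0, ∑ x, ENNReal.ofReal (levelBound W B θ |f x| α) *
        ENNReal.ofReal (α ^ (q - 1)) := by
        refine setLIntegral_mono' measurableSet_Ioi fun α hα => ?_
        have hlevel := ENNReal.ofReal_le_ofReal
          (card_lt_abs_le_sum_levelBound (θ := θ) hT hweak hL2 f hα)
        rw [ENNReal.ofReal_natCast, ← Measure.count_apply_finset, Finset.coe_filter_univ,
          ENNReal.ofReal_sum_of_nonneg fun x _ => levelBound_nonneg hW hB (abs_nonneg _) hα.le]
          at hlevel
        rw [← Finset.sum_mul]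
        gcongr
    _ = ∑ x, ENNReal.ofReal (marcinkiewiczConst q W B θ * |f x| ^ q) := by
        rw [lintegral_finsetSum _ fun x _ => by
          have := measurable_levelBound W B θ |f x|
          fun_prop]
        exact Finset.sum_congr rfl fun x _ =>
          lintegral_levelBound_mul_rpow hq1 hq2 hW hB hθ (abs_nonneg _)
    _ = _ := by simp only [ENNReal.ofReal_mul hC, ← Finset.mul_sum]

end Marcinkiewicz

/-! ### The maximal inequality on `L^q` -/

/-- The part of the constant of the maximal inequality that is due to interpolation. -/
def interpolationConst (q : ℝ) : ℝ := q * (6 / (q - 1) + 4 / (2 - q))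

lemma interpolationConst_pos {q : ℝ} (hq1 : 1 < q) (hq2 : q < 2) : 0 < interpolationConst q :=
  mul_pos (by linarith) (add_pos (div_pos (by norm_num) (by linarith))
    (div_pos (by norm_num) (by linarith)))

lemma mul_marcinkiewiczConst_eq {q A N : ℝ} (hA : 0 < A) (hN : 0 < N) :
    q * marcinkiewiczConst q (3 * A * √N) (A ^ 2) (A / √N) =
      interpolationConst q * (A ^ q * N ^ (1 - q / 2)) := by
  have hhigh : A ^ 2 * (A / √N) ^ (q - 2) = A ^ q * N ^ (1 - q / 2) := by
    rw [Real.div_rpow hA.le (Real.sqrt_nonneg N), Real.sqrt_eq_rpow, ← Real.rpow_mul hN.le,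
      Real.rpow_sub hA, Real.rpow_two, show 1 - q / 2 = -(1 / 2 * (q - 2)) by ring,
      Real.rpow_neg hN.le]
    field_simp
  have hlow : A * √N * (A / √N) ^ (q - 1) = A ^ 2 * (A / √N) ^ (q - 2) := by
    rw [show q - 1 = q - 2 + 1 by ring, Real.rpow_add_one (by positivity)]
    field_simp
  rw [← hhigh, marcinkiewiczConst, interpolationConst]
  linear_combination (6 * q / (q - 1)) * hlow

/-- The constant of the maximal inequality on `L^q`. -/
def maximalConst (q r : ℝ) : ℝ :=
  interpolationConst q ^ (1 / q) * (6 * entropyConst r * √(lepingleConst r))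

lemma maximalConst_pos {q r : ℝ} (hq1 : 1 < q) (hq2 : q < 2) (hr : 2 < r) :
    0 < maximalConst q r := by
  have := interpolationConst_pos hq1 hq2
  have := entropyConst_pos hr
  have := lepingleConst_pos r
  unfold maximalConst
  positivity

namespace WalshModel

variable {X ι : Type*} [Fintype X] [Fintype ι] {M : WalshModel X ι} {q r V : ℝ} {n : ℕ}
  {a : ℕ → ι → ℝ} {τ : X → ℕ}

variable (ι) in
/-- The bound of the maximal inequality on `L^q`. -/
def maximalBoundLq (q r V : ℝ) : ℝ :=
  maximalConst q r * (1 + Real.log (Fintype.card ι)) * (Fintype.card ι : ℝ) ^ (1 / q - 1 / r) * V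

lemma maximalBound_pos [Nonempty ι] (hr : 2 < r) (hV : 0 < V) : 0 < maximalBound ι r V := by
  have : 0 ≤ Real.log (Fintype.card ι) := Real.log_natCast_nonneg _
  have := entropyConst_pos hr
  have := lepingleConst_pos r
  unfold maximalBound stageBound
  positivity

lemma interpolationConst_mul_maximalBound_rpow [Nonempty ι] (hq1 : 1 < q) (hq2 : q < 2)
    (hr : 2 < r) (hV : 0 < V) :
    interpolationConst q * (maximalBound ι r V ^ q * (Fintype.card ι : ℝ) ^ (1 - q / 2)) =
      maximalBoundLq ι q r V ^ q := by
  have hN : (0 : ℝ) < Fintype.card ι := by exact_mod_cast Fintype.card_pos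
  have hK := interpolationConst_pos hq1 hq2
  have hA := maximalBound_pos (ι := ι) hr hV
  have hq0 : q ≠ 0 := by linarith
  have hsplit : maximalBoundLq ι q r V = interpolationConst q ^ (1 / q) *
      (maximalBound ι r V * (Fintype.card ι : ℝ) ^ (1 / q - 1 / 2)) := by
    rw [maximalBoundLq, maximalConst, maximalBound, stageBound,
      show 1 / q - 1 / r = (1 / 2 - 1 / r) + (1 / q - 1 / 2) by ring, Real.rpow_add hN]
    ring
  rw [hsplit, Real.mul_rpow (by positivity) (by positivity), Real.mul_rpow hA.le (by positivity),
    ← Real.rpow_mul hK.le, ← Real.rpow_mul hN.le, one_div_mul_cancel hq0, Real.rpow_one,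
    show (1 / q - 1 / 2) * q = 1 - q / 2 by field_simp]

variable [LinearOrder ι]

lemma linearized_eq_zero_of_admissibleCoeff_zero (ha : M.AdmissibleCoeff r n 0 a) (f : X → ℝ) :
    M.linearized τ a f = 0 := by
  ext x
  rw [linearized_apply, multiplier_apply, Finset.sum_apply]
  exact Finset.sum_eq_zero fun j _ => by
    rw [abs_nonpos_iff.mp (ha.abs_le (τ x) j), zero_smul, Pi.zero_apply]

variable [Nonempty ι]

theorem sum_enorm_linearized_rpow_le (hq1 : 1 < q) (hq2 : q < 2) (hr : 2 < r) (hV : 0 ≤ V)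
    (hM : M.IsRegular n) (ha : M.AdmissibleCoeff r n V a) (hτ : ∀ x, τ x ≤ n) (f : X → ℝ) :
    ∑ x, ‖M.linearized τ a f x‖ₑ ^ q ≤
      ENNReal.ofReal (maximalBoundLq ι q r V) ^ q * ∑ x, ‖f x‖ₑ ^ q := by
  have hq0 : 0 < q := by linarith
  rcases hV.eq_or_lt with rfl | hV
  · simp [linearized_eq_zero_of_admissibleCoeff_zero ha, hq0]
  have hN : (0 : ℝ) < Fintype.card ι := by exact_mod_cast Fintype.card_pos
  have hA := maximalBound_pos (ι := ι) hr hV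
  have hL2 (g : X → ℝ) :
      ∑ x, M.linearized τ a g x ^ 2 ≤ maximalBound ι r V ^ 2 * ∑ x, g x ^ 2 :=
    sum_multiplier_sq_le hr hV.le ha hτ g
  have hbound := sum_abs_rpow_le_of_weak_of_sq (T := M.linearized τ a)
    (W := 3 * maximalBound ι r V * √(Fintype.card ι)) (θ := maximalBound ι r V / √(Fintype.card ι))
    hq1 hq2 (by positivity) (by positivity) (by positivity)
    (fun f g x => by rw [map_add]; exact abs_add_le _ _)
    (fun g _ hα => mul_card_lt_linearized_le hM hA hL2 g hα) hL2 f
  rw [mul_marcinkiewiczConst_eq hA hN, interpolationConst_mul_maximalBound_rpow hq1 hq2 hr hV]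
    at hbound
  have hLq : 0 ≤ maximalBoundLq ι q r V := by
    have := maximalConst_pos hq1 hq2 hr
    have : 0 ≤ Real.log (Fintype.card ι) := Real.log_natCast_nonneg _
    unfold maximalBoundLq
    positivity
  simpa only [← ENNReal.ofReal_rpow_of_nonneg (abs_nonneg _) hq0.le,
    ← ENNReal.ofReal_rpow_of_nonneg hLq hq0.le, ← Real.enorm_eq_ofReal_abs] using hbound

theorem sum_iSup_enorm_multiplier_rpow_le (hq1 : 1 < q) (hq2 : q < 2) (hr : 2 < r) (hV : 0 ≤ V)
    (hM : M.IsRegular n) (ha : M.AdmissibleCoeff r n V a) (f : X → ℝ) :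
    ∑ x, (⨆ t ≤ n, ‖M.multiplier t (a t) f x‖ₑ) ^ q ≤
      ENNReal.ofReal (maximalBoundLq ι q r V) ^ q * ∑ x, ‖f x‖ₑ ^ q := by
  have hmax (x) : ∃ t ∈ Finset.range (n + 1), ∀ s ∈ Finset.range (n + 1),
      ‖M.multiplier s (a s) f x‖ₑ ≤ ‖M.multiplier t (a t) f x‖ₑ :=
    Finset.exists_max_image _ _ Finset.nonempty_range_add_one
  choose τ hτ hle using hmax
  simp only [Finset.mem_range, Nat.lt_succ_iff] at hτ hle
  refine (Finset.sum_le_sum fun x _ => ?_).trans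
    (sum_enorm_linearized_rpow_le hq1 hq2 hr hV hM ha hτ f)
  exact ENNReal.rpow_le_rpow (iSup₂_le (hle x)) (by linarith)

end WalshModel

/-! ### Dyadic intervals -/

/-- The index `n` of the dyadic interval `[n 2 ^ k, (n + 1) 2 ^ k)` containing `x`. -/
def dyadicIndex (k : ℤ) (x : ℝ) : ℤ := ⌊x / 2 ^ k⌋

/-- The dyadic interval `[n 2 ^ k, (n + 1) 2 ^ k)`, as a fiber of the index function. -/
def dyadicCell (k n : ℤ) : Set ℝ := {x | dyadicIndex k x = n}

section DyadicIndex

variable {k l m n : ℤ} {x y : ℝ}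

lemma mem_dyadicCell : x ∈ dyadicCell k n ↔ dyadicIndex k x = n := Iff.rfl

lemma dyadicIndex_add_natCast (k : ℤ) (j : ℕ) (x : ℝ) :
    dyadicIndex (k + j) x = dyadicIndex k x / 2 ^ j := by
  have h : x / 2 ^ (k + j) = x / 2 ^ k / (2 ^ j : ℕ) := by
    rw [zpow_add₀ two_ne_zero, zpow_natCast, div_div, Nat.cast_pow, Nat.cast_ofNat]
  rw [dyadicIndex, h, Int.floor_div_natCast, Nat.cast_pow, Nat.cast_ofNat, dyadicIndex]

lemma dyadicIndex_add_one (k : ℤ) (x : ℝ) : dyadicIndex (k + 1) x = dyadicIndex k x / 2 := by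
  simpa using dyadicIndex_add_natCast k 1 x

lemma dyadicIndex_eq_of_le (hkl : k ≤ l) (h : dyadicIndex k x = dyadicIndex k y) :
    dyadicIndex l x = dyadicIndex l y := by
  obtain ⟨j, rfl⟩ := Int.le.dest hkl
  rw [dyadicIndex_add_natCast, dyadicIndex_add_natCast, h]

lemma dyadicCell_eq_Ico (k n : ℤ) :
    dyadicCell k n = Ico ((n : ℝ) * 2 ^ k) (((n : ℝ) + 1) * 2 ^ k) := by
  ext x
  have h2 : (0 : ℝ) < 2 ^ k := by positivity
  rw [mem_dyadicCell, dyadicIndex, Int.floor_eq_iff, le_div_iff₀ h2, div_lt_iff₀ h2, mem_Ico]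

lemma mul_zpow_mem_dyadicCell (k n : ℤ) : (n : ℝ) * 2 ^ k ∈ dyadicCell k n := by
  rw [mem_dyadicCell, dyadicIndex, mul_div_cancel_right₀ _ (by positivity), Int.floor_intCast]

lemma dyadicIndex_zero_right (k : ℤ) : dyadicIndex k 0 = 0 := by simp [dyadicIndex]

lemma dyadicIndex_eq_zero (hx : 0 ≤ x) (hk : x < 2 ^ k) : dyadicIndex k x = 0 := by
  rw [← mem_dyadicCell, dyadicCell_eq_Ico]
  simpa using ⟨hx, hk⟩

lemma eventually_dyadicIndex_eq_zero (hx : 0 ≤ x) : ∀ᶠ k in atTop, dyadicIndex k x = 0 := by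
  obtain ⟨L, hL⟩ := pow_unbounded_of_one_lt x one_lt_two
  have h0 : dyadicIndex L x = 0 := dyadicIndex_eq_zero hx (by rwa [zpow_natCast])
  filter_upwards [eventually_ge_atTop (L : ℤ)] with k hk
  rw [dyadicIndex_eq_of_le hk (h0.trans (dyadicIndex_zero_right _).symm), dyadicIndex_zero_right]

lemma dyadicIndex_nonneg (k : ℤ) (hx : 0 ≤ x) : 0 ≤ dyadicIndex k x :=
  Int.floor_nonneg.mpr (by positivity)

lemma nonneg_of_mem_dyadicCell (hn : 0 ≤ n) (hx : x ∈ dyadicCell k n) : 0 ≤ x := by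
  rw [dyadicCell_eq_Ico] at hx
  exact le_trans (by positivity) hx.1

lemma measurable_dyadicIndex (k : ℤ) : Measurable (dyadicIndex k) :=
  Int.measurable_floor.comp (measurable_id.div_const _)

lemma measurableSet_dyadicCell (k n : ℤ) : MeasurableSet (dyadicCell k n) :=
  measurable_dyadicIndex k (measurableSet_singleton n)

lemma volume_dyadicCell (k n : ℤ) : volume (dyadicCell k n) = ENNReal.ofReal (2 ^ k) := by
  rw [dyadicCell_eq_Ico, Real.volume_Ico]
  congr 1
  ring

lemma exists_dyadicIndex_ne (h : x ≠ y) : ∃ k, dyadicIndex k x ≠ dyadicIndex k y := by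
  obtain ⟨k, hk⟩ := exists_mem_Ico_zpow (abs_pos.mpr (sub_ne_zero.mpr h)) one_lt_two
  refine ⟨k, fun heq => hk.1.not_gt ?_⟩
  have := Int.abs_sub_lt_one_of_floor_eq_floor heq
  rwa [← sub_div, abs_div, abs_of_pos (show (0 : ℝ) < 2 ^ k by positivity),
    div_lt_one (by positivity)] at this

/-- The points `x` and `y` lie in different halves of some dyadic interval of length
`2 ^ (m + 1)`. -/
def AreSiblings (m : ℤ) (x y : ℝ) : Prop :=
  dyadicIndex m x ≠ dyadicIndex m y ∧ dyadicIndex (m + 1) x = dyadicIndex (m + 1) y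

lemma exists_areSiblings (hk : dyadicIndex k x ≠ dyadicIndex k y)
    (hl : dyadicIndex l x = dyadicIndex l y) : ∃ m, k ≤ m ∧ m < l ∧ AreSiblings m x y := by
  obtain ⟨m, ⟨hkm, hm⟩, hmax⟩ := Int.exists_greatest_of_bdd
    (P := fun m => k ≤ m ∧ dyadicIndex m x ≠ dyadicIndex m y)
    ⟨l, fun z hz => le_of_not_ge fun h => hz.2 (dyadicIndex_eq_of_le h hl)⟩ ⟨k, le_rfl, hk⟩
  refine ⟨m, hkm, lt_of_not_ge fun h => hm (dyadicIndex_eq_of_le h hl), hm, ?_⟩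
  by_contra h
  exact absurd (hmax (m + 1) ⟨by omega, h⟩) (by omega)

/-! ### Binary digits -/

lemma digit_eq_dyadicIndex_emod (m : ℤ) (x : ℝ) : digit m x = dyadicIndex m x % 2 := rfl

lemma digit_zero_right (m : ℤ) : digit m 0 = 0 := by
  rw [digit_eq_dyadicIndex_emod, dyadicIndex_zero_right, Int.zero_emod]

lemma measurable_digit (m : ℤ) : Measurable (digit m) :=
  (Measurable.of_discrete (f := fun n : ℤ => n % 2)).comp (measurable_dyadicIndex m)

lemma digit_eq_of_le (hkm : k ≤ m) (h : dyadicIndex k x = dyadicIndex k y) :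
    digit m x = digit m y := by
  rw [digit_eq_dyadicIndex_emod, digit_eq_dyadicIndex_emod, dyadicIndex_eq_of_le hkm h]

lemma AreSiblings.digit_sub_digit (h : AreSiblings m x y) :
    digit m x - digit m y = 1 ∨ digit m x - digit m y = -1 := by
  obtain ⟨hne, heq⟩ := h
  rw [dyadicIndex_add_one, dyadicIndex_add_one] at heq
  rw [digit_eq_dyadicIndex_emod, digit_eq_dyadicIndex_emod]
  omega

lemma finite_support_digit_mul_digit (n : ℤ) (hx : 0 ≤ x) (hy : 0 ≤ y) :
    (Function.support fun m => digit (n - m) x * digit m y).Finite := by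
  obtain ⟨L, hxL, hyL⟩ :=
    ((eventually_dyadicIndex_eq_zero hx).and (eventually_dyadicIndex_eq_zero hy)).exists
  rw [← dyadicIndex_zero_right L] at hxL hyL
  refine (Set.finite_Ioo (n - L) L).subset fun m hm => ?_
  have hmul : digit (n - m) x * digit m y ≠ 0 := hm
  constructor
  · by_contra! h
    exact hmul (by rw [digit_eq_of_le (by omega) hxL, digit_zero_right, zero_mul])
  · by_contra! h
    exact hmul (by rw [digit_eq_of_le h hyL, digit_zero_right, mul_zero])

lemma wMulDigit_eq_finsum_emod (n : ℤ) (hx : 0 ≤ x) (hy : 0 ≤ y) :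
    wMulDigit n x y = (∑ᶠ m, digit (n - m) x * digit m y) % 2 := by
  have hfin := finite_support_digit_mul_digit n hx hy
  rw [wMulDigit, finsum_eq_sum _ hfin, tsum_eq_sum (s := hfin.toFinset) fun m hm => ?_,
    ← Int.cast_sum, Int.floor_intCast]
  rw [Function.notMem_support.mp fun h => hm (hfin.mem_toFinset.mpr h), Int.cast_zero]

lemma wMulDigit_zero_left (n : ℤ) (y : ℝ) : wMulDigit n 0 y = 0 := by
  simp [wMulDigit, digit_zero_right]

lemma wMulDigit_zero_right (n : ℤ) (x : ℝ) : wMulDigit n x 0 = 0 := by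
  simp [wMulDigit, digit_zero_right]

lemma wMulDigit_nonneg (n : ℤ) (x y : ℝ) : 0 ≤ wMulDigit n x y := by
  unfold wMulDigit
  omega

lemma wMulDigit_le_one (n : ℤ) (x y : ℝ) : wMulDigit n x y ≤ 1 := by
  unfold wMulDigit
  omega

lemma measurable_wMulDigit (n : ℤ) : Measurable fun z : ℝ × ℝ => wMulDigit n z.1 z.2 := by
  have hterm (m : ℤ) :
      Measurable fun z : ℝ × ℝ => ((digit (n - m) z.1 * digit m z.2 : ℤ) : ℝ) :=
    Measurable.of_discrete.comp
      (((measurable_digit _).comp measurable_fst).mul ((measurable_digit m).comp measurable_snd))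
  exact (Measurable.of_discrete (f := fun n : ℤ => n % 2)).comp
    (Int.measurable_floor.comp (Measurable.tsum hterm))

end DyadicIndex

section Bilinearity

variable {k l m n p : ℤ} {ξ ξ' x y : ℝ}

/-- The digits of a carryless product are bilinear modulo `2`, so that mixed second differences of
`wMulDigit n` are sums of products of differences of digits. -/
lemma wMulDigit_add_wMulDigit_modEq_add_finsum (n : ℤ) (hξ : 0 ≤ ξ) (hξ' : 0 ≤ ξ')
    (hx : 0 ≤ x) (hy : 0 ≤ y) :
    wMulDigit n ξ x + wMulDigit n ξ' x ≡ wMulDigit n ξ y + wMulDigit n ξ' y +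
      ∑ᶠ m, (digit (n - m) ξ - digit (n - m) ξ') * (digit m x - digit m y) [ZMOD 2] := by
  have hsum : ∑ᶠ m, (digit (n - m) ξ - digit (n - m) ξ') * (digit m x - digit m y) =
      ∑ᶠ m, digit (n - m) ξ * digit m x - ∑ᶠ m, digit (n - m) ξ' * digit m x -
        (∑ᶠ m, digit (n - m) ξ * digit m y - ∑ᶠ m, digit (n - m) ξ' * digit m y) := by
    have h {u v : ℝ} (hu : 0 ≤ u) (hv : 0 ≤ v) := finite_support_digit_mul_digit n hu hv
    rw [← finsum_sub_distrib (h hξ hx) (h hξ' hx), ← finsum_sub_distrib (h hξ hy) (h hξ' hy),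
      ← finsum_sub_distrib (((h hξ hx).union (h hξ' hx)).subset (Function.support_sub _ _))
        (((h hξ hy).union (h hξ' hy)).subset (Function.support_sub _ _))]
    exact finsum_congr fun m => by ring
  rw [hsum, wMulDigit_eq_finsum_emod n hξ hx, wMulDigit_eq_finsum_emod n hξ' hx,
    wMulDigit_eq_finsum_emod n hξ hy, wMulDigit_eq_finsum_emod n hξ' hy, Int.ModEq]
  omega

lemma wMulDigit_add_wMulDigit_modEq_of_dyadicIndex_eq (hξ : 0 ≤ ξ) (hξ' : 0 ≤ ξ') (hx : 0 ≤ x)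
    (hy : 0 ≤ y) (hk : dyadicIndex k ξ = dyadicIndex k ξ') (hl : dyadicIndex l x = dyadicIndex l y)
    (hkl : k + l ≤ n + 1) :
    wMulDigit n ξ x + wMulDigit n ξ' x ≡ wMulDigit n ξ y + wMulDigit n ξ' y [ZMOD 2] := by
  have hzero (m : ℤ) : (digit (n - m) ξ - digit (n - m) ξ') * (digit m x - digit m y) = 0 := by
    rcases le_or_gt l m with hm | hm
    · rw [digit_eq_of_le hm hl, sub_self, mul_zero]
    · rw [digit_eq_of_le (show k ≤ n - m by omega) hk, sub_self, zero_mul]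
  simpa only [hzero, finsum_zero, add_zero] using
    wMulDigit_add_wMulDigit_modEq_add_finsum n hξ hξ' hx hy

lemma AreSiblings.wMulDigit_add_wMulDigit_modEq (hξ : 0 ≤ ξ) (hξ' : 0 ≤ ξ') (hx : 0 ≤ x)
    (hy : 0 ≤ y) (hp : AreSiblings p ξ ξ') (hm : AreSiblings m x y) :
    wMulDigit (p + m) ξ x + wMulDigit (p + m) ξ' x ≡
      wMulDigit (p + m) ξ y + wMulDigit (p + m) ξ' y + 1 [ZMOD 2] := by
  have hzero (i : ℤ) (hi : i ≠ m) :
      (digit (p + m - i) ξ - digit (p + m - i) ξ') * (digit i x - digit i y) = 0 := by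
    rcases hi.lt_or_gt with hi | hi
    · rw [digit_eq_of_le (show p + 1 ≤ p + m - i by omega) hp.2, sub_self, zero_mul]
    · rw [digit_eq_of_le (show m + 1 ≤ i by omega) hm.2, sub_self, mul_zero]
  have hodd : (digit p ξ - digit p ξ') * (digit m x - digit m y) ≡ 1 [ZMOD 2] := by
    rcases hp.digit_sub_digit with h | h <;> rcases hm.digit_sub_digit with h' | h' <;>
      rw [h, h'] <;> decide
  have := wMulDigit_add_wMulDigit_modEq_add_finsum (p + m) hξ hξ' hx hy
  rw [finsum_eq_single _ m hzero, add_sub_cancel_right] at this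
  exact this.trans (hodd.add_left _)

/-! ### Walsh characters -/

/-- The Walsh character of frequency `ξ`: the value of `e (ξ ⊗ y)` as computed from the digit of
`ξ ⊗ y` that determines it. It can differ from `walshe (wMul ξ y)`, but only for countably many
`y`, where the digits of `ξ ⊗ y` are eventually `1`. -/
def walshChar (ξ y : ℝ) : ℝ := (-1) ^ wMulDigit (-1) ξ y

lemma walshChar_comm (ξ y : ℝ) : walshChar ξ y = walshChar y ξ := by
  unfold walshChar wMulDigit
  rw [← (Equiv.subLeft (-1 : ℤ)).tsum_eq]
  simp only [Equiv.subLeft_apply, sub_sub_cancel, mul_comm]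

lemma abs_walshChar (ξ y : ℝ) : |walshChar ξ y| = 1 := by
  rw [walshChar, abs_zpow, abs_neg, abs_one, one_zpow]

lemma walshChar_mul_self (ξ y : ℝ) : walshChar ξ y * walshChar ξ y = 1 := by
  rw [← abs_mul_abs_self, abs_walshChar, one_mul]

lemma measurable_walshChar : Measurable fun z : ℝ × ℝ => walshChar z.1 z.2 :=
  (Measurable.of_discrete (f := fun n : ℤ => (-1 : ℝ) ^ n)).comp (measurable_wMulDigit (-1))

lemma neg_one_zpow_congr {a b : ℤ} (h : a ≡ b [ZMOD 2]) : (-1 : ℝ) ^ a = (-1) ^ b := by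
  obtain ⟨c, hc⟩ := h.dvd
  rw [eq_add_of_sub_eq' hc, zpow_add₀ (by norm_num), zpow_mul, zpow_ofNat, neg_one_sq, one_zpow,
    mul_one]

lemma walshChar_mul_walshChar_eq (hξ : 0 ≤ ξ) (hξ' : 0 ≤ ξ') (hx : 0 ≤ x) (hy : 0 ≤ y)
    (hk : dyadicIndex k ξ = dyadicIndex k ξ') (hl : dyadicIndex (-k) x = dyadicIndex (-k) y) :
    walshChar ξ x * walshChar ξ' x = walshChar ξ y * walshChar ξ' y := by
  simp only [walshChar, ← zpow_add₀ (show (-1 : ℝ) ≠ 0 by norm_num)]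
  exact neg_one_zpow_congr
    (wMulDigit_add_wMulDigit_modEq_of_dyadicIndex_eq hξ hξ' hx hy hk hl (by omega))

lemma AreSiblings.walshChar_mul_walshChar_eq_neg (hξ : 0 ≤ ξ) (hξ' : 0 ≤ ξ') (hx : 0 ≤ x)
    (hy : 0 ≤ y) (hm : AreSiblings m ξ ξ') (hm' : AreSiblings (-1 - m) x y) :
    walshChar ξ x * walshChar ξ' x = -(walshChar ξ y * walshChar ξ' y) := by
  have h := hm.wMulDigit_add_wMulDigit_modEq hξ hξ' hx hy hm'
  rw [add_sub_cancel] at h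
  simp only [walshChar, ← zpow_add₀ (show (-1 : ℝ) ≠ 0 by norm_num)]
  rw [neg_one_zpow_congr h, zpow_add_one₀ (by norm_num), mul_neg_one]

end Bilinearity

/-! ### The Walsh–Fourier transform -/

section BinaryExpansion

variable {d : ℕ → ℝ}

lemma summable_div_two_div_two_pow (h0 : ∀ n, 0 ≤ d n) (h1 : ∀ n, d n ≤ 1) :
    Summable fun n => d n / 2 / 2 ^ n :=
  .of_nonneg_of_le (fun n => by have := h0 n; positivity) (fun n => by gcongr; exact h1 n)
    (summable_geometric_two' 1)

lemma tsum_div_two_div_two_pow_lt_one (h0 : ∀ n, 0 ≤ d n) (h1 : ∀ n, d n ≤ 1) {m : ℕ}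
    (hm : d m = 0) : ∑' n, d n / 2 / 2 ^ n < 1 := by
  refine (Summable.tsum_lt_tsum (i := m) (fun n => ?_) ?_ (summable_div_two_div_two_pow h0 h1)
    (summable_geometric_two' 1)).trans_eq (tsum_geometric_two' 1)
  · gcongr
    exact h1 n
  · rw [hm, zero_div, zero_div]
    positivity

variable {c : ℤ → ℤ} {L : ℕ}

lemma tsum_mul_two_zpow_eq (h0 : ∀ n, 0 ≤ c n) (h1 : ∀ n, c n ≤ 1)
    (hL : ∀ n, (L : ℤ) ≤ n → c n = 0) :
    ∑' n, (c n : ℝ) * 2 ^ n = ((∑ n ∈ Finset.range L, c n * 2 ^ n : ℤ) : ℝ) +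
      ∑' n : ℕ, (c (-(n + 1)) : ℝ) / 2 / 2 ^ n := by
  have hinteger (n : ℕ) (hn : n ∉ Finset.range L) : (c n : ℝ) * 2 ^ (n : ℤ) = 0 := by
    rw [hL n (by simpa using hn), Int.cast_zero, zero_mul]
  have hfrac (n : ℕ) : (c (-(n + 1)) : ℝ) * 2 ^ (-((n : ℤ) + 1)) = c (-(n + 1)) / 2 / 2 ^ n := by
    rw [neg_add, zpow_add₀ two_ne_zero, zpow_neg, zpow_natCast, zpow_neg_one]
    ring
  have hsummable := summable_div_two_div_two_pow (d := fun n : ℕ => (c (-(n + 1)) : ℝ))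
    (fun n => Int.cast_nonneg (h0 _)) fun n => by exact_mod_cast h1 _
  rw [tsum_of_nat_of_neg_add_one (summable_of_ne_finset_zero hinteger)
    (by simpa only [hfrac] using hsummable), tsum_eq_sum hinteger, tsum_congr hfrac]
  simp only [zpow_natCast, Int.cast_sum, Int.cast_mul, Int.cast_pow, Int.cast_ofNat]

lemma digit_neg_one_tsum (h0 : ∀ n, 0 ≤ c n) (h1 : ∀ n, c n ≤ 1)
    (hL : ∀ n, (L : ℤ) ≤ n → c n = 0) (hc : ∃ n ≤ -2, c n = 0) :
    digit (-1) (∑' n, (c n : ℝ) * 2 ^ n) = c (-1) := by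
  have h0' (n) : (0 : ℝ) ≤ c n := Int.cast_nonneg (h0 n)
  have h1' (n) : (c n : ℝ) ≤ 1 := by exact_mod_cast h1 n
  set t : ℝ := ∑' n : ℕ, (c (-(n + 2)) : ℝ) / 2 / 2 ^ n with ht
  set N : ℤ := ∑ n ∈ Finset.range L, c n * 2 ^ n
  have htail : ∑' n : ℕ, (c (-(n + 1)) : ℝ) / 2 / 2 ^ n = (c (-1) + t) / 2 := by
    rw [(summable_div_two_div_two_pow (fun n => h0' _) fun n => h1' _).tsum_eq_zero_add, add_div,
      ht, ← tsum_div_const]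
    congr 1
    · simp
    · refine tsum_congr fun n => ?_
      rw [pow_succ, Nat.cast_add_one, add_assoc, one_add_one_eq_two]
      ring
  have hnonneg : 0 ≤ t := tsum_nonneg fun n => by have := h0' (-(n + 2)); positivity
  have hlt : t < 1 := by
    obtain ⟨n, hn, hcn⟩ := hc
    refine tsum_div_two_div_two_pow_lt_one (fun n => h0' _) (fun n => h1' _)
      (m := (-n - 2).toNat) ?_
    rw [Int.toNat_of_nonneg (by omega), sub_add_cancel, neg_neg, hcn, Int.cast_zero]
  have hfloor : ⌊(N + (c (-1) + t) / 2) / 2 ^ (-1 : ℤ)⌋ = N * 2 + c (-1) := by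
    rw [Int.floor_eq_iff, zpow_neg_one, div_inv_eq_mul]
    push_cast
    constructor <;> linarith
  rw [digit, tsum_mul_two_zpow_eq h0 h1 hL, htail, hfloor]
  have := h0 (-1)
  have := h1 (-1)
  omega

end BinaryExpansion

section WalshFT

variable {ξ x y : ℝ} {k n : ℤ} {g : ℝ → ℝ}

lemma exists_forall_le_wMulDigit_eq_zero (hξ : 0 ≤ ξ) (hy : 0 ≤ y) :
    ∃ L : ℕ, ∀ n, (L : ℤ) ≤ n → wMulDigit n ξ y = 0 := by
  obtain ⟨k, hk, hk', hk0⟩ := ((eventually_dyadicIndex_eq_zero hξ).and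
    ((eventually_dyadicIndex_eq_zero hy).and (eventually_ge_atTop 0))).exists
  refine ⟨(2 * k).toNat, fun n hn => ?_⟩
  have h := wMulDigit_add_wMulDigit_modEq_of_dyadicIndex_eq (n := n) hξ le_rfl hy le_rfl
    (hk.trans (dyadicIndex_zero_right k).symm) (hk'.trans (dyadicIndex_zero_right k).symm)
    (by omega)
  simp only [wMulDigit_zero_left, wMulDigit_zero_right, add_zero, Int.ModEq] at h
  have := wMulDigit_nonneg n ξ y
  have := wMulDigit_le_one n ξ y
  omega

lemma walshe_wMul (hξ : 0 ≤ ξ) (hy : 0 ≤ y) (h : ∃ n ≤ -2, wMulDigit n ξ y = 0) :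
    walshe (wMul ξ y) = walshChar ξ y := by
  obtain ⟨L, hL⟩ := exists_forall_le_wMulDigit_eq_zero hξ hy
  rw [walshe, wMul, digit_neg_one_tsum (wMulDigit_nonneg · ξ y) (wMulDigit_le_one · ξ y) hL h,
    walshChar]

lemma countable_setOf_wMulDigit_eq_one (hξ : 0 ≤ ξ) :
    {y | 0 ≤ y ∧ ∀ n ≤ -2, wMulDigit n ξ y = 1}.Countable := by
  rcases eq_or_ne ξ 0 with rfl | hne
  · refine Set.countable_empty.mono fun y hy => ?_
    simpa [wMulDigit_zero_left] using hy.2 (-2) le_rfl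
  obtain ⟨k, hk⟩ := exists_dyadicIndex_ne hne
  obtain ⟨l, hl⟩ := (eventually_dyadicIndex_eq_zero hξ).exists
  obtain ⟨p, -, -, hp⟩ := exists_areSiblings hk (hl.trans (dyadicIndex_zero_right l).symm)
  refine (mapsTo_univ (dyadicIndex (-1 - p)) _).countable_of_injOn ?_ countable_univ
  rintro y ⟨hy, hy1⟩ y' ⟨hy', hy1'⟩ heq
  by_contra hyy'
  obtain ⟨i, hi⟩ := exists_dyadicIndex_ne hyy'
  obtain ⟨m, -, hmp, hm⟩ := exists_areSiblings hi heq
  have h := hp.wMulDigit_add_wMulDigit_modEq hξ le_rfl hy hy' hm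
  rw [wMulDigit_zero_left, wMulDigit_zero_left, hy1 _ (by omega), hy1' _ (by omega)] at h
  exact absurd h (by decide)

lemma ae_walshe_wMul_eq (hξ : 0 ≤ ξ) :
    ∀ᵐ y ∂volume.restrict (Ici 0), walshe (wMul ξ y) = walshChar ξ y := by
  rw [ae_restrict_iff' measurableSet_Ici]
  filter_upwards [(countable_setOf_wMulDigit_eq_one hξ).ae_notMem volume] with y hy hy0
  refine walshe_wMul hξ hy0 ?_
  by_contra! h
  refine hy ⟨hy0, fun n hn => ?_⟩
  have := h n hn
  have := wMulDigit_nonneg n ξ y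
  have := wMulDigit_le_one n ξ y
  omega

lemma walshFT_eq_integral_walshChar (g : ℝ → ℝ) (hξ : 0 ≤ ξ) :
    walshFT g ξ = ∫ y in Ici 0, walshChar ξ y * g y := by
  refine integral_congr_ae ?_
  filter_upwards [ae_walshe_wMul_eq hξ] with y hy
  rw [hy]

lemma integrable_walshChar_mul {μ : Measure ℝ} (hg : Integrable g μ) (ξ : ℝ) :
    Integrable (fun y => walshChar ξ y * g y) μ :=
  hg.bdd_mul (c := 1)
    (measurable_walshChar.comp measurable_prodMk_left).aestronglyMeasurable
    (ae_of_all _ fun y => by rw [Real.norm_eq_abs, abs_walshChar])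

lemma integrable_walshChar_mul_iff {μ : Measure ℝ} (ξ : ℝ) :
    Integrable (fun y => walshChar ξ y * g y) μ ↔ Integrable g μ := by
  refine ⟨fun h => ?_, fun h => integrable_walshChar_mul h ξ⟩
  simpa only [← mul_assoc, walshChar_mul_self, one_mul] using integrable_walshChar_mul h ξ

lemma walshFT_eq_zero_of_not_integrableOn (hg : ¬IntegrableOn g (Ici 0)) (hξ : 0 ≤ ξ) :
    walshFT g ξ = 0 := by
  rw [walshFT_eq_integral_walshChar g hξ]
  exact integral_undef fun h => hg ((integrable_walshChar_mul_iff ξ).mp h)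

end WalshFT

/-! ### Dyadic multipliers -/

section DyadicCell

variable {k m n : ℤ} {i : ℕ} {f : ℝ → ℝ} {c : ℝ}

lemma volume_real_dyadicCell (k n : ℤ) : volume.real (dyadicCell k n) = 2 ^ k := by
  rw [Measure.real, volume_dyadicCell, ENNReal.toReal_ofReal (by positivity)]

lemma dyadicCell_subset_Ici (hn : 0 ≤ n) : dyadicCell k n ⊆ Ici 0 :=
  fun _ => nonneg_of_mem_dyadicCell hn

lemma pairwiseDisjoint_dyadicCell (k : ℤ) (s : Set ℤ) : s.PairwiseDisjoint (dyadicCell k) :=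
  fun _ _ _ _ hne => Set.disjoint_left.mpr fun _ h h' => hne (h.symm.trans h')

lemma dyadicCell_injective (k : ℤ) : Function.Injective (dyadicCell k) := fun m n h => by
  have hm : (m : ℝ) * 2 ^ k ∈ dyadicCell k n := by
    rw [← h]
    exact mul_zpow_mem_dyadicCell k m
  exact (mul_zpow_mem_dyadicCell k m).symm.trans hm

lemma setIntegral_dyadicCell_of_eq (h : ∀ x ∈ dyadicCell k n, f x = c) :
    ∫ x in dyadicCell k n, f x = 2 ^ k * c := by
  rw [setIntegral_congr_fun (measurableSet_dyadicCell k n) h, setIntegral_const,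
    volume_real_dyadicCell, smul_eq_mul]

lemma setAverage_dyadicCell (k n : ℤ) (f : ℝ → ℝ) :
    ⨍ x in dyadicCell k n, f x = 2 ^ (-k) * ∫ x in dyadicCell k n, f x := by
  rw [setAverage_eq, volume_real_dyadicCell, zpow_neg, smul_eq_mul]

/-- The indices of the dyadic intervals of length `2 ^ k` contained in `dyadicCell (k + i) n`; they
do not depend on `k`. -/
def dyadicDescendants (i : ℕ) (n : ℤ) : Finset ℤ := Finset.Ico (n * 2 ^ i) ((n + 1) * 2 ^ i)

lemma mem_dyadicDescendants : m ∈ dyadicDescendants i n ↔ m / 2 ^ i = n := by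
  have h2 : (0 : ℤ) < 2 ^ i := by positivity
  rw [dyadicDescendants, Finset.mem_Ico, ← Int.le_ediv_iff_mul_le h2, ← Int.ediv_lt_iff_lt_mul h2]
  omega

lemma card_dyadicDescendants (i : ℕ) (n : ℤ) : (dyadicDescendants i n).card = 2 ^ i := by
  rw [dyadicDescendants, Int.card_Ico, ← sub_mul, add_sub_cancel_left, one_mul]
  exact_mod_cast Int.toNat_natCast (2 ^ i)

lemma dyadicCell_add_natCast (k : ℤ) (i : ℕ) (n : ℤ) :
    dyadicCell (k + i) n = ⋃ m ∈ dyadicDescendants i n, dyadicCell k m := by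
  ext x
  simp only [mem_iUnion, mem_dyadicCell, mem_dyadicDescendants, exists_prop, exists_eq_right',
    dyadicIndex_add_natCast]

lemma setIntegral_dyadicCell_add_natCast (hf : IntegrableOn f (dyadicCell (k + i) n)) :
    ∫ x in dyadicCell (k + i) n, f x =
      ∑ m ∈ dyadicDescendants i n, ∫ x in dyadicCell k m, f x := by
  rw [dyadicCell_add_natCast] at hf ⊢
  exact integral_biUnion_finset _ (fun m _ => measurableSet_dyadicCell k m)
    (pairwiseDisjoint_dyadicCell k _) fun m hm => hf.mono_set (subset_biUnion_of_mem hm)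

lemma setLIntegral_dyadicCell_add_natCast (k : ℤ) (i : ℕ) (n : ℤ) (F : ℝ → ℝ≥0∞) :
    ∫⁻ x in dyadicCell (k + i) n, F x =
      ∑ m ∈ dyadicDescendants i n, ∫⁻ x in dyadicCell k m, F x := by
  rw [dyadicCell_add_natCast]
  exact lintegral_biUnion_finset (pairwiseDisjoint_dyadicCell k _)
    (fun m _ => measurableSet_dyadicCell k m) F

lemma dyadicDescendants_one (n : ℤ) : dyadicDescendants 1 n = {2 * n, 2 * n + 1} := by
  ext m
  rw [mem_dyadicDescendants, Finset.mem_insert, Finset.mem_singleton]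
  omega

lemma setIntegral_dyadicCell_eq_zero_of_areSiblings
    (hint : IntegrableOn f (dyadicCell (k + 1) n)) (hn : 0 ≤ n)
    (hconst : ∀ x y, 0 ≤ x → 0 ≤ y → dyadicIndex k x = dyadicIndex k y → f x = f y)
    (hflip : ∀ x y, 0 ≤ x → 0 ≤ y → AreSiblings k x y → f x = -f y) :
    ∫ x in dyadicCell (k + 1) n, f x = 0 := by
  have hleft : (((2 * n : ℤ) : ℝ) * 2 ^ k) ∈ dyadicCell k (2 * n) := mul_zpow_mem_dyadicCell _ _
  have hleft0 := nonneg_of_mem_dyadicCell (by omega) hleft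
  have hL : ∫ x in dyadicCell k (2 * n), f x = 2 ^ k * f ((2 * n : ℤ) * 2 ^ k) :=
    setIntegral_dyadicCell_of_eq fun x hx => hconst x _
      (nonneg_of_mem_dyadicCell (by omega) hx) hleft0 (hx.trans hleft.symm)
  have hR : ∫ x in dyadicCell k (2 * n + 1), f x = 2 ^ k * -f ((2 * n : ℤ) * 2 ^ k) := by
    refine setIntegral_dyadicCell_of_eq fun x hx => hflip x _
      (nonneg_of_mem_dyadicCell (by omega) hx) hleft0 ⟨?_, ?_⟩
    · rw [mem_dyadicCell.mp hx, mem_dyadicCell.mp hleft]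
      omega
    · rw [dyadicIndex_add_one, dyadicIndex_add_one, mem_dyadicCell.mp hx, mem_dyadicCell.mp hleft]
      omega
  have hsplit := setIntegral_dyadicCell_add_natCast (k := k) (i := 1) (n := n) (f := f)
    (by rwa [Nat.cast_one])
  rw [Nat.cast_one, dyadicDescendants_one, Finset.sum_pair (by omega), hL, hR] at hsplit
  rw [hsplit]
  ring

end DyadicCell

section Orthogonality

variable {k n : ℤ} {ξ ξ' x y : ℝ} {g : ℝ → ℝ}

lemma integrableOn_walshChar_mul_walshChar (k n : ℤ) (ξ ξ' : ℝ) :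
    IntegrableOn (fun x => walshChar ξ x * walshChar ξ' x) (dyadicCell k n) := by
  refine integrable_walshChar_mul ?_ ξ
  have : IntegrableOn (fun _ => (1 : ℝ)) (dyadicCell k n) :=
    integrableOn_const (by rw [volume_dyadicCell]; exact ENNReal.ofReal_ne_top)
  simpa only [mul_one] using integrable_walshChar_mul this ξ'

lemma setIntegral_walshChar_mul_walshChar_eq_zero (hξ : 0 ≤ ξ) (hξ' : 0 ≤ ξ') (hn : 0 ≤ n)
    (hne : dyadicIndex (-k) ξ ≠ dyadicIndex (-k) ξ') :
    ∫ x in dyadicCell k n, walshChar ξ x * walshChar ξ' x = 0 := by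
  obtain ⟨l, hl, hl'⟩ :=
    ((eventually_dyadicIndex_eq_zero hξ).and (eventually_dyadicIndex_eq_zero hξ')).exists
  obtain ⟨m, hkm, -, hm⟩ := exists_areSiblings hne (hl.trans hl'.symm)
  obtain ⟨i, hi⟩ := Int.le.dest (show -m ≤ k by omega)
  rw [← hi, setIntegral_dyadicCell_add_natCast (integrableOn_walshChar_mul_walshChar _ _ _ _)]
  refine Finset.sum_eq_zero fun j hj => ?_
  have hj0 : 0 ≤ j := le_trans (by positivity) (Finset.mem_Ico.mp hj).1
  rw [show -m = -1 - m + 1 by ring]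
  refine setIntegral_dyadicCell_eq_zero_of_areSiblings
    (integrableOn_walshChar_mul_walshChar _ _ _ _) hj0 (fun x y hx hy hxy => ?_)
    fun x y hx hy hxy => hm.walshChar_mul_walshChar_eq_neg hξ hξ' hx hy hxy
  exact walshChar_mul_walshChar_eq hξ hξ' hx hy hm.2 (by rwa [neg_add, neg_add_eq_sub])

lemma setIntegral_walshChar_mul_walshChar_eq_indicator (hx : 0 ≤ x) (hy : 0 ≤ y) (hξ : 0 ≤ ξ) :
    ∫ η in dyadicCell k (dyadicIndex k ξ), walshChar x η * walshChar y η =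
      (dyadicCell (-k) (dyadicIndex (-k) x)).indicator
        (fun y => 2 ^ k * (walshChar ξ x * walshChar ξ y)) y := by
  have hn := dyadicIndex_nonneg k hξ
  by_cases hxy : dyadicIndex (-k) x = dyadicIndex (-k) y
  · rw [indicator_of_mem (mem_dyadicCell.mpr hxy.symm), walshChar_comm ξ x, walshChar_comm ξ y]
    exact setIntegral_dyadicCell_of_eq fun η hη => walshChar_mul_walshChar_eq hx hy
      (nonneg_of_mem_dyadicCell hn hη) hξ hxy (by rwa [neg_neg])
  · rw [indicator_of_notMem fun h => hxy (mem_dyadicCell.mp h).symm]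
    exact setIntegral_walshChar_mul_walshChar_eq_zero hx hy hn hxy

lemma integrable_prod_walshChar_mul (hg : IntegrableOn g (Ici 0)) (x : ℝ) (k n : ℤ) :
    Integrable (fun z : ℝ × ℝ => walshChar x z.1 * (walshChar z.1 z.2 * g z.2))
      ((volume.restrict (dyadicCell k n)).prod (volume.restrict (Ici 0))) := by
  have : IsFiniteMeasure (volume.restrict (dyadicCell k n)) :=
    isFiniteMeasure_restrict.mpr (by rw [volume_dyadicCell]; exact ENNReal.ofReal_ne_top)
  have hbound (ξ y : ℝ) : ‖walshChar ξ y‖ ≤ 1 := by rw [Real.norm_eq_abs, abs_walshChar]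
  refine ((hg.comp_snd _).bdd_mul measurable_walshChar.aestronglyMeasurable
    (ae_of_all _ fun z => hbound z.1 z.2)).bdd_mul ?_ (ae_of_all _ fun z => hbound x z.1)
  exact (measurable_walshChar.comp (measurable_const.prodMk measurable_fst)).aestronglyMeasurable

lemma integrableOn_walshChar_mul_walshFT (hg : IntegrableOn g (Ici 0)) (x : ℝ) (hn : 0 ≤ n) :
    IntegrableOn (fun ξ => walshChar x ξ * walshFT g ξ) (dyadicCell k n) := by
  refine (integrable_prod_walshChar_mul hg x k n).integral_prod_left.congr ?_
  filter_upwards [ae_restrict_mem (measurableSet_dyadicCell k n)] with ξ hξ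
  rw [walshFT_eq_integral_walshChar g (nonneg_of_mem_dyadicCell hn hξ), ← integral_const_mul]

lemma setIntegral_walshChar_mul_walshFT (hg : IntegrableOn g (Ici 0)) (hx : 0 ≤ x) (hξ : 0 ≤ ξ) :
    ∫ η in dyadicCell k (dyadicIndex k ξ), walshChar x η * walshFT g η =
      walshChar ξ x * ⨍ y in dyadicCell (-k) (dyadicIndex (-k) x), walshChar ξ y * g y := by
  have hn := dyadicIndex_nonneg k hξ
  calc _ = ∫ η in dyadicCell k (dyadicIndex k ξ), ∫ y in Ici 0,
        walshChar x η * (walshChar η y * g y) := by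
        refine setIntegral_congr_fun (measurableSet_dyadicCell _ _) fun η hη => ?_
        rw [walshFT_eq_integral_walshChar g (nonneg_of_mem_dyadicCell hn hη),
          ← integral_const_mul]
    _ = ∫ y in Ici 0, (∫ η in dyadicCell k (dyadicIndex k ξ),
          walshChar x η * walshChar y η) * g y := by
        rw [integral_integral_swap (integrable_prod_walshChar_mul hg x _ _)]
        simp only [walshChar_comm _ (_ : ℝ), ← mul_assoc, integral_mul_const]
    _ = ∫ y in Ici 0, (dyadicCell (-k) (dyadicIndex (-k) x)).indicator
          (fun y => 2 ^ k * walshChar ξ x * (walshChar ξ y * g y)) y := by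
        refine setIntegral_congr_fun measurableSet_Ici fun y hy => ?_
        rw [setIntegral_walshChar_mul_walshChar_eq_indicator hx hy hξ, ← indicator_mul_left]
        simp only [mul_assoc]
    _ = _ := by
        rw [setIntegral_indicator (measurableSet_dyadicCell _ _), inter_eq_self_of_subset_right
          (dyadicCell_subset_Ici (dyadicIndex_nonneg _ hx)), integral_const_mul,
          setAverage_dyadicCell, neg_neg]
        ring

end Orthogonality

section Multiplier

variable {k : ℤ} {x : ℝ} {g : ℝ → ℝ}

lemma isDyadicLen_iff {ω : Set ℝ} : IsDyadicLen k ω ↔ ω ∈ range (dyadicCell k) := by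
  simp only [IsDyadicLen, mem_range, dyadicCell_eq_Ico, eq_comm]

lemma dyadicSum_eq (a : Set ℝ → ℝ) (ξ : ℝ) (k : ℤ) :
    dyadicSum a ξ k = a (dyadicCell k (dyadicIndex k ξ)) := by
  simp only [dyadicSum, isDyadicLen_iff]
  rw [finsum_mem_range (dyadicCell_injective k), finsum_eq_single _ (dyadicIndex k ξ),
    indicator_of_mem (mem_dyadicCell.mpr rfl), mul_one]
  intro n hn
  rw [indicator_of_notMem fun h => hn (mem_dyadicCell.mp h).symm, mul_zero]

lemma Dk_eq_sum (a : Set ℝ → ℝ) (Ξ : Finset ℝ) (k : ℤ) (ξ : ℝ) :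
    Dk a Ξ k ξ = ∑ n ∈ Ξ.image (dyadicIndex k),
      a (dyadicCell k n) * (dyadicCell k n).indicator (fun _ => 1) ξ := by
  have hcells (ω : Set ℝ) : IsDyadicLen k ω ∧ (ω ∩ Ξ).Nonempty ↔
      ω ∈ dyadicCell k '' (Ξ.image (dyadicIndex k)) := by
    rw [isDyadicLen_iff, Finset.coe_image]
    constructor
    · rintro ⟨⟨n, rfl⟩, ξ, hξn, hξ⟩
      exact mem_image_of_mem _ ⟨ξ, hξ, hξn⟩
    · rintro ⟨_, ⟨ξ, hξ, rfl⟩, rfl⟩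
      exact ⟨mem_range_self _, ξ, rfl, hξ⟩
  simp only [Dk, hcells]
  rw [finsum_mem_image (dyadicCell_injective k).injOn, finsum_mem_coe_finset]

theorem walshFT_Dk_mul_walshFT (a : Set ℝ → ℝ) {Ξ : Finset ℝ} (hΞ : ∀ ξ ∈ Ξ, 0 ≤ ξ)
    (hg : IntegrableOn g (Ici 0)) (hx : 0 ≤ x) :
    walshFT (fun ξ => Dk a Ξ k ξ * walshFT g ξ) x =
      ∑ n ∈ Ξ.image (dyadicIndex k), a (dyadicCell k n) *
        ∫ ξ in dyadicCell k n, walshChar x ξ * walshFT g ξ := by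
  have hn {n : ℤ} (hn : n ∈ Ξ.image (dyadicIndex k)) : 0 ≤ n := by
    obtain ⟨ξ, hξ, rfl⟩ := Finset.mem_image.mp hn
    exact dyadicIndex_nonneg k (hΞ ξ hξ)
  have hterm (ξ : ℝ) : walshChar x ξ * (Dk a Ξ k ξ * walshFT g ξ) =
      ∑ n ∈ Ξ.image (dyadicIndex k), a (dyadicCell k n) *
        (dyadicCell k n).indicator (fun ξ => walshChar x ξ * walshFT g ξ) ξ := by
    rw [Dk_eq_sum, Finset.sum_mul, Finset.mul_sum]
    refine Finset.sum_congr rfl fun n _ => ?_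
    by_cases h : ξ ∈ dyadicCell k n
    · simp only [indicator_of_mem h]
      ring
    · simp only [indicator_of_notMem h, mul_zero, zero_mul]
  rw [walshFT_eq_integral_walshChar _ hx]
  simp only [hterm]
  rw [integral_finsetSum]
  · refine Finset.sum_congr rfl fun n hnΞ => ?_
    rw [integral_const_mul, setIntegral_indicator (measurableSet_dyadicCell k n),
      inter_eq_self_of_subset_right (dyadicCell_subset_Ici (hn hnΞ))]
  · intro n hnΞ
    refine Integrable.const_mul (Integrable.restrict ?_) _
    exact (integrable_indicator_iff (measurableSet_dyadicCell k n)).mpr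
      (integrableOn_walshChar_mul_walshFT hg x (hn hnΞ))

end Multiplier

/-! ### Variation norms -/

section Variation

lemma exists_strictMono_sum_eq {ι β : Type*} [LinearOrder ι] [AddCommMonoid β] {φ : ι → ι → β}
    (hφ : ∀ x, φ x x = 0) {u : ℕ → ι} (hu : Monotone u) (m : ℕ) :
    ∃ (N : ℕ) (v : Fin (N + 1) → ι), StrictMono v ∧ v (Fin.last N) = u m ∧
      ∑ i : Fin N, φ (v i.castSucc) (v i.succ) = ∑ i ∈ Finset.range m, φ (u i) (u (i + 1)) := by
  induction m with
  | zero => exact ⟨0, fun _ => u 0, Subsingleton.strictMono (α := Fin 1) _, rfl, rfl⟩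
  | succ m ih =>
    obtain ⟨N, v, hv, hlast, hsum⟩ := ih
    rw [Finset.sum_range_succ, ← hsum]
    rcases (hu m.le_succ).eq_or_lt with heq | hlt
    · exact ⟨N, v, hv, hlast.trans heq, by rw [← heq, hφ, add_zero]⟩
    refine ⟨N + 1, Fin.snoc v (u (m + 1)), Fin.strictMono_iff_lt_succ.mpr fun i => ?_,
      Fin.snoc_last _ _, ?_⟩
    · cases i using Fin.lastCases with
      | last => rwa [Fin.succ_last, Fin.snoc_last, Fin.snoc_castSucc, hlast]
      | cast i =>
        rw [Fin.succ_castSucc, Fin.snoc_castSucc, Fin.snoc_castSucc]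
        exact hv i.castSucc_lt_succ
    · simp only [Fin.sum_univ_castSucc, Fin.succ_castSucc, Fin.snoc_castSucc, Fin.succ_last,
        Fin.snoc_last, hlast]

variable {ι E : Type*} [LinearOrder ι] [NormedAddCommGroup E] {r V : ℝ} {a : ι → E}

lemma enorm_le_vnorm (r : ℝ) (a : ι → E) (k : ι) : ‖a k‖ₑ ≤ vnorm r univ a :=
  (le_iSup₂_of_le (f := fun k _ => ‖a k‖ₑ) k (mem_univ k) le_rfl).trans le_self_add

lemma sum_enorm_sub_rpow_le_vnorm_rpow (hr : 0 < r) (a : ι → E) {u : ℕ → ι} (hu : Monotone u)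
    (m : ℕ) :
    ∑ i ∈ Finset.range m, ‖a (u (i + 1)) - a (u i)‖ₑ ^ r ≤ vnorm r univ a ^ r := by
  obtain ⟨N, v, hv, -, hsum⟩ := exists_strictMono_sum_eq
    (φ := fun k l => ‖a l - a k‖ₑ ^ r) (fun k => by simp [hr]) hu m
  rw [← hsum, ← ENNReal.rpow_inv_le_iff hr, ← one_div]
  refine le_trans ?_ le_add_self
  exact le_iSup_of_le N (le_iSup_of_le v (le_iSup₂_of_le hv (fun _ => mem_univ _) le_rfl))

lemma norm_le_of_vnorm_le (hV : 0 ≤ V) (ha : vnorm r univ a ≤ ENNReal.ofReal V) (k : ι) :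
    ‖a k‖ ≤ V := by
  rw [← ENNReal.ofReal_le_ofReal_iff hV, ofReal_norm]
  exact (enorm_le_vnorm r a k).trans ha

lemma variationLE_of_vnorm_le (hr : 0 < r) (hV : 0 ≤ V) (ha : vnorm r univ a ≤ ENNReal.ofReal V)
    {w : ℕ → ι} (hw : Monotone w) (n : ℕ) : VariationLE r n V fun t => a (w t) := by
  intro u hu _ m
  have hdist (i : ℕ) : ENNReal.ofReal (dist (a (w (u (i + 1)))) (a (w (u i))) ^ r) =
      ‖a (w (u (i + 1))) - a (w (u i))‖ₑ ^ r := by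
    rw [dist_eq_norm, ← ENNReal.ofReal_rpow_of_nonneg (norm_nonneg _) hr.le, ofReal_norm]
  rw [← ENNReal.ofReal_le_ofReal_iff (by positivity),
    ENNReal.ofReal_sum_of_nonneg fun i _ => by positivity, Finset.sum_congr rfl fun i _ => hdist i,
    ← ENNReal.ofReal_rpow_of_nonneg hV hr.le]
  exact (sum_enorm_sub_rpow_le_vnorm_rpow hr a (hw.comp hu) m).trans (by gcongr)

end Variation

/-! ### Discretization -/

/-- The dyadic intervals of length `2 ^ (-K)` contained in `[0, 2 ^ K)`, given by their indices. -/
abbrev DyadicGrid (K : ℕ) : Type := dyadicDescendants (2 * K) 0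

namespace DyadicGrid

variable {K t : ℕ} {x : DyadicGrid K} {z : ℝ}

/-- The left end point of a dyadic interval. -/
def point (x : DyadicGrid K) : ℝ := (x : ℤ) * 2 ^ (-K : ℤ)

lemma point_mem_dyadicCell (x : DyadicGrid K) : x.point ∈ dyadicCell (-K) x :=
  mul_zpow_mem_dyadicCell _ _

lemma coe_nonneg (x : DyadicGrid K) : (0 : ℤ) ≤ x :=
  (by positivity : (0 : ℤ) ≤ 0 * 2 ^ (2 * K)).trans (Finset.mem_Ico.mp x.2).1

lemma nonneg_of_mem (hz : z ∈ dyadicCell (-K) x) : 0 ≤ z :=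
  nonneg_of_mem_dyadicCell x.coe_nonneg hz

lemma point_nonneg (x : DyadicGrid K) : 0 ≤ x.point := nonneg_of_mem x.point_mem_dyadicCell

/-- The filtration of `[0, 2 ^ K)`, discretized at scale `2 ^ (-K)`, by the dyadic intervals of
length `2 ^ (K - t)`. -/
def filtration (K : ℕ) : FiniteFiltration (DyadicGrid K) where
  rel t := Setoid.ker fun x => dyadicIndex (K - t) x.point
  antitone_rel _ _ hst _ _ := dyadicIndex_eq_of_le (by omega)

lemma filtration_rel_iff {y : DyadicGrid K} :
    (filtration K).rel t x y ↔ dyadicIndex (K - t) x.point = dyadicIndex (K - t) y.point := Iff.rfl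

lemma dyadicIndex_eq_ediv (ht : t ≤ 2 * K) (hz : z ∈ dyadicCell (-K) x) :
    dyadicIndex (K - t) z = x / 2 ^ (2 * K - t) := by
  rw [show (K : ℤ) - t = -K + (2 * K - t : ℕ) by omega, dyadicIndex_add_natCast,
    mem_dyadicCell.mp hz]

lemma map_atom (ht : t ≤ 2 * K) (x : DyadicGrid K) :
    ((filtration K).atom t x).map (Function.Embedding.subtype _) =
      dyadicDescendants (2 * K - t) (dyadicIndex (K - t) x.point) := by
  have hsub : dyadicDescendants (2 * K - t) (dyadicIndex (K - t) x.point) ⊆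
      dyadicDescendants (2 * K) 0 := fun m hm => by
    have hpow : (2 : ℤ) ^ (2 * K) = 2 ^ (2 * K - t) * 2 ^ t := by rw [← pow_add]; congr 1; omega
    have hx := mem_dyadicDescendants.mp x.2
    rw [mem_dyadicDescendants, dyadicIndex_eq_ediv ht x.point_mem_dyadicCell] at hm
    rw [hpow, ← Int.ediv_ediv_of_nonneg (by positivity)] at hx
    rw [mem_dyadicDescendants, hpow, ← Int.ediv_ediv_of_nonneg (by positivity), hm, hx]
  ext m
  simp only [Finset.mem_map, FiniteFiltration.mem_atom, filtration_rel_iff,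
    mem_dyadicDescendants, Function.Embedding.coe_subtype]
  constructor
  · rintro ⟨y, hy, rfl⟩
    rw [← hy, dyadicIndex_eq_ediv ht (point_mem_dyadicCell y)]
  · intro hm
    let y : DyadicGrid K := ⟨m, hsub (mem_dyadicDescendants.mpr hm)⟩
    exact ⟨y, (dyadicIndex_eq_ediv ht (point_mem_dyadicCell y)).trans hm, rfl⟩

lemma card_atom (ht : t ≤ 2 * K) (x : DyadicGrid K) :
    ((filtration K).atom t x).card = 2 ^ (2 * K - t) := by
  rw [← card_dyadicDescendants _ (dyadicIndex (K - t) x.point), ← map_atom ht, Finset.card_map]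

lemma isRegular_filtration (K : ℕ) : (filtration K).IsRegular (2 * K) where
  rel_zero x y := by
    rw [filtration_rel_iff, dyadicIndex_eq_ediv zero_le x.point_mem_dyadicCell,
      dyadicIndex_eq_ediv zero_le y.point_mem_dyadicCell, Nat.sub_zero,
      mem_dyadicDescendants.mp x.2, mem_dyadicDescendants.mp y.2]
  eq_of_rel x y h := by
    rw [filtration_rel_iff, dyadicIndex_eq_ediv le_rfl x.point_mem_dyadicCell,
      dyadicIndex_eq_ediv le_rfl y.point_mem_dyadicCell, Nat.sub_self, pow_zero, Int.ediv_one,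
      Int.ediv_one] at h
    exact Subtype.ext h
  card_atom_le t ht x := by
    rw [card_atom ht.le, card_atom ht, ← pow_succ', show 2 * K - (t + 1) + 1 = 2 * K - t by omega]

/-- The discretization of `G` at scale `2 ^ (-K)`. -/
def cellAverage (K : ℕ) (G : ℝ → ℝ) (x : DyadicGrid K) : ℝ := ⨍ z in dyadicCell (-K) x, G z

lemma avg_cellAverage {G : ℝ → ℝ} (ht : t ≤ 2 * K)
    (hG : IntegrableOn G (dyadicCell (K - t) (dyadicIndex (K - t) x.point))) :
    (filtration K).avg t (cellAverage K G) x =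
      ⨍ z in dyadicCell (K - t) (dyadicIndex (K - t) x.point), G z := by
  have hcard : ((2 : ℝ) ^ (2 * K - t)) ≠ 0 := by positivity
  have hKt : (K : ℤ) - t = -K + (2 * K - t : ℕ) := by omega
  have hsum : ∑ y ∈ (filtration K).atom t x, cellAverage K G y =
      2 ^ (K : ℤ) * ∫ z in dyadicCell (K - t) (dyadicIndex (K - t) x.point), G z := by
    have hsplit := setIntegral_dyadicCell_add_natCast (hKt ▸ hG)
    rw [← hKt, ← map_atom ht, Finset.sum_map] at hsplit
    simp only [cellAverage, setAverage_dyadicCell, neg_neg, ← Finset.mul_sum, hsplit,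
      Function.Embedding.coe_subtype]
  refine mul_left_cancel₀ hcard ?_
  have := (filtration K).card_atom_mul_avg t (cellAverage K G) x
  rw [card_atom ht, Nat.cast_pow, Nat.cast_ofNat] at this
  rw [this, hsum, setAverage_dyadicCell, ← mul_assoc]
  congr 1
  rw [← zpow_natCast, ← zpow_add₀ two_ne_zero]
  congr 1
  omega

lemma cellAverage_mul {G H : ℝ → ℝ} (hH : ∀ z ∈ dyadicCell (-K) x, H z = H x.point) :
    cellAverage K (fun z => H z * G z) x = H x.point * cellAverage K G x := by
  rw [cellAverage, cellAverage, setAverage_dyadicCell, setAverage_dyadicCell,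
    setIntegral_congr_fun (g := fun z => H x.point * G z) (measurableSet_dyadicCell _ _) fun z hz =>
      congrArg (· * G z) (hH z hz), integral_const_mul]
  ring

end DyadicGrid

namespace DyadicGrid

variable {K t : ℕ} {x : DyadicGrid K} {ξ ξ' z : ℝ}

lemma dyadicIndex_eq_dyadicIndex_point (ht : t ≤ 2 * K) (hz : z ∈ dyadicCell (-K) x) :
    dyadicIndex (K - t) z = dyadicIndex (K - t) x.point :=
  dyadicIndex_eq_of_le (k := -K) (by omega) (hz.trans x.point_mem_dyadicCell.symm)

lemma cellAverage_of_eq {G : ℝ → ℝ} {c : ℝ} (h : ∀ z ∈ dyadicCell (-K) x, G z = c) :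
    cellAverage K G x = c := by
  rw [cellAverage, setAverage_dyadicCell, setIntegral_dyadicCell_of_eq h, ← mul_assoc,
    ← zpow_add₀ two_ne_zero, neg_add_cancel, zpow_zero, one_mul]

lemma walshChar_eq_walshChar_point (hξ : ξ ∈ dyadicCell K 0) (hz : z ∈ dyadicCell (-K) x) :
    walshChar ξ z = walshChar ξ x.point := by
  have h := walshChar_mul_walshChar_eq (nonneg_of_mem_dyadicCell le_rfl hξ) le_rfl
    (nonneg_of_mem hz) x.point_nonneg (hξ.trans (dyadicIndex_zero_right K).symm)
    (hz.trans x.point_mem_dyadicCell.symm)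
  simpa [walshChar, wMulDigit_zero_left] using h

lemma avg_walshChar_mul_walshChar (hξ : ξ ∈ dyadicCell K 0) (hξ' : ξ' ∈ dyadicCell K 0)
    (hne : dyadicIndex (t - K) ξ ≠ dyadicIndex (t - K) ξ') (x : DyadicGrid K) :
    (filtration K).avg t (fun y => walshChar ξ y.point * walshChar ξ' y.point) x = 0 := by
  have ht : t ≤ 2 * K := by
    by_contra! h
    exact hne (dyadicIndex_eq_of_le (k := K) (by omega) (hξ.trans hξ'.symm))
  have hconst : (fun y : DyadicGrid K => walshChar ξ y.point * walshChar ξ' y.point) =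
      cellAverage K fun z => walshChar ξ z * walshChar ξ' z := by
    refine funext fun y => (cellAverage_of_eq fun z hz => ?_).symm
    rw [walshChar_eq_walshChar_point hξ hz, walshChar_eq_walshChar_point hξ' hz]
  rw [hconst, avg_cellAverage ht (integrableOn_walshChar_mul_walshChar _ _ _ _),
    setAverage_dyadicCell, setIntegral_walshChar_mul_walshChar_eq_zero
      (nonneg_of_mem_dyadicCell le_rfl hξ) (nonneg_of_mem_dyadicCell le_rfl hξ')
      (dyadicIndex_nonneg _ x.point_nonneg) (by rwa [neg_sub]), mul_zero]

/-- The finite model of the Walsh multipliers with frequencies in `Ξ`. -/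
def walshModel {Ξ : Finset ℝ} (hΞ : ∀ ξ ∈ Ξ, ξ ∈ dyadicCell K 0) : WalshModel (DyadicGrid K) Ξ where
  toFiniteFiltration := filtration K
  char ξ x := walshChar ξ x.point
  freqRel t := Setoid.ker fun ξ => dyadicIndex (t - K) ξ
  monotone_freqRel _ _ hst _ _ := dyadicIndex_eq_of_le (by omega)
  char_mul_self ξ := funext fun x => walshChar_mul_self ξ x.point
  measurableAt_char_mul t ξ ξ' h x y hxy :=
    walshChar_mul_walshChar_eq (nonneg_of_mem_dyadicCell le_rfl (hΞ ξ ξ.2))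
      (nonneg_of_mem_dyadicCell le_rfl (hΞ ξ' ξ'.2)) x.point_nonneg y.point_nonneg h
      (by rw [neg_sub]; exact hxy)
  avg_char_mul t ξ ξ' h := funext (avg_walshChar_mul_walshChar (hΞ ξ ξ.2) (hΞ ξ' ξ'.2) h)

variable {Ξ : Finset ℝ} {hΞ : ∀ ξ ∈ Ξ, ξ ∈ dyadicCell K 0} {r V : ℝ} {a : Set ℝ → ℝ} {g : ℝ → ℝ}

lemma admissibleCoeff_dyadicSum (hr : 0 < r) (hV : 0 ≤ V)
    (ha : ∀ ξ ∈ Ξ, vnorm r univ (dyadicSum a ξ) ≤ ENNReal.ofReal V) (n : ℕ) :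
    (walshModel hΞ).AdmissibleCoeff r n V fun t ξ => dyadicSum a ξ (t - K) where
  congr t ξ ξ' h := by
    rw [dyadicSum_eq, dyadicSum_eq, show dyadicIndex (t - K) ξ = dyadicIndex (t - K) ξ' from h]
  abs_le t ξ := norm_le_of_vnorm_le hV (ha ξ ξ.2) _
  variationLE ξ := variationLE_of_vnorm_le hr hV (ha ξ ξ.2)
    (fun s t hst => show (s : ℤ) - K ≤ t - K by omega) n

lemma coeff_cellAverage (hg : IntegrableOn g (Ici 0)) (ht : t ≤ 2 * K) (ξ : Ξ)
    (x : DyadicGrid K) :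
    (walshModel hΞ).coeff t ξ (cellAverage K g) x =
      ⨍ z in dyadicCell (K - t) (dyadicIndex (K - t) x.point), walshChar ξ z * g z := by
  rw [← avg_cellAverage ht (IntegrableOn.mono_set (integrable_walshChar_mul hg ξ)
    (dyadicCell_subset_Ici (dyadicIndex_nonneg _ x.point_nonneg)))]
  refine congrArg (fun f => (filtration K).avg t f x) (funext fun y => ?_)
  exact (cellAverage_mul (H := walshChar ξ)
    fun z hz => walshChar_eq_walshChar_point (hΞ ξ ξ.2) hz).symm

lemma image_dyadicIndex_eq (hΞ : ∀ ξ ∈ Ξ, ξ ∈ dyadicCell K 0) (t : ℕ) :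
    Ξ.image (dyadicIndex (t - K)) =
      ((walshModel hΞ).rep t).image fun ξ : Ξ => dyadicIndex (t - K) ξ := by
  ext n
  simp only [Finset.mem_image]
  constructor
  · rintro ⟨ξ, hξ, rfl⟩
    obtain ⟨ξ', hξ', h⟩ := (walshModel hΞ).exists_mem_rep t ⟨ξ, hξ⟩
    exact ⟨ξ', hξ', h⟩
  · rintro ⟨ξ, -, rfl⟩
    exact ⟨ξ, ξ.2, rfl⟩

theorem walshFT_Dk_mul_walshFT_eq_multiplier (hg : IntegrableOn g (Ici 0)) (ht : t ≤ 2 * K)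
    (hz : z ∈ dyadicCell (-K) x) :
    walshFT (fun ξ => Dk a Ξ (t - K) ξ * walshFT g ξ) z =
      (walshModel hΞ).multiplier t (fun ξ => dyadicSum a ξ (t - K)) (cellAverage K g) x := by
  have hΞ0 (ξ : ℝ) (hξ : ξ ∈ Ξ) : 0 ≤ ξ := nonneg_of_mem_dyadicCell le_rfl (hΞ ξ hξ)
  rw [walshFT_Dk_mul_walshFT a hΞ0 hg (nonneg_of_mem hz), image_dyadicIndex_eq hΞ,
    Finset.sum_image fun ξ hξ ξ' hξ' h => WalshModel.eq_of_mem_rep hξ hξ' h,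
    WalshModel.multiplier_apply, Finset.sum_apply]
  refine Finset.sum_congr rfl fun ξ _ => ?_
  rw [setIntegral_walshChar_mul_walshFT hg (nonneg_of_mem hz) (hΞ0 ξ ξ.2), ← dyadicSum_eq a,
    neg_sub, dyadicIndex_eq_dyadicIndex_point ht hz, walshChar_eq_walshChar_point (hΞ ξ ξ.2) hz,
    ← coeff_cellAverage hg ht]
  rfl

end DyadicGrid

section Jensen

variable {α E : Type*} [MeasurableSpace α] {μ : Measure α} [NormedAddCommGroup E]
  {f : α → E} {q : ℝ}

lemma eLpNorm_ofReal_rpow (hq : 0 < q) (f : α → E) (μ : Measure α) :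
    eLpNorm f (ENNReal.ofReal q) μ ^ q = ∫⁻ x, ‖f x‖ₑ ^ q ∂μ := by
  rw [eLpNorm_eq_lintegral_rpow_enorm_toReal (ENNReal.ofReal_pos.mpr hq).ne'
    ENNReal.ofReal_ne_top, ENNReal.toReal_ofReal hq.le, one_div, ENNReal.rpow_inv_rpow hq.ne']

lemma enorm_average_rpow_le [NormedSpace ℝ E] [IsFiniteMeasure μ] [NeZero μ]
    (hq : 1 ≤ q) (hf : AEStronglyMeasurable f μ) : ‖⨍ x, f x ∂μ‖ₑ ^ q ≤ ⨍⁻ x, ‖f x‖ₑ ^ q ∂μ := by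
  rw [laverage, ← eLpNorm_ofReal_rpow (by positivity)]
  gcongr
  calc ‖⨍ x, f x ∂μ‖ₑ ≤ eLpNorm f 1 ((μ univ)⁻¹ • μ) := by
        rw [eLpNorm_one_eq_lintegral_enorm]
        exact enorm_integral_le_lintegral_enorm _
    _ ≤ eLpNorm f (ENNReal.ofReal q) ((μ univ)⁻¹ • μ) :=
        eLpNorm_le_eLpNorm_of_exponent_le (ENNReal.one_le_ofReal.mpr hq) (hf.smul_measure _)

end Jensen

namespace DyadicGrid

variable {K : ℕ} {x : DyadicGrid K} {q r V : ℝ} {g : ℝ → ℝ}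

lemma setLIntegral_dyadicCell_zero (K : ℕ) (F : ℝ → ℝ≥0∞) :
    ∫⁻ z in dyadicCell K 0, F z = ∑ x : DyadicGrid K, ∫⁻ z in dyadicCell (-K) x, F z := by
  have hK : (K : ℤ) = -K + (2 * K : ℕ) := by omega
  conv_lhs => rw [hK, setLIntegral_dyadicCell_add_natCast, ← Finset.sum_coe_sort]

lemma enorm_cellAverage_rpow_mul_le (hq : 1 ≤ q) (hg : IntegrableOn g (Ici 0))
    (x : DyadicGrid K) :
    ‖cellAverage K g x‖ₑ ^ q * volume (dyadicCell (-K) x) ≤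
      ∫⁻ z in dyadicCell (-K) x, ‖g z‖ₑ ^ q := by
  have hv : volume (dyadicCell (-K) x) = ENNReal.ofReal (2 ^ (-K : ℤ)) := volume_dyadicCell _ _
  have : IsFiniteMeasure (volume.restrict (dyadicCell (-K) x)) :=
    isFiniteMeasure_restrict.mpr (by rw [hv]; exact ENNReal.ofReal_ne_top)
  have : NeZero (volume.restrict (dyadicCell (-K : ℤ) x)) :=
    ⟨by simp only [ne_eq, Measure.restrict_eq_zero, hv, ENNReal.ofReal_eq_zero, not_le]; positivity⟩
  rw [← measure_mul_laverage, Measure.restrict_apply_univ, mul_comm]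
  gcongr
  exact enorm_average_rpow_le hq
    (hg.mono_set (dyadicCell_subset_Ici x.coe_nonneg)).aestronglyMeasurable

theorem setLIntegral_iSup_walshFT_rpow_le {Ξ : Finset ℝ} [Nonempty Ξ] {a : Set ℝ → ℝ}
    (hq1 : 1 < q) (hq2 : q < 2) (hr : 2 < r) (hV : 0 ≤ V) (hΞ : ∀ ξ ∈ Ξ, ξ ∈ dyadicCell K 0)
    (ha : ∀ ξ ∈ Ξ, vnorm r univ (dyadicSum a ξ) ≤ ENNReal.ofReal V)
    (hg : IntegrableOn g (Ici 0)) :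
    ∫⁻ z in dyadicCell K 0,
        (⨆ t ≤ 2 * K, ‖walshFT (fun ξ => Dk a Ξ (t - K) ξ * walshFT g ξ) z‖ₑ) ^ q ≤
      ENNReal.ofReal (WalshModel.maximalBoundLq Ξ q r V) ^ q *
        ∫⁻ z in dyadicCell K 0, ‖g z‖ₑ ^ q := by
  set M := walshModel hΞ
  set B := ENNReal.ofReal (WalshModel.maximalBoundLq Ξ q r V) ^ q
  set G := cellAverage K g
  set v := ENNReal.ofReal (2 ^ (-K : ℤ))
  have hv (x : DyadicGrid K) : volume (dyadicCell (-K) x) = v := volume_dyadicCell _ _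
  have hconst (x : DyadicGrid K) : ∫⁻ z in dyadicCell (-K) x,
        (⨆ t ≤ 2 * K, ‖walshFT (fun ξ => Dk a Ξ (t - K) ξ * walshFT g ξ) z‖ₑ) ^ q =
      (⨆ t ≤ 2 * K, ‖M.multiplier t (fun ξ => dyadicSum a ξ (t - K)) G x‖ₑ) ^ q * v := by
    rw [← hv x, ← setLIntegral_const]
    refine setLIntegral_congr_fun (measurableSet_dyadicCell _ _) fun z hz => ?_
    refine congrArg (· ^ q) (iSup_congr fun t => iSup_congr fun ht => ?_)
    rw [walshFT_Dk_mul_walshFT_eq_multiplier hg ht hz]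
  calc _ = (∑ x, (⨆ t ≤ 2 * K, ‖M.multiplier t (fun ξ => dyadicSum a ξ (t - K)) G x‖ₑ) ^ q) *
        v := by
        rw [setLIntegral_dyadicCell_zero, Finset.sum_mul]
        exact Finset.sum_congr rfl fun x _ => hconst x
    _ ≤ B * (∑ x, ‖G x‖ₑ ^ q) * v := by
        gcongr
        exact WalshModel.sum_iSup_enorm_multiplier_rpow_le hq1 hq2 hr hV
          (isRegular_filtration K) (admissibleCoeff_dyadicSum (by positivity) hV ha _) G
    _ ≤ _ := by
        rw [mul_assoc, Finset.sum_mul, setLIntegral_dyadicCell_zero]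
        gcongr with x
        rw [← hv x]
        exact enorm_cellAverage_rpow_mul_le hq1.le hg x

end DyadicGrid

section MaximalMultiplier

variable {q r V : ℝ} {g : ℝ → ℝ} {Ξ : Finset ℝ} {a : Set ℝ → ℝ}

lemma aemeasurable_walshFT_Dk_mul_walshFT (hΞ : ∀ ξ ∈ Ξ, 0 ≤ ξ) (hg : IntegrableOn g (Ici 0))
    (k : ℤ) : AEMeasurable (walshFT fun ξ => Dk a Ξ k ξ * walshFT g ξ) μplus := by
  have hmeas (n : ℤ) (hn : 0 ≤ n) : AEMeasurable (fun x =>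
      ∫ ξ in dyadicCell k n, walshChar x ξ * walshFT g ξ) μplus := by
    have hξ := nonneg_of_mem_dyadicCell hn (mul_zpow_mem_dyadicCell k n)
    set ξ : ℝ := n * 2 ^ k
    refine AEMeasurable.congr (f := fun x => walshChar ξ x *
      ⨍ y in dyadicCell (-k) (dyadicIndex (-k) x), walshChar ξ y * g y) ?_ ?_
    · exact ((measurable_walshChar.comp measurable_prodMk_left).mul
        ((Measurable.of_discrete (f := fun m : ℤ => ⨍ y in dyadicCell (-k) m,
          walshChar ξ y * g y)).comp (measurable_dyadicIndex (-k)))).aemeasurable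
    · filter_upwards [ae_restrict_mem measurableSet_Ici] with x hx
      rw [← setIntegral_walshChar_mul_walshFT hg hx hξ, mul_zpow_mem_dyadicCell k n]
  refine AEMeasurable.congr (Finset.aemeasurable_fun_sum (Ξ.image (dyadicIndex k))
    fun n hn => (hmeas n ?_).const_mul (a (dyadicCell k n))) ?_
  · obtain ⟨ξ, hξ, rfl⟩ := Finset.mem_image.mp hn
    exact dyadicIndex_nonneg k (hΞ ξ hξ)
  · filter_upwards [ae_restrict_mem measurableSet_Ici] with x hx
    exact (walshFT_Dk_mul_walshFT a hΞ hg hx).symm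

lemma lintegral_iSup_rpow_le_of_eventually {T : ℤ → ℝ → ℝ≥0∞} {c : ℝ≥0∞} (hq : 0 < q)
    (hT : ∀ k, AEMeasurable (T k) μplus)
    (h : ∀ᶠ K : ℕ in atTop, ∫⁻ z in dyadicCell K 0, (⨆ t ≤ 2 * K, T (t - K) z) ^ q ≤ c) :
    ∫⁻ z, (⨆ k, T k z) ^ q ∂μplus ≤ c := by
  let F (K : ℕ) : ℝ → ℝ≥0∞ :=
    (dyadicCell K 0).indicator fun z => (⨆ t ≤ 2 * K, T (t - K) z) ^ q
  have hF (K : ℕ) : AEMeasurable (F K) μplus :=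
    ((AEMeasurable.iSup fun t => AEMeasurable.iSup fun _ => hT _).pow_const q).indicator
      (measurableSet_dyadicCell K 0)
  have hFint (K : ℕ) : ∫⁻ z, F K z ∂μplus =
      ∫⁻ z in dyadicCell K 0, (⨆ t ≤ 2 * K, T (t - K) z) ^ q := by
    rw [lintegral_indicator (measurableSet_dyadicCell K 0), μplus,
      Measure.restrict_restrict (measurableSet_dyadicCell K 0),
      inter_eq_self_of_subset_left (dyadicCell_subset_Ici le_rfl)]
  have hle (z : ℝ) (hz : z ∈ Ici 0) : (⨆ k, T k z) ^ q ≤ liminf (fun K => F K z) atTop := by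
    rw [← ENNReal.le_rpow_inv_iff hq]
    refine iSup_le fun k => (ENNReal.le_rpow_inv_iff hq).mpr (le_liminf_of_le (h := ?_))
    filter_upwards [tendsto_natCast_atTop_atTop.eventually (eventually_dyadicIndex_eq_zero hz),
      eventually_ge_atTop k.natAbs] with K hK hkK
    rw [show F K z = _ from indicator_of_mem (mem_dyadicCell.mpr hK) _]
    gcongr
    refine le_iSup₂_of_le (k + K).toNat (by omega) ?_
    rw [show ((k + K).toNat : ℤ) - K = k by omega]
  calc _ ≤ ∫⁻ z, liminf (fun K => F K z) atTop ∂μplus := setLIntegral_mono' measurableSet_Ici hle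
    _ ≤ liminf (fun K => ∫⁻ z, F K z ∂μplus) atTop := lintegral_liminf_le' hF
    _ ≤ c := liminf_le_of_frequently_le' (by simpa only [hFint] using h.frequently)

lemma walshFT_mul_walshFT_eq_zero (hg : ¬IntegrableOn g (Ici 0)) (m : ℝ → ℝ) :
    walshFT (fun ξ => m ξ * walshFT g ξ) = 0 := by
  funext x
  refine setIntegral_eq_zero_of_forall_eq_zero fun ξ hξ => ?_
  simp only [walshFT_eq_zero_of_not_integrableOn hg hξ, mul_zero]

theorem lintegral_iSup_walshFT_rpow_le [Nonempty Ξ] (hq1 : 1 < q) (hq2 : q < 2) (hr : 2 < r)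
    (hV : 0 ≤ V) (hΞ : ∀ ξ ∈ Ξ, 0 ≤ ξ)
    (ha : ∀ ξ ∈ Ξ, vnorm r univ (dyadicSum a ξ) ≤ ENNReal.ofReal V) (g : ℝ → ℝ) :
    ∫⁻ z, (⨆ k, ‖walshFT (fun ξ => Dk a Ξ k ξ * walshFT g ξ) z‖ₑ) ^ q ∂μplus ≤
      ENNReal.ofReal (WalshModel.maximalBoundLq Ξ q r V) ^ q * ∫⁻ z, ‖g z‖ₑ ^ q ∂μplus := by
  by_cases hg : IntegrableOn g (Ici 0)
  · refine lintegral_iSup_rpow_le_of_eventually (by positivity)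
      (fun k => (aemeasurable_walshFT_Dk_mul_walshFT hΞ hg k).enorm) ?_
    have hcell : ∀ᶠ K : ℕ in atTop, ∀ ξ ∈ Ξ, ξ ∈ dyadicCell K 0 :=
      (eventually_all_finset Ξ).mpr fun ξ hξ =>
        tendsto_natCast_atTop_atTop.eventually (eventually_dyadicIndex_eq_zero (hΞ ξ hξ))
    filter_upwards [hcell] with K hK
    refine (DyadicGrid.setLIntegral_iSup_walshFT_rpow_le hq1 hq2 hr hV hK ha hg).trans ?_
    gcongr
    exact Measure.restrict_mono (dyadicCell_subset_Ici le_rfl) le_rfl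
  · simp [walshFT_mul_walshFT_eq_zero hg, show 0 < q by positivity]

lemma Mqstar_Dk_le [Nonempty Ξ] (hq1 : 1 < q) (hq2 : q < 2) (hr : 2 < r) (hV : 0 ≤ V)
    (hΞ : ∀ ξ ∈ Ξ, 0 ≤ ξ) (ha : ∀ ξ ∈ Ξ, vnorm r univ (dyadicSum a ξ) ≤ ENNReal.ofReal V) :
    Mqstar q (fun k => Dk a Ξ k) ≤ ENNReal.ofReal (WalshModel.maximalBoundLq Ξ q r V) := by
  have hq : 0 < q := by positivity
  refine iSup₂_le fun g hg => ?_
  rw [lpNormE, one_div, ENNReal.rpow_inv_le_iff hq]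
  refine (lintegral_iSup_walshFT_rpow_le hq1 hq2 hr hV hΞ ha g).trans_eq ?_
  rw [← eLpNorm_ofReal_rpow hq, hg, ENNReal.one_rpow, mul_one]

lemma Mqstar_Dk_empty (hq : 0 < q) (a : Set ℝ → ℝ) : Mqstar q (fun k => Dk a ∅ k) = 0 := by
  simp [Mqstar, lpNormE, Dk, walshFT, hq]

lemma ofReal_maximalBoundLq (hq1 : 1 < q) (hq2 : q < 2) (hr : 2 < r) (V : ℝ) (ι : Type*)
    [Fintype ι] [Nonempty ι] :
    ENNReal.ofReal (WalshModel.maximalBoundLq ι q r V) =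
      ENNReal.ofReal (maximalConst q r) * ENNReal.ofReal (1 + Real.log (Fintype.card ι)) *
        (Fintype.card ι : ℝ≥0∞) ^ (1 / q - 1 / r) * ENNReal.ofReal V := by
  have hcard : (0 : ℝ) < Fintype.card ι := by exact_mod_cast Fintype.card_pos
  have : 0 ≤ Real.log (Fintype.card ι) := Real.log_natCast_nonneg _
  have hconst := (maximalConst_pos hq1 hq2 hr).le
  rw [WalshModel.maximalBoundLq, ENNReal.ofReal_mul (by positivity),
    ENNReal.ofReal_mul (by positivity), ENNReal.ofReal_mul hconst,
    ← ENNReal.ofReal_rpow_of_pos hcard, ENNReal.ofReal_natCast]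

end MaximalMultiplier

/-- Lemma 3.2: if `r > 2` and `1 < q < 2` then
`‖𝒟_k‖_{M^{q,*}} ≤ C_{q,r} (1 + log |Ξ|) |Ξ|^{1/q - 1/r}
  sup_{ξ ∈ Ξ} ‖Σ_{|ω| = 2^k} a_ω 1_ω(ξ)‖_{V^r_k}`. -/
theorem Lq_maximal_multiplier (q r : ℝ) (hr : 2 < r) (hq1 : 1 < q) (hq2 : q < 2) :
    ∃ C : ℝ, 0 < C ∧ ∀ Ξ : Set ℝ, Ξ.Finite → Ξ ⊆ Set.Ici 0 → ∀ a : Set ℝ → ℝ,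
      Mqstar q (fun k => Dk a Ξ k) ≤
        ENNReal.ofReal C * ENNReal.ofReal (1 + Real.log Ξ.ncard) *
          (Ξ.ncard : ℝ≥0∞) ^ (1 / q - 1 / r) *
          ⨆ ξ ∈ Ξ, vnorm r (Set.univ : Set ℤ) (dyadicSum a ξ) := by
  refine ⟨maximalConst q r, maximalConst_pos hq1 hq2 hr, fun Ξ hfin hΞ a => ?_⟩
  lift Ξ to Finset ℝ using hfin
  rcases Ξ.eq_empty_or_nonempty with rfl | hne
  · rw [Finset.coe_empty, Mqstar_Dk_empty (by positivity)]
    exact zero_le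
  have : Nonempty Ξ := hne.to_subtype
  set S := ⨆ ξ ∈ (Ξ : Set ℝ), vnorm r univ (dyadicSum a ξ)
  have hS (ξ : ℝ) (hξ : ξ ∈ Ξ) : vnorm r univ (dyadicSum a ξ) ≤ S := le_iSup₂_of_le ξ hξ le_rfl
  rw [Set.ncard_coe_finset, ← Fintype.card_coe]
  rcases eq_or_ne S ⊤ with htop | hfin
  · have : 0 ≤ Real.log (Fintype.card Ξ) := Real.log_natCast_nonneg _
    rw [htop, ENNReal.mul_top]
    · exact le_top
    · have := maximalConst_pos hq1 hq2 hr
      positivity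
  · rw [← ENNReal.ofReal_toReal hfin, ← ofReal_maximalBoundLq hq1 hq2 hr]
    exact Mqstar_Dk_le hq1 hq2 hr ENNReal.toReal_nonneg hΞ
      fun ξ hξ => (hS ξ hξ).trans_eq (ENNReal.ofReal_toReal hfin).symm

end
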